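/- arXiv:2012.08507 — 2 statements merged into one kernel-verified Lean document; each statement's English description precedes it below -/
import Mathlib

section
/- Regret of Weighted OFUL: under the stated linear bandit setting with weighted ridge regression, for any 0 < δ < 1, with probability at least 1 − δ the pseudo-regret satisfies ∑_{t=1}^T (⟨a_t*, μ*⟩ − ⟨a_t, μ*⟩) ≤ 4d·log(1 + TA²/(dλ σ̄²_{min,T})) + 2·√(2d·log(1 + TA²/(dλ σ̄²_{min,T}))) · √(∑_{t=1}^T (β̂_{t-1} + √λ·B)² σ̄_t²), where σ̄_{min,t} = min_{1≤i≤t} σ̄_i. -/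
open MeasureTheory Matrix Finset

/-- `√(vᵀ A v)`, the (semi-)norm of `v` induced by a positive definite matrix `A`. -/
noncomputable def matNorm {d : ℕ} (A : Matrix (Fin d) (Fin d) ℝ) (v : Fin d → ℝ) : ℝ :=
  Real.sqrt (v ⬝ᵥ (A *ᵥ v))

/-- The weighted Gram matrix `A_t = λ I + ∑_{i=1}^t σ̄_i^{-2} a_i a_iᵀ`. -/
noncomputable def wGram {d : ℕ} (lam : ℝ) (a : ℕ → Fin d → ℝ) (sb : ℕ → ℝ) (t : ℕ) :
    Matrix (Fin d) (Fin d) ℝ :=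
  lam • (1 : Matrix (Fin d) (Fin d) ℝ) +
    ∑ i ∈ Finset.Icc 1 t, ((sb i) ^ 2)⁻¹ • vecMulVec (a i) (a i)

/-- The weighted ridge regression estimator `μ̂_t = A_t^{-1} ∑_{i=1}^t σ̄_i^{-2} r_i a_i`. -/
noncomputable def wEst {d : ℕ} (lam : ℝ) (a : ℕ → Fin d → ℝ) (sb : ℕ → ℝ) (r : ℕ → ℝ)
    (t : ℕ) : Fin d → ℝ :=
  (wGram lam a sb t)⁻¹ *ᵥ ∑ i ∈ Finset.Icc 1 t, (((sb i) ^ 2)⁻¹ * r i) • a i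

/-- `σ̄_{min,t} = min_{1 ≤ i ≤ t} σ̄_i`. -/
noncomputable def sbMin (sb : ℕ → ℝ) (t : ℕ) : ℝ := sInf (sb '' Set.Icc 1 t)

/-- `β̂_0 = 0` and
`β̂_t = 8√(d log(1 + tA²/(dλσ̄²_{min,t})) log(4t²/δ)) + 4(R/σ̄_{min,t}) log(4t²/δ)` for `t ≥ 1`. -/
noncomputable def betaHat (d : ℕ) (A R lam δ : ℝ) (sb : ℕ → ℝ) (t : ℕ) : ℝ :=
  if t = 0 then 0 else
    8 * Real.sqrt ((d : ℝ) *
        Real.log (1 + (t : ℝ) * A ^ 2 / ((d : ℝ) * lam * (sbMin sb t) ^ 2)) *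
        Real.log (4 * (t : ℝ) ^ 2 / δ)) +
      4 * (R / sbMin sb t) * Real.log (4 * (t : ℝ) ^ 2 / δ)

/-- The confidence set `C_t = {μ : ‖μ − μ̂_t‖_{A_t} ≤ β̂_t + √λ B}`. -/
noncomputable def confSet {d : ℕ} (lam B βh : ℝ) (At : Matrix (Fin d) (Fin d) ℝ)
    (μh : Fin d → ℝ) : Set (Fin d → ℝ) :=
  {μ | matNorm At (μ - μh) ≤ βh + Real.sqrt lam * B}


namespace WOFUL

lemma step_N {N' N X u p η : ℝ} (hX : 0 < X) (hNX : N' ≤ X) (hN'0 : 0 ≤ N')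
    (hrec : N ^ 2 ≤ N' ^ 2 + 2 * u * η + p * η ^ 2) :
    N ≤ X + (u / X) * η + p * η ^ 2 / (2 * X) := by
  set r := 2 * u * η + p * η ^ 2 with hr
  have h1 : X + (u / X) * η + p * η ^ 2 / (2 * X) = X + r / (2 * X) := by
    rw [hr]; field_simp; ring
  rw [h1]
  have h2 : 0 ≤ X ^ 2 + r := by nlinarith [sq_nonneg N]
  have h3 : 0 ≤ X + r / (2 * X) := by
    have : X + r / (2 * X) = (X ^ 2 + (X ^ 2 + r)) / (2 * X) := by field_simp; ring
    rw [this]; positivity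
  apply le_of_sq_le_sq _ h3
  have h4 : (X + r / (2 * X)) ^ 2 = X ^ 2 + r + (r / (2 * X)) ^ 2 := by field_simp; ring
  rw [h4]
  nlinarith [sq_nonneg (r / (2 * X))]

lemma step_exp {N' N X u p η θ ρ : ℝ} (hX : 0 < X) (hNX : N' ≤ X) (hN'0 : 0 ≤ N')
    (hθ : 0 ≤ θ) (hθX : 1 ≤ θ * X) (hp0 : 0 ≤ p) (hp1 : p ≤ 1) (hη : |η| ≤ ρ) (hθρ : θ * ρ ≤ 1)
    (hu : u ^ 2 ≤ p * (1 - p) * N' ^ 2)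
    (hrec : N ^ 2 ≤ N' ^ 2 + 2 * u * η + p * η ^ 2) :
    θ * N ≤ θ * X + 1 ∧
    Real.exp (θ * N) ≤ Real.exp (θ * X) *
      (1 + (θ * (u / X)) * η + (2 * θ ^ 2 * p) * η ^ 2) := by
  have hN := step_N hX hNX hN'0 hrec
  obtain ⟨c, hc⟩ : ∃ c, c = u / X := ⟨_, rfl⟩
  rw [← hc] at hN ⊢
  have hc2 : c ^ 2 ≤ p * (1 - p) := by
    rw [hc, div_pow, div_le_iff₀ (by positivity)]
    refine hu.trans ?_
    apply mul_le_mul_of_nonneg_left _ (mul_nonneg hp0 (by linarith))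
    exact pow_le_pow_left₀ hN'0 hNX 2
  obtain ⟨z, hz⟩ : ∃ z, z = θ * η := ⟨_, rfl⟩
  have hz1 : |z| ≤ 1 := by
    rw [hz, abs_mul, abs_of_nonneg hθ]
    exact (mul_le_mul_of_nonneg_left hη hθ).trans hθρ
  have hz2 : z ^ 2 ≤ 1 := by
    rw [← sq_abs]; nlinarith [abs_nonneg z]
  obtain ⟨y, hy⟩ : ∃ y, y = c * z + p * z ^ 2 / 2 := ⟨_, rfl⟩
  have hNy : θ * N ≤ θ * X + y := by
    have h1 := mul_le_mul_of_nonneg_left hN hθ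
    have h2 : θ * (p * η ^ 2 / (2 * X)) ≤ p * z ^ 2 / 2 := by
      have : θ * (p * η ^ 2 / (2 * X)) = (θ * p * η ^ 2) / (2 * X) := by ring
      rw [this, div_le_iff₀ (by positivity)]
      have h3 : 0 ≤ θ * p * η ^ 2 := by positivity
      rw [hz]
      nlinarith [mul_le_mul_of_nonneg_left hθX h3]
    rw [hy, hz]
    rw [hz] at h2
    linarith
  have hc3 : |c| ≤ 1 / 2 := by
    apply abs_le_of_sq_le_sq _ (by norm_num)
    nlinarith [sq_nonneg (p - 1/2)]
  have hy1 : |y| ≤ 1 := by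
    have h1 : |c * z| ≤ 1 / 2 := by
      rw [abs_mul]; nlinarith [abs_nonneg c, abs_nonneg z]
    have h2 : 0 ≤ p * z ^ 2 / 2 := by positivity
    have h3 : p * z ^ 2 / 2 ≤ 1 / 2 := by nlinarith [sq_nonneg z]
    rw [abs_le] at h1 ⊢
    constructor <;> linarith [h1.1, h1.2]
  have hyy : y ^ 2 ≤ 5 / 4 * p * z ^ 2 := by
    have : y = z * (c + p * z / 2) := by rw [hy]; ring
    rw [this, mul_pow]
    have h1 : (c + p * z / 2) ^ 2 ≤ 5 / 4 * p := by
      have h2 : (c + p * z / 2) ^ 2 ≤ 5 / 4 * c ^ 2 + 5 * (p * z / 2) ^ 2 := by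
        nlinarith [sq_nonneg (c / 2 - 2 * (p * z / 2))]
      have h3 : (p * z / 2) ^ 2 ≤ p ^ 2 / 4 := by
        have := mul_le_mul_of_nonneg_left hz2 (sq_nonneg p)
        linarith [this]
      linarith
    have := mul_le_mul_of_nonneg_left h1 (sq_nonneg z)
    linarith
  refine ⟨by linarith [(abs_le.mp hy1).2], ?_⟩
  have he := Real.abs_exp_sub_one_sub_id_le hy1
  have he2 : Real.exp y ≤ 1 + y + y ^ 2 := by linarith [(abs_le.mp he).2]
  calc Real.exp (θ * N) ≤ Real.exp (θ * X + y) := Real.exp_le_exp.mpr hNy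
    _ = Real.exp (θ * X) * Real.exp y := Real.exp_add _ _
    _ ≤ _ := by
      apply mul_le_mul_of_nonneg_left _ (Real.exp_pos _).le
      have hpz : 0 ≤ p * z ^ 2 := by positivity
      have e1 : (θ * c) * η = c * z := by rw [hz]; ring
      have e2 : (2 * θ ^ 2 * p) * η ^ 2 = 2 * (p * z ^ 2) := by rw [hz]; ring
      rw [e1, e2]
      linarith

/-- Bound for the gain of an inactive step. -/
lemma step_gain {N' b' b v' p ℓ ρ' ρ : ℝ} (hℓ : 1 ≤ ℓ) (hv' : 0 ≤ v') (hp : 0 ≤ p)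
    (hρ' : 0 < ρ') (hρ : ρ' ≤ ρ) (hb' : b' = 2 * √(v' * ℓ) + ρ' * ℓ)
    (hb : b = 2 * √((v' + p) * ℓ) + ρ * ℓ) (hN : b ≤ N') :
    ℓ / b * N' + 2 * (ℓ / b) ^ 2 * p ≤ ℓ / b' * N' := by
  have hb'0 : 0 < b' := by rw [hb']; positivity
  set s' := √(v' * ℓ)
  set s := √((v' + p) * ℓ) with hs
  have hs'0 : 0 ≤ s' := Real.sqrt_nonneg _
  have hs0 : 0 ≤ s := Real.sqrt_nonneg _
  have hs'2 : s' ^ 2 = v' * ℓ := Real.sq_sqrt (by positivity)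
  have hs2 : s ^ 2 = (v' + p) * ℓ := Real.sq_sqrt (by positivity)
  have hss : s' ≤ s := Real.sqrt_le_sqrt (by nlinarith)
  have hρℓ : ρ' * ℓ ≤ ρ * ℓ := mul_le_mul_of_nonneg_right hρ (by linarith)
  have hb0 : 0 < b := by rw [hb]; linarith [hb']
  have hd : 2 * (s - s') ≤ b - b' := by rw [hb, hb']; linarith
  have hbs : 2 * s ≤ b := by rw [hb]; nlinarith
  have hpl : p * ℓ ≤ 2 * s * (s - s') := by nlinarith
  have hkey : 2 * (p * ℓ) ≤ b * (b - b') := by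
    have : 2 * s * (2 * (s - s')) ≤ b * (b - b') := 
      mul_le_mul hbs hd (by linarith) hb0.le
    linarith
  have hbb : b' ≤ b := by nlinarith
  have e : ℓ / b' * N' - ℓ / b * N' = ℓ * N' * (b - b') / (b * b') := by field_simp
  have h1 : 2 * (ℓ / b) ^ 2 * p ≤ ℓ * N' * (b - b') / (b * b') := by
    have h2 : 2 * (ℓ / b) ^ 2 * p = ℓ * (2 * (p * ℓ)) / (b * b) := by field_simp
    rw [h2, div_le_div_iff₀ (by positivity) (by positivity)]
    have h3 : ℓ * (2 * (p * ℓ)) ≤ ℓ * (N' * (b - b')) := by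
      apply mul_le_mul_of_nonneg_left _ (by linarith)
      exact hkey.trans (mul_le_mul_of_nonneg_right hN (by linarith))
    have h4 : 0 ≤ ℓ * (2 * (p * ℓ)) := by positivity
    calc ℓ * (2 * (p * ℓ)) * (b * b') ≤ ℓ * (2 * (p * ℓ)) * (b * b) := by gcongr
      _ ≤ ℓ * (N' * (b - b')) * (b * b) := by gcongr
      _ = _ := by ring
  linarith

lemma step_cost {b v p ℓ ρ : ℝ} (hℓ : 1 ≤ ℓ) (hp : 0 ≤ p) (hpv : p ≤ v)
    (hρ : 0 < ρ) (hb : b = 2 * √(v * ℓ) + ρ * ℓ) :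
    2 * (ℓ / b) ^ 2 * p ≤ ℓ / 2 := by
  have hb0 : 0 < b := by rw [hb]; positivity
  have hs2 : √(v * ℓ) ^ 2 = v * ℓ := Real.sq_sqrt (by nlinarith)
  have hs0 : 0 ≤ √(v * ℓ) := Real.sqrt_nonneg _
  have h1 : 4 * (v * ℓ) ≤ b ^ 2 := by
    rw [← hs2, hb]; nlinarith [mul_pos hρ (by linarith : 0 < ℓ)]
  have h2 : 2 * (ℓ / b) ^ 2 * p = (2 * ℓ ^ 2 * p) / b ^ 2 := by field_simp
  rw [h2, div_le_iff₀ (by positivity)]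
  nlinarith [mul_le_mul_of_nonneg_left h1 (by linarith : 0 ≤ ℓ), mul_le_mul_of_nonneg_left hpv (by positivity : 0 ≤ ℓ^2)]

lemma int_mul_eps {Ω : Type*} {m0 : MeasurableSpace Ω} (P : Measure Ω) [IsProbabilityMeasure P]
    {mG : MeasurableSpace Ω} (hm : mG ≤ m0) {ε f : Ω → ℝ} {C R : ℝ}
    (hf : Measurable[mG] f) (hfb : ∀ᵐ ω ∂P, |f ω| ≤ C)
    (hε : Measurable[m0] ε) (hεb : ∀ᵐ ω ∂P, |ε ω| ≤ R) (hmean : P[ε|mG] =ᵐ[P] 0) :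
    Integrable (fun ω => f ω * ε ω) P ∧ ∫ ω, f ω * ε ω ∂P = 0 := by
  have hεi : Integrable ε P :=
    Integrable.of_bound hε.aestronglyMeasurable R (by simpa [Real.norm_eq_abs] using hεb)
  have hfint : Integrable (fun ω => f ω * ε ω) P := by
    apply hεi.bdd_mul (c := C) (hf.mono hm le_rfl).aestronglyMeasurable
    simpa [Real.norm_eq_abs] using hfb
  refine ⟨hfint, ?_⟩
  have h1 := condExp_mul_of_stronglyMeasurable_left (m := mG) (μ := P) (f := f) (g := ε)
    hf.stronglyMeasurable hfint hεi
  rw [← integral_condExp hm]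
  have h2 : P[fun ω => f ω * ε ω|mG] =ᵐ[P] fun _ => (0 : ℝ) := by
    refine h1.trans ?_
    filter_upwards [hmean] with ω hω
    simp [hω]
  rw [integral_congr_ae h2]; simp

lemma int_mul_sq {Ω : Type*} {m0 : MeasurableSpace Ω} (P : Measure Ω) [IsProbabilityMeasure P]
    {mG : MeasurableSpace Ω} (hm : mG ≤ m0) {ε f s : Ω → ℝ} {C R : ℝ}
    (hf : Measurable[mG] f) (hf0 : ∀ ω, 0 ≤ f ω) (hfb : ∀ᵐ ω ∂P, |f ω| ≤ C)
    (hε : Measurable[m0] ε) (hεb : ∀ᵐ ω ∂P, |ε ω| ≤ R)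
    (hvar : ∀ᵐ ω ∂P, (P[(fun ω' => ε ω' ^ 2)|mG]) ω ≤ (s ω) ^ 2)
    (hfs : Integrable (fun ω => f ω * s ω ^ 2) P) :
    Integrable (fun ω => f ω * ε ω ^ 2) P ∧
      ∫ ω, f ω * ε ω ^ 2 ∂P ≤ ∫ ω, f ω * s ω ^ 2 ∂P := by
  have hεi : Integrable (fun ω => ε ω ^ 2) P := by
    refine Integrable.of_bound (hε.pow_const 2).aestronglyMeasurable (R ^ 2) ?_
    filter_upwards [hεb] with ω hω
    rw [Real.norm_eq_abs, abs_pow]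
    exact pow_le_pow_left₀ (abs_nonneg _) hω 2
  have hfint : Integrable (fun ω => f ω * ε ω ^ 2) P := by
    apply hεi.bdd_mul (c := C) (hf.mono hm le_rfl).aestronglyMeasurable
    simpa [Real.norm_eq_abs] using hfb
  refine ⟨hfint, ?_⟩
  have h1 := condExp_mul_of_stronglyMeasurable_left (m := mG) (μ := P) (f := f)
    (g := fun ω => ε ω ^ 2) hf.stronglyMeasurable hfint hεi
  rw [← integral_condExp hm]
  apply integral_mono_ae integrable_condExp hfs
  filter_upwards [h1, hvar] with ω h1 h2
  refine h1.le.trans ?_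
  exact mul_le_mul_of_nonneg_left h2 (hf0 ω)

/-- One step of the exponential process. -/
lemma int_step {Ω : Type*} {m0 : MeasurableSpace Ω} (P : Measure Ω) [IsProbabilityMeasure P]
    {mG : MeasurableSpace Ω} (hm : mG ≤ m0) {ε s E g h W : Ω → ℝ} {C Cg Ch Cs R : ℝ}
    (hE : Measurable[mG] E) (hE0 : ∀ ω, 0 ≤ E ω) (hEb : ∀ᵐ ω ∂P, E ω ≤ C)
    (hg : Measurable[mG] g) (hgb : ∀ ω, |g ω| ≤ Cg)
    (hh : Measurable[mG] h) (hh0 : ∀ ω, 0 ≤ h ω) (hhb : ∀ ω, h ω ≤ Ch)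
    (hs : Measurable[mG] s) (hhs : ∀ ω, h ω * s ω ^ 2 ≤ Cs)
    (hε : Measurable[m0] ε) (hεb : ∀ᵐ ω ∂P, |ε ω| ≤ R) (hmean : P[ε|mG] =ᵐ[P] 0)
    (hvar : ∀ᵐ ω ∂P, (P[(fun ω' => ε ω' ^ 2)|mG]) ω ≤ (s ω) ^ 2)
    (hW0 : ∀ ω, 0 ≤ W ω) (hW : ∀ᵐ ω ∂P, W ω ≤ E ω * (1 + g ω * ε ω + h ω * ε ω ^ 2)) :
    ∫ ω, W ω ∂P ≤ ∫ ω, E ω * (1 + h ω * s ω ^ 2) ∂P ∧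
      Integrable (fun ω => E ω * (1 + h ω * s ω ^ 2)) P := by
  have hEi : Integrable E P := by
    refine Integrable.of_bound (hE.mono hm le_rfl).aestronglyMeasurable C ?_
    filter_upwards [hEb] with ω hω
    rwa [Real.norm_eq_abs, abs_of_nonneg (hE0 ω)]
  have h1 := int_mul_eps P hm (f := fun ω => E ω * g ω) (C := C * Cg) (hE.mul hg) (by
    filter_upwards [hEb] with ω hω
    rw [abs_mul, abs_of_nonneg (hE0 ω)]
    exact mul_le_mul hω (hgb ω) (abs_nonneg _) ((hE0 ω).trans hω)) hε hεb hmean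
  have hfs : Integrable (fun ω => (E ω * h ω) * s ω ^ 2) P := by
    have hmeas : Measurable[mG] (fun ω => (E ω * h ω) * s ω ^ 2) := (hE.mul hh).mul (hs.pow_const 2)
    refine Integrable.of_bound (hmeas.mono hm le_rfl).aestronglyMeasurable
      (C * Cs) ?_
    filter_upwards [hEb] with ω hω
    have h0 : 0 ≤ h ω * s ω ^ 2 := mul_nonneg (hh0 ω) (sq_nonneg _)
    rw [mul_assoc, Real.norm_eq_abs, abs_of_nonneg (mul_nonneg (hE0 ω) h0)]
    exact mul_le_mul hω (hhs ω) h0 ((hE0 ω).trans hω)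
  have h2 := int_mul_sq P hm (f := fun ω => E ω * h ω) (C := C * Ch) (s := s) (hE.mul hh)
    (fun ω => mul_nonneg (hE0 ω) (hh0 ω)) (by
    filter_upwards [hEb] with ω hω
    rw [abs_of_nonneg (mul_nonneg (hE0 ω) (hh0 ω))]
    exact mul_le_mul hω (hhb ω) (hh0 ω) ((hE0 ω).trans hω)) hε hεb hvar hfs
  have e3 : (fun ω => E ω * (1 + h ω * s ω ^ 2)) = fun ω => E ω + (E ω * h ω) * s ω ^ 2 := by
    ext ω; ring
  have i3 : Integrable (fun ω => E ω * (1 + h ω * s ω ^ 2)) P := by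
    rw [e3]; exact hEi.add hfs
  refine ⟨?_, i3⟩
  have e4 : (fun ω => E ω * (1 + g ω * ε ω + h ω * ε ω ^ 2)) =
      fun ω => (E ω + (E ω * g ω) * ε ω) + (E ω * h ω) * ε ω ^ 2 := by
    ext ω; ring
  have i4 : Integrable (fun ω => E ω * (1 + g ω * ε ω + h ω * ε ω ^ 2)) P := by
    rw [e4]; exact (hEi.add h1.1).add h2.1
  calc ∫ ω, W ω ∂P ≤ ∫ ω, E ω * (1 + g ω * ε ω + h ω * ε ω ^ 2) ∂P :=
        integral_mono_of_nonneg (Filter.Eventually.of_forall hW0) i4 hW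
    _ = ∫ ω, E ω ∂P + ∫ ω, (E ω * g ω) * ε ω ∂P + ∫ ω, (E ω * h ω) * ε ω ^ 2 ∂P := by
        have i5 : Integrable (fun ω => E ω + (E ω * g ω) * ε ω) P := hEi.add h1.1
        rw [e4, integral_add i5 h2.1, integral_add hEi h1.1]
    _ ≤ ∫ ω, E ω ∂P + 0 + ∫ ω, (E ω * h ω) * s ω ^ 2 ∂P := by
        rw [h1.2]; linarith [h2.2]
    _ = _ := by rw [e3, integral_add hEi hfs]; ring

/-- The scalar data extracted from the bandit process. -/
structure CoreHyp {Ω : Type*} {m : MeasurableSpace Ω} (P : Measure Ω)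
    (G : Filtration ℕ m) (R : ℝ) (ε sb p u N ρ : ℕ → Ω → ℝ) : Prop where
  hε_meas : ∀ t, 1 ≤ t → Measurable[G (t + 1)] (ε t)
  hε_bdd : ∀ t, 1 ≤ t → ∀ᵐ ω ∂P, |ε t ω| ≤ R
  hε_mean : ∀ t, 1 ≤ t → P[ε t|G t] =ᵐ[P] 0
  hε_var : ∀ t, 1 ≤ t → ∀ᵐ ω ∂P, (P[(fun ω' => ε t ω' ^ 2)|G t]) ω ≤ (sb t ω) ^ 2
  sb_meas : ∀ t, 1 ≤ t → Measurable[G t] (sb t)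
  sb_pos : ∀ t, 1 ≤ t → ∀ ω, 0 < sb t ω
  p_meas : ∀ t, 1 ≤ t → Measurable[G t] (p t)
  p_nonneg : ∀ t, 1 ≤ t → ∀ ω, 0 ≤ p t ω
  p_le : ∀ t, 1 ≤ t → ∀ ω, p t ω ≤ 1
  u_meas : ∀ t, 1 ≤ t → Measurable[G t] (u t)
  u_le : ∀ t, 1 ≤ t → ∀ ω, u t ω ^ 2 ≤ p t ω * (1 - p t ω) * N (t - 1) ω ^ 2
  N_meas : ∀ t, Measurable[G (t + 1)] (N t)
  N_nonneg : ∀ t ω, 0 ≤ N t ω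
  N_zero : ∀ ω, N 0 ω = 0
  N_rec : ∀ t, 1 ≤ t → ∀ ω, N t ω ^ 2 ≤ N (t - 1) ω ^ 2 + 2 * u t ω * (ε t ω / sb t ω) +
    p t ω * (ε t ω / sb t ω) ^ 2
  ρ_meas : ∀ t, 1 ≤ t → Measurable[G t] (ρ t)
  ρ_mono : ∀ t, 1 ≤ t → ∀ ω, ρ t ω ≤ ρ (t + 1) ω
  ρ_ge : ∀ t, 1 ≤ t → ∀ ω, R ≤ ρ t ω * sb t ω

/-- Threshold process. -/
noncomputable def bb {Ω : Type*} (ℓ : ℝ) (p ρ : ℕ → Ω → ℝ) (t : ℕ) (ω : Ω) : ℝ :=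
  2 * √((∑ i ∈ Finset.Icc 1 t, p i ω) * ℓ) + ρ t ω * ℓ

set_option linter.unusedSectionVars false

section core
variable {Ω : Type*} {m : MeasurableSpace Ω} {P : Measure Ω} [IsProbabilityMeasure P]
    {G : Filtration ℕ m} {R : ℝ} {ε sb p u N ρ : ℕ → Ω → ℝ}

lemma CoreHyp.ρ_pos (H : CoreHyp P G R ε sb p u N ρ) (hR : 0 < R) (t : ℕ) (ht : 1 ≤ t) (ω : Ω) :
    0 < ρ t ω := by
  have h1 := H.ρ_ge t ht ω
  have h2 := H.sb_pos t ht ω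
  by_contra h
  push Not at h
  nlinarith

lemma CoreHyp.sum_meas (H : CoreHyp P G R ε sb p u N ρ) (t : ℕ) :
    Measurable[G t] (fun ω => ∑ i ∈ Finset.Icc 1 t, p i ω) := by
  apply Finset.measurable_fun_sum
  intro i hi
  rw [Finset.mem_Icc] at hi
  exact (H.p_meas i hi.1).mono (G.mono hi.2) le_rfl

lemma CoreHyp.bb_meas (H : CoreHyp P G R ε sb p u N ρ) (ℓ : ℝ) (t : ℕ) (ht : 1 ≤ t) :
    Measurable[G t] (bb ℓ p ρ t) :=
  (((H.sum_meas t).mul_const ℓ).sqrt.const_mul 2).add ((H.ρ_meas t ht).mul_const ℓ)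

lemma CoreHyp.bb_pos (H : CoreHyp P G R ε sb p u N ρ) (hR : 0 < R) {ℓ : ℝ} (hℓ : 1 ≤ ℓ)
    (t : ℕ) (ht : 1 ≤ t) (ω : Ω) : 0 < bb ℓ p ρ t ω := by
  have := H.ρ_pos hR t ht ω
  unfold bb; positivity

lemma CoreHyp.p_le_sum (H : CoreHyp P G R ε sb p u N ρ) (t : ℕ) (ht : 1 ≤ t) (ω : Ω) :
    p t ω ≤ ∑ i ∈ Finset.Icc 1 t, p i ω :=
  Finset.single_le_sum (f := fun i => p i ω)
    (fun i hi => H.p_nonneg i (Finset.mem_Icc.mp hi).1 ω) (Finset.mem_Icc.mpr ⟨ht, le_rfl⟩)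

lemma CoreHyp.step (H : CoreHyp P G R ε sb p u N ρ) (hR : 0 < R) {ℓ : ℝ} (hℓ : 1 ≤ ℓ)
    (t : ℕ) (ht : 1 ≤ t) (C : ℝ) (hℓC : ℓ ≤ C)
    (hprev : ∀ᵐ ω ∂P, ℓ / bb ℓ p ρ t ω * N (t - 1) ω ≤ C) :
    (∀ᵐ ω ∂P, ℓ / bb ℓ p ρ t ω * N t ω ≤ C + 1) ∧
    ∫ ω, Real.exp (ℓ / bb ℓ p ρ t ω * N t ω) ∂P ≤
      ∫ ω, Real.exp (ℓ / bb ℓ p ρ t ω * max (N (t - 1) ω) (bb ℓ p ρ t ω)) *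
        (1 + 2 * (ℓ / bb ℓ p ρ t ω) ^ 2 * p t ω) ∂P ∧
    Integrable (fun ω => Real.exp (ℓ / bb ℓ p ρ t ω * max (N (t - 1) ω) (bb ℓ p ρ t ω)) *
        (1 + 2 * (ℓ / bb ℓ p ρ t ω) ^ 2 * p t ω)) P := by
  have hb0 := H.bb_pos hR hℓ t ht
  have hbm := H.bb_meas ℓ t ht
  have hθm : Measurable[G t] (fun ω => ℓ / bb ℓ p ρ t ω) := hbm.const_div ℓ
  have hθ0 : ∀ ω, 0 < ℓ / bb ℓ p ρ t ω := fun ω => div_pos (by linarith) (hb0 ω)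
  have hθρ : ∀ ω, ℓ / bb ℓ p ρ t ω * ρ t ω ≤ 1 := by
    intro ω
    rw [div_mul_eq_mul_div, div_le_one (hb0 ω)]
    unfold bb
    nlinarith [Real.sqrt_nonneg ((∑ i ∈ Finset.Icc 1 t, p i ω) * ℓ)]
  have hcost : ∀ ω, 2 * (ℓ / bb ℓ p ρ t ω) ^ 2 * p t ω ≤ ℓ / 2 := fun ω =>
    step_cost hℓ (H.p_nonneg t ht ω) (H.p_le_sum t ht ω) (H.ρ_pos hR t ht ω) rfl
  have hNm : Measurable[G t] (N (t - 1)) := by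
    have := H.N_meas (t - 1)
    rwa [Nat.sub_add_cancel ht] at this
  have hXm : Measurable[G t] (fun ω => max (N (t - 1) ω) (bb ℓ p ρ t ω)) := hNm.max hbm
  have hX0 : ∀ ω, 0 < max (N (t - 1) ω) (bb ℓ p ρ t ω) := fun ω =>
    lt_max_of_lt_right (hb0 ω)
  have hθb : ∀ ω, ℓ / bb ℓ p ρ t ω * bb ℓ p ρ t ω = ℓ := fun ω =>
    div_mul_cancel₀ _ (hb0 ω).ne'
  have hθX1 : ∀ ω, ℓ ≤ ℓ / bb ℓ p ρ t ω * max (N (t - 1) ω) (bb ℓ p ρ t ω) := fun ω => by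
    calc ℓ = ℓ / bb ℓ p ρ t ω * bb ℓ p ρ t ω := (hθb ω).symm
      _ ≤ _ := mul_le_mul_of_nonneg_left (le_max_right _ _) (hθ0 ω).le
  have hθXC : ∀ᵐ ω ∂P, ℓ / bb ℓ p ρ t ω * max (N (t - 1) ω) (bb ℓ p ρ t ω) ≤ C := by
    filter_upwards [hprev] with ω hω
    rw [mul_max_of_nonneg _ _ (hθ0 ω).le, hθb]
    exact max_le hω hℓC
  have hθs : ∀ ω, ℓ / bb ℓ p ρ t ω / sb t ω ≤ 1 / R := by
    intro ω
    rw [div_le_div_iff₀ (H.sb_pos t ht ω) hR]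
    have h1 := mul_le_mul_of_nonneg_left (H.ρ_ge t ht ω) (hθ0 ω).le
    have h2 := mul_le_mul_of_nonneg_right (hθρ ω) (H.sb_pos t ht ω).le
    linarith
  have hall : ∀ᵐ ω ∂P, ℓ / bb ℓ p ρ t ω * N t ω ≤
        ℓ / bb ℓ p ρ t ω * max (N (t - 1) ω) (bb ℓ p ρ t ω) + 1 ∧
      Real.exp (ℓ / bb ℓ p ρ t ω * N t ω) ≤
        Real.exp (ℓ / bb ℓ p ρ t ω * max (N (t - 1) ω) (bb ℓ p ρ t ω)) *
      (1 + (ℓ / bb ℓ p ρ t ω * (u t ω / max (N (t - 1) ω) (bb ℓ p ρ t ω))) * (ε t ω / sb t ω) +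
        (2 * (ℓ / bb ℓ p ρ t ω) ^ 2 * p t ω) * (ε t ω / sb t ω) ^ 2) := by
    filter_upwards [H.hε_bdd t ht] with ω hω
    apply step_exp (ρ := ρ t ω) (hX0 ω) (le_max_left _ _) (H.N_nonneg _ ω) (hθ0 ω).le
      (hℓ.trans (hθX1 ω)) (H.p_nonneg t ht ω) (H.p_le t ht ω) ?_ (hθρ ω) (H.u_le t ht ω)
      (H.N_rec t ht ω)
    rw [abs_div, abs_of_pos (H.sb_pos t ht ω), div_le_iff₀ (H.sb_pos t ht ω)]
    exact hω.trans (H.ρ_ge t ht ω)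
  refine ⟨?_, ?_⟩
  · filter_upwards [hall, hθXC] with ω h1 h2
    linarith [h1.1]
  have hucb : ∀ ω, |u t ω / max (N (t - 1) ω) (bb ℓ p ρ t ω)| ≤ 1 := by
    intro ω
    rw [abs_div, abs_of_pos (hX0 ω), div_le_one (hX0 ω)]
    refine le_trans ?_ (le_max_left _ _)
    apply abs_le_of_sq_le_sq _ (H.N_nonneg _ ω)
    refine (H.u_le t ht ω).trans ?_
    have h1 := H.p_nonneg t ht ω
    have h2 := H.p_le t ht ω
    have h3 : p t ω * (1 - p t ω) ≤ 1 := by nlinarith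
    nlinarith [sq_nonneg (N (t-1) ω)]
  have key := int_step P (G.le t) (ε := ε t) (s := sb t)
    (E := fun ω => Real.exp (ℓ / bb ℓ p ρ t ω * max (N (t - 1) ω) (bb ℓ p ρ t ω)))
    (g := fun ω => (ℓ / bb ℓ p ρ t ω) * (u t ω / max (N (t - 1) ω) (bb ℓ p ρ t ω)) / sb t ω)
    (h := fun ω => (2 * (ℓ / bb ℓ p ρ t ω) ^ 2 * p t ω) / sb t ω ^ 2)
    (W := fun ω => Real.exp (ℓ / bb ℓ p ρ t ω * N t ω))
    (C := Real.exp C) (Cg := 1 / R) (Ch := 2 * (1 / R) ^ 2) (Cs := ℓ / 2) (R := R)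
    (hθm.mul hXm).exp (fun ω => (Real.exp_pos _).le) (by
      filter_upwards [hθXC] with ω h
      exact Real.exp_le_exp.mpr h)
    ((hθm.mul ((H.u_meas t ht).div hXm)).div (H.sb_meas t ht)) (by
      intro ω
      have e : (ℓ / bb ℓ p ρ t ω) * (u t ω / max (N (t - 1) ω) (bb ℓ p ρ t ω)) / sb t ω =
        (ℓ / bb ℓ p ρ t ω / sb t ω) * (u t ω / max (N (t - 1) ω) (bb ℓ p ρ t ω)) := by ring
      have h0 : 0 ≤ ℓ / bb ℓ p ρ t ω / sb t ω := (div_pos (hθ0 ω) (H.sb_pos t ht ω)).le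
      rw [e, abs_mul, abs_of_nonneg h0]
      calc _ ≤ (1 / R) * 1 := mul_le_mul (hθs ω) (hucb ω) (abs_nonneg _) (by positivity)
        _ = _ := mul_one _)
    ((((hθm.pow_const 2).const_mul 2).mul (H.p_meas t ht)).div ((H.sb_meas t ht).pow_const 2))
    (fun ω => div_nonneg (mul_nonneg (by positivity) (H.p_nonneg t ht ω)) (sq_nonneg _)) (by
      intro ω
      have e : (2 * (ℓ / bb ℓ p ρ t ω) ^ 2 * p t ω) / sb t ω ^ 2 =
        2 * (ℓ / bb ℓ p ρ t ω / sb t ω) ^ 2 * p t ω := by ring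
      have h0 : 0 ≤ ℓ / bb ℓ p ρ t ω / sb t ω := (div_pos (hθ0 ω) (H.sb_pos t ht ω)).le
      rw [e]
      calc _ ≤ 2 * (1 / R) ^ 2 * 1 := by
            apply mul_le_mul _ (H.p_le t ht ω) (H.p_nonneg t ht ω) (by positivity)
            apply mul_le_mul_of_nonneg_left _ (by norm_num)
            exact pow_le_pow_left₀ h0 (hθs ω) 2
        _ = _ := mul_one _)
    (H.sb_meas t ht) (by
      intro ω
      rw [div_mul_cancel₀ _ (pow_pos (H.sb_pos t ht ω) 2).ne']
      exact hcost ω)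
    ((H.hε_meas t ht).mono (G.le _) le_rfl) (H.hε_bdd t ht) (H.hε_mean t ht) (H.hε_var t ht)
    (fun ω => (Real.exp_pos _).le) (by
      filter_upwards [hall] with ω h
      refine h.2.trans (le_of_eq ?_)
      ring)
  have e : ∀ ω, (2 * (ℓ / bb ℓ p ρ t ω) ^ 2 * p t ω) / sb t ω ^ 2 * sb t ω ^ 2 =
      2 * (ℓ / bb ℓ p ρ t ω) ^ 2 * p t ω := fun ω =>
    div_mul_cancel₀ _ (pow_pos (H.sb_pos t ht ω) 2).ne'
  simp only [e] at key
  exact key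

lemma CoreHyp.main (H : CoreHyp P G R ε sb p u N ρ) (hR : 0 < R) {ℓ : ℝ} (hℓ : 1 ≤ ℓ)
    (t : ℕ) (ht : 1 ≤ t) :
    (∀ᵐ ω ∂P, ℓ / bb ℓ p ρ t ω * N t ω ≤ ℓ + t) ∧
    ∫ ω, Real.exp (ℓ / bb ℓ p ρ t ω * N t ω) ∂P ≤ t * Real.exp (3 / 2 * ℓ) := by
  have inact : ∀ t, 1 ≤ t → ∀ ω, N (t - 1) ω ≤ bb ℓ p ρ t ω →
      Real.exp (ℓ / bb ℓ p ρ t ω * max (N (t - 1) ω) (bb ℓ p ρ t ω)) *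
        (1 + 2 * (ℓ / bb ℓ p ρ t ω) ^ 2 * p t ω) ≤ Real.exp (3 / 2 * ℓ) := by
    intro t ht ω h
    rw [max_eq_right h, div_mul_cancel₀ _ (H.bb_pos hR hℓ t ht ω).ne']
    have hc : 2 * (ℓ / bb ℓ p ρ t ω) ^ 2 * p t ω ≤ ℓ / 2 :=
      step_cost hℓ (H.p_nonneg t ht ω) (H.p_le_sum t ht ω) (H.ρ_pos hR t ht ω) rfl
    calc _ ≤ Real.exp ℓ * Real.exp (ℓ / 2) := by
          apply mul_le_mul_of_nonneg_left _ (Real.exp_pos _).le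
          linarith [Real.add_one_le_exp (ℓ / 2)]
      _ = _ := by rw [← Real.exp_add]; congr 1; ring
  induction t, ht using Nat.le_induction with
  | base =>
    have h := H.step hR hℓ 1 le_rfl ℓ le_rfl (by
      refine Filter.Eventually.of_forall fun ω => ?_
      simp only [Nat.sub_self, H.N_zero, mul_zero]
      linarith)
    refine ⟨by simpa using h.1, h.2.1.trans ?_⟩
    calc _ ≤ ∫ ω, Real.exp (3 / 2 * ℓ) ∂P := by
          apply integral_mono h.2.2 (integrable_const _)
          intro ω
          apply inact 1 le_rfl
          simp only [Nat.sub_self, H.N_zero]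
          exact (H.bb_pos hR hℓ 1 le_rfl ω).le
      _ = _ := by simp
  | succ t ht ih =>
    have hv0 : ∀ ω, 0 ≤ ∑ i ∈ Finset.Icc 1 t, p i ω := fun ω =>
      Finset.sum_nonneg fun i hi => H.p_nonneg i (Finset.mem_Icc.mp hi).1 ω
    have hbs : ∀ ω, bb ℓ p ρ (t + 1) ω =
        2 * √((∑ i ∈ Finset.Icc 1 t, p i ω + p (t + 1) ω) * ℓ) + ρ (t + 1) ω * ℓ := by
      intro ω
      unfold bb
      rw [Finset.sum_Icc_succ_top (by omega)]
    have hmono : ∀ ω, bb ℓ p ρ t ω ≤ bb ℓ p ρ (t + 1) ω := by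
      intro ω
      rw [hbs]; unfold bb
      have h1 := H.p_nonneg (t + 1) (by omega) ω
      have h2 := H.ρ_mono t ht ω
      gcongr
      linarith
    have h := H.step hR hℓ (t + 1) (by omega) (ℓ + t) (by linarith [Nat.cast_nonneg (α := ℝ) t]) (by
      filter_upwards [ih.1] with ω hω
      refine le_trans ?_ hω
      simp only [Nat.add_sub_cancel]
      apply mul_le_mul_of_nonneg_right _ (H.N_nonneg t ω)
      exact div_le_div_of_nonneg_left (by linarith) (H.bb_pos hR hℓ t ht ω) (hmono ω))
    refine ⟨by filter_upwards [h.1] with ω hω; push_cast; linarith, h.2.1.trans ?_⟩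
    have hWi : Integrable (fun ω => Real.exp (ℓ / bb ℓ p ρ t ω * N t ω)) P := by
      have hm1 : Measurable[G (t + 1)] (fun ω => Real.exp (ℓ / bb ℓ p ρ t ω * N t ω)) :=
        ((((H.bb_meas ℓ t ht).mono (G.mono (Nat.le_succ t)) le_rfl).const_div ℓ).mul
          (H.N_meas t)).exp
      refine Integrable.of_bound (hm1.mono (G.le _) le_rfl).aestronglyMeasurable
        (Real.exp (ℓ + t)) ?_
      filter_upwards [ih.1] with ω hω
      rw [Real.norm_eq_abs, abs_of_pos (Real.exp_pos _)]
      exact Real.exp_le_exp.mpr hω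
    calc _ ≤ ∫ ω, (Real.exp (ℓ / bb ℓ p ρ t ω * N t ω) + Real.exp (3 / 2 * ℓ)) ∂P := by
          have hWi2 : Integrable (fun ω => Real.exp (ℓ / bb ℓ p ρ t ω * N t ω) +
              Real.exp (3 / 2 * ℓ)) P := hWi.add (integrable_const _)
          apply integral_mono h.2.2 hWi2
          intro ω
          beta_reduce
          rcases le_total (N t ω) (bb ℓ p ρ (t + 1) ω) with hle | hle
          · exact (inact (t + 1) (by omega) ω hle).trans (by
              linarith [Real.exp_pos (ℓ / bb ℓ p ρ t ω * N t ω)])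
          · have hg := step_gain hℓ (hv0 ω) (H.p_nonneg (t + 1) (by omega) ω)
              (H.ρ_pos hR t ht ω) (H.ρ_mono t ht ω) (rfl : bb ℓ p ρ t ω = _) (hbs ω) hle
            simp only [Nat.add_sub_cancel, max_eq_left hle]
            calc _ ≤ Real.exp (ℓ / bb ℓ p ρ (t + 1) ω * N t ω) *
                  Real.exp (2 * (ℓ / bb ℓ p ρ (t + 1) ω) ^ 2 * p (t + 1) ω) := by
                  apply mul_le_mul_of_nonneg_left _ (Real.exp_pos _).le
                  linarith [Real.add_one_le_exp (2 * (ℓ / bb ℓ p ρ (t + 1) ω) ^ 2 * p (t + 1) ω)]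
              _ ≤ Real.exp (ℓ / bb ℓ p ρ t ω * N t ω) := by
                  rw [← Real.exp_add]; exact Real.exp_le_exp.mpr hg
              _ ≤ _ := by linarith [Real.exp_pos (3 / 2 * ℓ)]
      _ = ∫ ω, Real.exp (ℓ / bb ℓ p ρ t ω * N t ω) ∂P + Real.exp (3 / 2 * ℓ) := by
          rw [integral_add hWi (integrable_const _)]; simp
      _ ≤ _ := by push_cast; linarith [ih.2]

lemma CoreHyp.tail (H : CoreHyp P G R ε sb p u N ρ) (hR : 0 < R) {ℓ : ℝ} (hℓ : 1 ≤ ℓ)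
    (t : ℕ) (ht : 1 ≤ t) :
    P {ω | 4 * bb ℓ p ρ t ω < N t ω} ≤ ENNReal.ofReal (t * Real.exp (-(5 / 2) * ℓ)) := by
  obtain ⟨h1, h2⟩ := H.main hR hℓ t ht
  have hWi : Integrable (fun ω => Real.exp (ℓ / bb ℓ p ρ t ω * N t ω)) P := by
    have hm1 : Measurable[G (t + 1)] (fun ω => Real.exp (ℓ / bb ℓ p ρ t ω * N t ω)) :=
      ((((H.bb_meas ℓ t ht).mono (G.mono (Nat.le_succ t)) le_rfl).const_div ℓ).mul
        (H.N_meas t)).exp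
    refine Integrable.of_bound (hm1.mono (G.le _) le_rfl).aestronglyMeasurable
      (Real.exp (ℓ + t)) ?_
    filter_upwards [h1] with ω hω
    rw [Real.norm_eq_abs, abs_of_pos (Real.exp_pos _)]
    exact Real.exp_le_exp.mpr hω
  have hmk := mul_meas_ge_le_integral_of_nonneg
    (Filter.Eventually.of_forall fun ω => (Real.exp_pos (ℓ / bb ℓ p ρ t ω * N t ω)).le) hWi
    (Real.exp (4 * ℓ))
  have h3 : P.real {ω | Real.exp (4 * ℓ) ≤ Real.exp (ℓ / bb ℓ p ρ t ω * N t ω)} ≤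
      t * Real.exp (-(5 / 2) * ℓ) := by
    have h4 := hmk.trans h2
    have h5 : (t : ℝ) * Real.exp (3 / 2 * ℓ) =
        Real.exp (4 * ℓ) * (t * Real.exp (-(5 / 2) * ℓ)) := by
      rw [mul_left_comm, ← Real.exp_add]; congr 2; ring
    rw [h5] at h4
    exact le_of_mul_le_mul_left h4 (Real.exp_pos _)
  calc P {ω | 4 * bb ℓ p ρ t ω < N t ω} ≤
        P {ω | Real.exp (4 * ℓ) ≤ Real.exp (ℓ / bb ℓ p ρ t ω * N t ω)} := by
        apply measure_mono
        intro ω hω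
        simp only [Set.mem_ofPred_eq] at hω ⊢
        apply Real.exp_le_exp.mpr
        have hb := H.bb_pos hR hℓ t ht ω
        rw [div_mul_eq_mul_div, le_div_iff₀ hb]
        nlinarith
    _ = ENNReal.ofReal (P.real {ω | Real.exp (4 * ℓ) ≤ Real.exp (ℓ / bb ℓ p ρ t ω * N t ω)}) := by
        rw [ofReal_measureReal]
    _ ≤ _ := ENNReal.ofReal_le_ofReal h3

lemma CoreHyp.zero (H : CoreHyp P G R ε sb p u N ρ) (hR : R = 0) (t : ℕ) :
    ∀ᵐ ω ∂P, N t ω = 0 := by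
  induction t with
  | zero => exact Filter.Eventually.of_forall H.N_zero
  | succ t ih =>
    filter_upwards [ih, H.hε_bdd (t + 1) (by omega)] with ω h1 h2
    have h3 := H.N_rec (t + 1) (by omega) ω
    rw [hR] at h2
    have h4 : ε (t + 1) ω = 0 := abs_nonpos_iff.mp h2
    simp only [Nat.add_sub_cancel, h1, h4] at h3
    have : N (t + 1) ω ^ 2 ≤ 0 := by simpa using h3
    exact pow_eq_zero_iff (two_ne_zero) |>.mp (le_antisymm this (sq_nonneg _))

end core

section linalg
variable {d : ℕ}

lemma dot_symm {M : Matrix (Fin d) (Fin d) ℝ} (hM : M.IsHermitian) (x y : Fin d → ℝ) :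
    x ⬝ᵥ (M *ᵥ y) = y ⬝ᵥ (M *ᵥ x) := by
  have hT : Mᵀ = M := by
    have := hM.eq
    rwa [conjTranspose_eq_transpose_of_trivial] at this
  rw [dotProduct_mulVec, ← mulVec_transpose, hT, dotProduct_comm]

lemma psd_nonneg {M : Matrix (Fin d) (Fin d) ℝ} (hM : M.PosSemidef) (x : Fin d → ℝ) :
    0 ≤ x ⬝ᵥ (M *ᵥ x) := by
  simpa using hM.dotProduct_mulVec_nonneg x

lemma cs {M : Matrix (Fin d) (Fin d) ℝ} (hM : M.PosSemidef) (x y : Fin d → ℝ) :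
    (x ⬝ᵥ (M *ᵥ y)) ^ 2 ≤ (x ⬝ᵥ (M *ᵥ x)) * (y ⬝ᵥ (M *ᵥ y)) := by
  have h := discrim_le_zero (a := y ⬝ᵥ (M *ᵥ y)) (b := 2 * (x ⬝ᵥ (M *ᵥ y)))
    (c := x ⬝ᵥ (M *ᵥ x)) (by
      intro s
      have h1 := psd_nonneg hM (x + s • y)
      have h2 : (x + s • y) ⬝ᵥ (M *ᵥ (x + s • y)) =
        (y ⬝ᵥ (M *ᵥ y)) * (s * s) + 2 * (x ⬝ᵥ (M *ᵥ y)) * s + x ⬝ᵥ (M *ᵥ x) := by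
        rw [mulVec_add, mulVec_smul, dotProduct_add, add_dotProduct, add_dotProduct,
          dotProduct_smul, dotProduct_smul, smul_dotProduct, smul_dotProduct,
          dot_symm hM.isHermitian y x]
        simp only [smul_eq_mul]; ring
      rwa [h2] at h1)
  unfold discrim at h
  nlinarith

lemma matNorm_nonneg (M : Matrix (Fin d) (Fin d) ℝ) (x : Fin d → ℝ) : 0 ≤ matNorm M x :=
  Real.sqrt_nonneg _

lemma matNorm_sq {M : Matrix (Fin d) (Fin d) ℝ} (hM : M.PosSemidef) (x : Fin d → ℝ) :
    matNorm M x ^ 2 = x ⬝ᵥ (M *ᵥ x) := Real.sq_sqrt (psd_nonneg hM x)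

lemma abs_dot_le {M : Matrix (Fin d) (Fin d) ℝ} (hM : M.PosSemidef) (x y : Fin d → ℝ) :
    |x ⬝ᵥ (M *ᵥ y)| ≤ matNorm M x * matNorm M y := by
  apply abs_le_of_sq_le_sq _ (mul_nonneg (matNorm_nonneg _ _) (matNorm_nonneg _ _))
  rw [mul_pow, matNorm_sq hM, matNorm_sq hM]
  exact cs hM x y

lemma matNorm_add {M : Matrix (Fin d) (Fin d) ℝ} (hM : M.PosSemidef) (x y : Fin d → ℝ) :
    matNorm M (x + y) ≤ matNorm M x + matNorm M y := by
  apply le_of_sq_le_sq _ (add_nonneg (matNorm_nonneg _ _) (matNorm_nonneg _ _))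
  rw [add_sq, matNorm_sq hM, matNorm_sq hM, matNorm_sq hM]
  have h2 : (x + y) ⬝ᵥ (M *ᵥ (x + y)) =
      x ⬝ᵥ (M *ᵥ x) + 2 * (x ⬝ᵥ (M *ᵥ y)) + (y ⬝ᵥ (M *ᵥ y)) := by
    rw [mulVec_add, dotProduct_add, add_dotProduct, add_dotProduct,
      dot_symm hM.isHermitian y x]
    ring
  rw [h2]
  have := (le_abs_self _).trans (abs_dot_le hM x y)
  linarith

lemma matNorm_neg (M : Matrix (Fin d) (Fin d) ℝ) (x : Fin d → ℝ) :
    matNorm M (-x) = matNorm M x := by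
  unfold matNorm; rw [mulVec_neg, dotProduct_neg, neg_dotProduct, neg_neg]

lemma inv_mulVec_mulVec {Z : Matrix (Fin d) (Fin d) ℝ} (hZ : Z.PosDef) (x : Fin d → ℝ) :
    Z⁻¹ *ᵥ (Z *ᵥ x) = x := by
  rw [mulVec_mulVec, nonsing_inv_mul _ ((isUnit_iff_isUnit_det _).mp hZ.isUnit), one_mulVec]

lemma mulVec_inv_mulVec {Z : Matrix (Fin d) (Fin d) ℝ} (hZ : Z.PosDef) (x : Fin d → ℝ) :
    Z *ᵥ (Z⁻¹ *ᵥ x) = x := by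
  rw [mulVec_mulVec, mul_nonsing_inv _ ((isUnit_iff_isUnit_det _).mp hZ.isUnit), one_mulVec]

/-- `‖Z⁻¹ x‖_Z = ‖x‖_{Z⁻¹}` -/
lemma matNorm_inv {Z : Matrix (Fin d) (Fin d) ℝ} (hZ : Z.PosDef) (x : Fin d → ℝ) :
    matNorm Z (Z⁻¹ *ᵥ x) = matNorm Z⁻¹ x := by
  unfold matNorm
  rw [mulVec_inv_mulVec hZ, dotProduct_comm]

/-- `x·y ≤ ‖x‖_{Z⁻¹}‖y‖_Z` -/
lemma dual_le {Z : Matrix (Fin d) (Fin d) ℝ} (hZ : Z.PosDef) (x y : Fin d → ℝ) :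
    x ⬝ᵥ y ≤ matNorm Z⁻¹ x * matNorm Z y := by
  have h := abs_dot_le hZ.posSemidef (Z⁻¹ *ᵥ x) y
  rw [matNorm_inv hZ] at h
  refine (le_abs_self _).trans (le_trans (le_of_eq ?_) h)
  congr 1
  rw [dot_symm hZ.isHermitian, mulVec_inv_mulVec hZ, dotProduct_comm]

lemma psd_vec (x : Fin d → ℝ) : (vecMulVec x x).PosSemidef := by
  simpa using posSemidef_vecMulVec_self_star x

lemma rank_one {Z : Matrix (Fin d) (Fin d) ℝ} (hZ : Z.PosDef) (x S : Fin d → ℝ) (η : ℝ) :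
    matNorm (Z + vecMulVec x x)⁻¹ (S + η • x) ^ 2 ≤ matNorm Z⁻¹ S ^ 2 +
      2 * (x ⬝ᵥ (Z⁻¹ *ᵥ S) / (1 + matNorm Z⁻¹ x ^ 2)) * η +
      matNorm Z⁻¹ x ^ 2 / (1 + matNorm Z⁻¹ x ^ 2) * η ^ 2 := by
  have hZ' : (Z + vecMulVec x x).PosDef := hZ.add_posSemidef (psd_vec x)
  rw [matNorm_sq hZ'.inv.posSemidef, matNorm_sq hZ.inv.posSemidef, matNorm_sq hZ.inv.posSemidef]
  have hw0 : 0 ≤ x ⬝ᵥ (Z⁻¹ *ᵥ x) := psd_nonneg hZ.inv.posSemidef x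
  have hSx : S ⬝ᵥ (Z⁻¹ *ᵥ x) = x ⬝ᵥ (Z⁻¹ *ᵥ S) := dot_symm hZ.inv.isHermitian _ _
  have hinv : (Z + vecMulVec x x)⁻¹ *ᵥ (S + η • x) = Z⁻¹ *ᵥ S +
      ((η - x ⬝ᵥ (Z⁻¹ *ᵥ S)) / (1 + x ⬝ᵥ (Z⁻¹ *ᵥ x))) • (Z⁻¹ *ᵥ x) := by
    set κ := (η - x ⬝ᵥ (Z⁻¹ *ᵥ S)) / (1 + x ⬝ᵥ (Z⁻¹ *ᵥ x)) with hκ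
    have : S + η • x = (Z + vecMulVec x x) *ᵥ (Z⁻¹ *ᵥ S + κ • (Z⁻¹ *ᵥ x)) := by
      rw [add_mulVec, mulVec_add, mulVec_smul, mulVec_inv_mulVec hZ, mulVec_inv_mulVec hZ,
        vecMulVec_mulVec, dotProduct_add, dotProduct_smul]
      have hk : κ * (1 + x ⬝ᵥ (Z⁻¹ *ᵥ x)) = η - x ⬝ᵥ (Z⁻¹ *ᵥ S) := by
        rw [hκ]; field_simp
      ext i
      simp only [Pi.add_apply, Pi.smul_apply, smul_eq_mul, MulOpposite.smul_eq_mul_unop,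
        MulOpposite.unop_op]
      have : η = κ * (1 + x ⬝ᵥ (Z⁻¹ *ᵥ x)) + x ⬝ᵥ (Z⁻¹ *ᵥ S) := by linarith
      rw [this]; ring
    rw [this, inv_mulVec_mulVec hZ']
  rw [hinv, dotProduct_add, add_dotProduct, dotProduct_smul, add_dotProduct, smul_dotProduct,
    smul_dotProduct, hSx]
  simp only [smul_eq_mul]
  generalize x ⬝ᵥ (Z⁻¹ *ᵥ S) = U at *
  generalize x ⬝ᵥ (Z⁻¹ *ᵥ x) = w at *
  generalize S ⬝ᵥ (Z⁻¹ *ᵥ S) = K at *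
  have : K + η * U + (η - U) / (1 + w) * (U + η * w) =
      K + 2 * (U / (1 + w)) * η + w / (1 + w) * η ^ 2 - U ^ 2 / (1 + w) := by
    field_simp; ring
  rw [this]
  have : 0 ≤ U ^ 2 / (1 + w) := by positivity
  linarith

lemma det_rank_one {Z : Matrix (Fin d) (Fin d) ℝ} (hZ : Z.PosDef) (x : Fin d → ℝ) :
    (Z + vecMulVec x x).det = Z.det * (1 + matNorm Z⁻¹ x ^ 2) := by
  have h := det_add_replicateCol_mul_replicateRow (ι := Unit)
    ((isUnit_iff_isUnit_det _).mp hZ.isUnit) x x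
  rw [matNorm_sq hZ.inv.posSemidef, vecMulVec_eq Unit, h]
  congr 1
  rw [det_unique, Matrix.mul_assoc, ← replicateCol_mulVec, Matrix.add_apply, Matrix.one_apply_eq,
    Matrix.replicateRow_mul_replicateCol_apply]

lemma log_det_le {Z : Matrix (Fin d) (Fin d) ℝ} (hZ : Z.PosDef) (hd : 0 < d) :
    Real.log Z.det ≤ d * Real.log (Z.trace / d) := by
  have hdet : Z.det = ∏ i, hZ.isHermitian.eigenvalues i := by
    simpa using hZ.isHermitian.det_eq_prod_eigenvalues
  have htr : Z.trace = ∑ i, hZ.isHermitian.eigenvalues i := by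
    simpa using hZ.isHermitian.trace_eq_sum_eigenvalues
  have hpos : ∀ i, 0 < hZ.isHermitian.eigenvalues i := hZ.eigenvalues_pos
  have hd' : (0 : ℝ) < d := by exact_mod_cast hd
  rw [hdet, htr, Real.log_prod (fun i _ => (hpos i).ne')]
  have hj := strictConcaveOn_log_Ioi.concaveOn.le_map_sum (t := (Finset.univ : Finset (Fin d)))
    (w := fun _ => (1 : ℝ) / d) (p := hZ.isHermitian.eigenvalues)
    (fun _ _ => by positivity) (by simp [hd'.ne']) (fun i _ => hpos i)
  simp only [smul_eq_mul, ← Finset.mul_sum] at hj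
  rw [one_div, inv_mul_eq_div, inv_mul_eq_div, div_le_iff₀ hd'] at hj
  linarith

end linalg

section process
variable {d : ℕ}

/-- Rescaled action. -/
noncomputable def xs (a : ℕ → Fin d → ℝ) (sb : ℕ → ℝ) (i : ℕ) : Fin d → ℝ := (sb i)⁻¹ • a i

/-- Noise sum. -/
noncomputable def nS (a : ℕ → Fin d → ℝ) (sb ε : ℕ → ℝ) (t : ℕ) : Fin d → ℝ :=
  ∑ i ∈ Finset.Icc 1 t, (ε i / sb i) • xs a sb i

/-- Squared norm of the new direction. -/
noncomputable def w2 (lam : ℝ) (a : ℕ → Fin d → ℝ) (sb : ℕ → ℝ) (t : ℕ) : ℝ :=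
  matNorm (wGram lam a sb (t - 1))⁻¹ (xs a sb t) ^ 2

lemma w2_nonneg (lam : ℝ) (a : ℕ → Fin d → ℝ) (sb : ℕ → ℝ) (t : ℕ) : 0 ≤ w2 lam a sb t :=
  sq_nonneg _

lemma vec_xs (a : ℕ → Fin d → ℝ) (sb : ℕ → ℝ) (i : ℕ) :
    vecMulVec (xs a sb i) (xs a sb i) = ((sb i) ^ 2)⁻¹ • vecMulVec (a i) (a i) := by
  ext j k
  simp only [xs, vecMulVec_apply, Pi.smul_apply, Matrix.smul_apply, smul_eq_mul]
  rw [sq, mul_inv]; ring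

lemma wGram_zero (lam : ℝ) (a : ℕ → Fin d → ℝ) (sb : ℕ → ℝ) :
    wGram lam a sb 0 = lam • 1 := by simp [wGram]

lemma wGram_succ (lam : ℝ) (a : ℕ → Fin d → ℝ) (sb : ℕ → ℝ) (t : ℕ) :
    wGram lam a sb (t + 1) =
      wGram lam a sb t + vecMulVec (xs a sb (t + 1)) (xs a sb (t + 1)) := by
  unfold wGram
  rw [Finset.sum_Icc_succ_top (by omega), vec_xs, add_assoc]

lemma wGram_posDef {lam : ℝ} (hlam : 0 < lam) (a : ℕ → Fin d → ℝ) (sb : ℕ → ℝ) (t : ℕ) :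
    (wGram lam a sb t).PosDef := by
  induction t with
  | zero => rw [wGram_zero]; exact Matrix.PosDef.one.smul hlam
  | succ t ih => rw [wGram_succ]; exact ih.add_posSemidef (psd_vec _)

lemma log_det_wGram {lam : ℝ} (hlam : 0 < lam) (a : ℕ → Fin d → ℝ) (sb : ℕ → ℝ) (t : ℕ) :
    Real.log (wGram lam a sb t).det =
      d * Real.log lam + ∑ i ∈ Finset.Icc 1 t, Real.log (1 + w2 lam a sb i) := by
  induction t with
  | zero => simp [wGram_zero, Matrix.det_smul]
  | succ t ih =>
    have hZ := wGram_posDef hlam a sb t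
    have h0 : 0 ≤ w2 lam a sb (t + 1) := w2_nonneg _ _ _ _
    rw [wGram_succ, det_rank_one hZ, Finset.sum_Icc_succ_top (by omega)]
    change Real.log (_ * (1 + w2 lam a sb (t + 1))) = _
    rw [Real.log_mul hZ.det_pos.ne' (by positivity), ih]
    ring

lemma trace_wGram (lam : ℝ) (a : ℕ → Fin d → ℝ) (sb : ℕ → ℝ) (t : ℕ) :
    (wGram lam a sb t).trace =
      d * lam + ∑ i ∈ Finset.Icc 1 t, ((sb i) ^ 2)⁻¹ * (a i ⬝ᵥ a i) := by
  unfold wGram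
  rw [trace_add, trace_smul, trace_sum]
  simp [trace_smul, trace_vecMulVec, mul_comm]

lemma sbMin_le (sb : ℕ → ℝ) {t i : ℕ} (hi : 1 ≤ i) (hit : i ≤ t) : sbMin sb t ≤ sb i :=
  csInf_le ((Set.finite_Icc 1 t).image sb).bddBelow ⟨i, ⟨hi, hit⟩, rfl⟩

lemma sbMin_mem (sb : ℕ → ℝ) {t : ℕ} (ht : 1 ≤ t) : ∃ i, 1 ≤ i ∧ i ≤ t ∧ sb i = sbMin sb t := by
  have h : sInf (sb '' Set.Icc 1 t) ∈ sb '' Set.Icc 1 t :=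
    Set.Nonempty.csInf_mem ⟨sb 1, 1, ⟨le_rfl, ht⟩, rfl⟩ ((Set.finite_Icc 1 t).image sb)
  obtain ⟨i, hi, he⟩ := h
  exact ⟨i, hi.1, hi.2, he⟩

lemma sbMin_one (sb : ℕ → ℝ) : sbMin sb 1 = sb 1 := by simp [sbMin]

lemma sbMin_succ (sb : ℕ → ℝ) {t : ℕ} (ht : 1 ≤ t) :
    sbMin sb (t + 1) = min (sbMin sb t) (sb (t + 1)) := by
  apply le_antisymm
  · apply le_min
    · obtain ⟨i, h1, h2, h3⟩ := sbMin_mem sb ht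
      rw [← h3]; exact sbMin_le sb h1 (by omega)
    · exact sbMin_le sb (by omega) le_rfl
  · obtain ⟨i, h1, h2, h3⟩ := sbMin_mem sb (t := t + 1) (by omega)
    rw [← h3]
    rcases Nat.lt_or_ge t i with h | h
    · have : i = t + 1 := by omega
      rw [this]; exact min_le_right _ _
    · exact (min_le_left _ _).trans (sbMin_le sb h1 h)

lemma sbMin_pos {sb : ℕ → ℝ} (hsb : ∀ t, 1 ≤ t → 0 < sb t) {t : ℕ} (ht : 1 ≤ t) :
    0 < sbMin sb t := by
  obtain ⟨i, h1, _, h3⟩ := sbMin_mem sb ht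
  rw [← h3]; exact hsb i h1

lemma potential {lam A : ℝ} (hlam : 0 < lam) {a : ℕ → Fin d → ℝ} {sb : ℕ → ℝ}
    (hsb : ∀ t, 1 ≤ t → 0 < sb t) (ha : ∀ t, 1 ≤ t → √(a t ⬝ᵥ a t) ≤ A) {t : ℕ} (ht : 1 ≤ t) :
    ∑ i ∈ Finset.Icc 1 t, Real.log (1 + w2 lam a sb i) ≤
      d * Real.log (1 + (t : ℝ) * A ^ 2 / ((d : ℝ) * lam * (sbMin sb t) ^ 2)) := by
  rcases Nat.eq_zero_or_pos d with hd | hd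
  · subst hd
    apply le_of_eq
    simp [w2, matNorm]
  have hd' : (0 : ℝ) < d := by exact_mod_cast hd
  have hZ := wGram_posDef hlam a sb t
  have hm := sbMin_pos hsb ht
  have h1 := log_det_le hZ hd
  rw [log_det_wGram hlam] at h1
  have h2 : (wGram lam a sb t).trace ≤ d * lam + t * (A ^ 2 / sbMin sb t ^ 2) := by
    rw [trace_wGram]
    have : ∑ i ∈ Finset.Icc 1 t, ((sb i) ^ 2)⁻¹ * (a i ⬝ᵥ a i) ≤
        ∑ i ∈ Finset.Icc 1 t, A ^ 2 / sbMin sb t ^ 2 := by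
      apply Finset.sum_le_sum
      intro i hi
      rw [Finset.mem_Icc] at hi
      rw [inv_mul_eq_div]
      have h3 : a i ⬝ᵥ a i ≤ A ^ 2 := by
        have h0 : 0 ≤ a i ⬝ᵥ a i := by simpa using dotProduct_star_self_nonneg (a i)
        rw [← Real.sq_sqrt h0]
        exact pow_le_pow_left₀ (Real.sqrt_nonneg _) (ha i hi.1) 2
      apply div_le_div₀ (sq_nonneg _) h3 (by positivity)
      exact pow_le_pow_left₀ hm.le (sbMin_le sb hi.1 hi.2) 2
    rw [Finset.sum_const, Nat.card_Icc] at this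
    simp only [Nat.add_sub_cancel, nsmul_eq_mul] at this
    linarith
  have h3 : (wGram lam a sb t).trace / d ≤
      lam * (1 + (t : ℝ) * A ^ 2 / ((d : ℝ) * lam * (sbMin sb t) ^ 2)) := by
    rw [div_le_iff₀ hd']
    refine h2.trans (le_of_eq ?_)
    field_simp
  haveI : Nonempty (Fin d) := ⟨⟨0, hd⟩⟩
  have h4 : 0 < (wGram lam a sb t).trace / d := div_pos hZ.trace_pos hd'
  have h5 := Real.log_le_log h4 h3
  rw [Real.log_mul hlam.ne' (by positivity)] at h5
  have h6 := mul_le_mul_of_nonneg_left h5 hd'.le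
  linarith

lemma log_ge {x : ℝ} (hx : 0 ≤ x) : x / (1 + x) ≤ Real.log (1 + x) := by
  have h := Real.one_sub_inv_le_log_of_pos (by linarith : 0 < 1 + x)
  have : x / (1 + x) = 1 - (1 + x)⁻¹ := by field_simp; ring
  rw [this]; exact h

lemma min_le_log {x : ℝ} (hx : 0 ≤ x) : min 1 x ≤ 2 * Real.log (1 + x) := by
  have h := log_ge hx
  have h2 : min 1 x / 2 ≤ x / (1 + x) := by
    rw [div_le_div_iff₀ (by norm_num) (by linarith)]
    rcases le_total 1 x with h1 | h1
    · rw [min_eq_left h1]; linarith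
    · rw [min_eq_right h1]; nlinarith
  linarith

lemma bias_aux {lam B : ℝ} (hlam : 0 < lam) (a : ℕ → Fin d → ℝ) (sb : ℕ → ℝ) (t : ℕ)
    (μs : Fin d → ℝ) (hμB : √(μs ⬝ᵥ μs) ≤ B) :
    matNorm (wGram lam a sb t)⁻¹ (lam • μs) ≤ √lam * B := by
  have hZ := wGram_posDef hlam a sb t
  have hB : 0 ≤ B := (Real.sqrt_nonneg _).trans hμB
  have h0 : ∀ y : Fin d → ℝ, 0 ≤ y ⬝ᵥ y := fun y => by simpa using dotProduct_star_self_nonneg y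
  have hge : ∀ y : Fin d → ℝ, lam * (y ⬝ᵥ y) ≤ y ⬝ᵥ (wGram lam a sb t *ᵥ y) := by
    intro y
    induction t with
    | zero => rw [wGram_zero, smul_mulVec, one_mulVec, dotProduct_smul, smul_eq_mul]
    | succ t ih =>
      rw [wGram_succ, add_mulVec, dotProduct_add]
      have := psd_nonneg (psd_vec (xs a sb (t + 1))) y
      linarith [ih (wGram_posDef hlam a sb t)]
  set Z := wGram lam a sb t
  apply le_of_sq_le_sq _ (by positivity)
  rw [matNorm_sq hZ.inv.posSemidef, mul_pow, Real.sq_sqrt hlam.le, mulVec_smul, dotProduct_smul,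
    smul_dotProduct, smul_eq_mul, smul_eq_mul]
  set y := Z⁻¹ *ᵥ μs with hy
  have h1 := hge y
  rw [hy, mulVec_inv_mulVec hZ, ← hy] at h1
  have h2 := cs (M := (1 : Matrix (Fin d) (Fin d) ℝ)) Matrix.PosSemidef.one μs y
  rw [one_mulVec, one_mulVec] at h2
  rw [dotProduct_comm y μs] at h1
  have h3 : μs ⬝ᵥ μs ≤ B ^ 2 := by
    rw [← Real.sq_sqrt (h0 μs)]
    exact pow_le_pow_left₀ (Real.sqrt_nonneg _) hμB 2
  have hq : 0 ≤ μs ⬝ᵥ y := (mul_nonneg hlam.le (h0 y)).trans h1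
  have h4 : lam * (μs ⬝ᵥ y) ≤ μs ⬝ᵥ μs := by
    rcases hq.eq_or_lt with he | hp
    · rw [← he, mul_zero]; exact h0 μs
    · have h5 : (μs ⬝ᵥ y) * (lam * (μs ⬝ᵥ y)) ≤ (μs ⬝ᵥ y) * (μs ⬝ᵥ μs) := by
        nlinarith [mul_le_mul_of_nonneg_left h1 (h0 μs)]
      exact le_of_mul_le_mul_left h5 hp
  exact mul_le_mul_of_nonneg_left (h4.trans h3) hlam.le

lemma sum_vec (a : ℕ → Fin d → ℝ) (sb : ℕ → ℝ) (lam : ℝ) (t : ℕ) (μs : Fin d → ℝ) :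
    ∑ i ∈ Finset.Icc 1 t, (((sb i) ^ 2)⁻¹ * (μs ⬝ᵥ a i)) • a i =
      wGram lam a sb t *ᵥ μs - lam • μs := by
  unfold wGram
  rw [add_mulVec, smul_mulVec, one_mulVec, add_sub_cancel_left, sum_mulVec]
  apply Finset.sum_congr rfl
  intro i _
  rw [smul_mulVec, vecMulVec_mulVec]
  ext j
  simp only [Pi.smul_apply, smul_eq_mul, MulOpposite.smul_eq_mul_unop, MulOpposite.unop_op]
  rw [dotProduct_comm]; ring

lemma conf {lam B : ℝ} (hlam : 0 < lam) (a : ℕ → Fin d → ℝ) (sb ε : ℕ → ℝ) (t : ℕ)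
    (μs : Fin d → ℝ) (hμB : √(μs ⬝ᵥ μs) ≤ B) :
    matNorm (wGram lam a sb t) (μs - wEst lam a sb (fun i => μs ⬝ᵥ a i + ε i) t) ≤
      matNorm (wGram lam a sb t)⁻¹ (nS a sb ε t) + √lam * B := by
  have hZ := wGram_posDef hlam a sb t
  have e1 : ∑ i ∈ Finset.Icc 1 t, (((sb i) ^ 2)⁻¹ * (μs ⬝ᵥ a i + ε i)) • a i =
      wGram lam a sb t *ᵥ μs - lam • μs + nS a sb ε t := by
    rw [← sum_vec a sb lam t μs, nS, ← Finset.sum_add_distrib]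
    apply Finset.sum_congr rfl
    intro i _
    ext j
    simp only [xs, Pi.smul_apply, Pi.add_apply, smul_eq_mul]
    rw [sq, mul_inv]; ring
  have e2 : μs - wEst lam a sb (fun i => μs ⬝ᵥ a i + ε i) t =
      (wGram lam a sb t)⁻¹ *ᵥ (-(nS a sb ε t) + lam • μs) := by
    unfold wEst
    rw [e1, mulVec_add, mulVec_sub, inv_mulVec_mulVec hZ, mulVec_add, mulVec_neg]
    abel
  rw [e2, matNorm_inv hZ]
  refine (matNorm_add hZ.inv.posSemidef _ _).trans ?_
  rw [matNorm_neg]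
  exact add_le_add le_rfl (bias_aux hlam a sb t μs hμB)

lemma nS_rec {lam : ℝ} (hlam : 0 < lam) (a : ℕ → Fin d → ℝ) (sb ε : ℕ → ℝ) {t : ℕ}
    (ht : 1 ≤ t) :
    matNorm (wGram lam a sb t)⁻¹ (nS a sb ε t) ^ 2 ≤
      matNorm (wGram lam a sb (t - 1))⁻¹ (nS a sb ε (t - 1)) ^ 2 +
      2 * (xs a sb t ⬝ᵥ ((wGram lam a sb (t - 1))⁻¹ *ᵥ nS a sb ε (t - 1)) / (1 + w2 lam a sb t)) *
        (ε t / sb t) +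
      w2 lam a sb t / (1 + w2 lam a sb t) * (ε t / sb t) ^ 2 := by
  obtain ⟨s, rfl⟩ : ∃ s, t = s + 1 := ⟨t - 1, by omega⟩
  have h := rank_one (wGram_posDef hlam a sb s) (xs a sb (s + 1)) (nS a sb ε s)
    (ε (s + 1) / sb (s + 1))
  have e : nS a sb ε (s + 1) = nS a sb ε s + (ε (s + 1) / sb (s + 1)) • xs a sb (s + 1) := by
    unfold nS; rw [Finset.sum_Icc_succ_top (by omega)]
  rw [wGram_succ, e]
  exact h

lemma u_bound {lam : ℝ} (hlam : 0 < lam) (a : ℕ → Fin d → ℝ) (sb ε : ℕ → ℝ) (t : ℕ) :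
    (xs a sb t ⬝ᵥ ((wGram lam a sb (t - 1))⁻¹ *ᵥ nS a sb ε (t - 1)) / (1 + w2 lam a sb t)) ^ 2 ≤
      (w2 lam a sb t / (1 + w2 lam a sb t)) * (1 - w2 lam a sb t / (1 + w2 lam a sb t)) *
        matNorm (wGram lam a sb (t - 1))⁻¹ (nS a sb ε (t - 1)) ^ 2 := by
  have hZ := wGram_posDef hlam a sb (t - 1)
  have h := cs hZ.inv.posSemidef (xs a sb t) (nS a sb ε (t - 1))
  rw [← matNorm_sq hZ.inv.posSemidef, ← matNorm_sq hZ.inv.posSemidef] at h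
  change _ ≤ w2 lam a sb t * _ at h
  have h0 := w2_nonneg lam a sb t
  generalize w2 lam a sb t = w at *
  have e : w / (1 + w) * (1 - w / (1 + w)) *
      matNorm (wGram lam a sb (t - 1))⁻¹ (nS a sb ε (t - 1)) ^ 2 =
      (w * matNorm (wGram lam a sb (t - 1))⁻¹ (nS a sb ε (t - 1)) ^ 2) / (1 + w) ^ 2 := by
    field_simp; ring
  rw [e, div_pow]
  gcongr

/-- Deterministic regret bound on the good event. -/
lemma regret {lam A B R δ : ℝ} (hlam : 0 < lam) {a astar : ℕ → Fin d → ℝ} {sb ε : ℕ → ℝ}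
    {D : ℕ → Set (Fin d → ℝ)} {μs : Fin d → ℝ}
    (hsb : ∀ t, 1 ≤ t → 0 < sb t)
    (hD : ∀ t, 1 ≤ t → ∀ v ∈ D t, √(v ⬝ᵥ v) ≤ A ∧ |v ⬝ᵥ μs| ≤ 1)
    (ha : ∀ t, 1 ≤ t → a t ∈ D t) (hastar : ∀ t, 1 ≤ t → astar t ∈ D t)
    (hopt : ∀ t, 1 ≤ t →
      ∃ μt ∈ confSet lam B (betaHat d A R lam δ sb (t - 1)) (wGram lam a sb (t - 1))
          (wEst lam a sb (fun i => μs ⬝ᵥ a i + ε i) (t - 1)),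
        ∀ v ∈ D t,
          ∀ μ ∈ confSet lam B (betaHat d A R lam δ sb (t - 1)) (wGram lam a sb (t - 1))
              (wEst lam a sb (fun i => μs ⬝ᵥ a i + ε i) (t - 1)),
            v ⬝ᵥ μ ≤ a t ⬝ᵥ μt)
    (T : ℕ) (hT : 1 ≤ T)
    (hgood : ∀ t, 1 ≤ t → t ≤ T → μs ∈ confSet lam B (betaHat d A R lam δ sb (t - 1))
      (wGram lam a sb (t - 1)) (wEst lam a sb (fun i => μs ⬝ᵥ a i + ε i) (t - 1))) :
    ∑ t ∈ Finset.Icc 1 T, (astar t ⬝ᵥ μs - a t ⬝ᵥ μs) ≤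
      4 * (d : ℝ) * Real.log (1 + (T : ℝ) * A ^ 2 / ((d : ℝ) * lam * (sbMin sb T) ^ 2)) +
        2 * √(2 * (d : ℝ) *
            Real.log (1 + (T : ℝ) * A ^ 2 / ((d : ℝ) * lam * (sbMin sb T) ^ 2))) *
          √(∑ t ∈ Finset.Icc 1 T,
            (betaHat d A R lam δ sb (t - 1) + √lam * B) ^ 2 * (sb t) ^ 2) := by
  set β : ℕ → ℝ := fun t => betaHat d A R lam δ sb (t - 1) + √lam * B with hβ
  set ι := (d : ℝ) * Real.log (1 + (T : ℝ) * A ^ 2 / ((d : ℝ) * lam * (sbMin sb T) ^ 2)) with hι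
  have hstep : ∀ t ∈ Finset.Icc 1 T, astar t ⬝ᵥ μs - a t ⬝ᵥ μs ≤
      2 * min 1 (w2 lam a sb t) + 2 * ((β t * sb t) * √(min 1 (w2 lam a sb t))) := by
    intro t ht
    rw [Finset.mem_Icc] at ht
    obtain ⟨μt, hμt, hmax⟩ := hopt t ht.1
    have hg := hgood t ht.1 ht.2
    have h1 := hmax _ (hastar t ht.1) _ hg
    have hZ := wGram_posDef hlam a sb (t - 1)
    have hs := hsb t ht.1
    have hβ0 : 0 ≤ β t := (matNorm_nonneg _ _).trans hg
    have hr2 : astar t ⬝ᵥ μs - a t ⬝ᵥ μs ≤ 2 := by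
      have h3 := abs_le.mp (hD t ht.1 _ (hastar t ht.1)).2
      have h4 := abs_le.mp (hD t ht.1 _ (ha t ht.1)).2
      linarith [h3.2, h4.1]
    have hw : 0 ≤ matNorm (wGram lam a sb (t - 1))⁻¹ (xs a sb t) := matNorm_nonneg _ _
    have hrw : astar t ⬝ᵥ μs - a t ⬝ᵥ μs ≤
        2 * ((β t * sb t) * matNorm (wGram lam a sb (t - 1))⁻¹ (xs a sb t)) := by
      have h5 : astar t ⬝ᵥ μs - a t ⬝ᵥ μs ≤ a t ⬝ᵥ (μt - μs) := by
        rw [dotProduct_sub]; linarith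
      have h6 : a t = sb t • xs a sb t := by
        rw [xs, smul_smul, mul_inv_cancel₀ hs.ne', one_smul]
      have h7 := dual_le hZ (xs a sb t) (μt - μs)
      have h8 : matNorm (wGram lam a sb (t - 1)) (μt - μs) ≤ 2 * β t := by
        set c := wEst lam a sb (fun i => μs ⬝ᵥ a i + ε i) (t - 1)
        have e : μt - μs = (μt - c) + -(μs - c) := by abel
        rw [e]
        refine (matNorm_add hZ.posSemidef _ _).trans ?_
        rw [matNorm_neg]
        have i1 : matNorm (wGram lam a sb (t - 1)) (μt - c) ≤ β t := hμt
        have i2 : matNorm (wGram lam a sb (t - 1)) (μs - c) ≤ β t := hg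
        linarith
      have h6' : a t ⬝ᵥ (μt - μs) = sb t * (xs a sb t ⬝ᵥ (μt - μs)) := by
        conv_lhs => rw [h6]
        rw [smul_dotProduct, smul_eq_mul]
      rw [h6'] at h5
      have h9 := mul_le_mul_of_nonneg_left (h7.trans (mul_le_mul_of_nonneg_left h8 hw)) hs.le
      linarith
    rcases le_total 1 (w2 lam a sb t) with hc | hc
    · rw [min_eq_left hc]
      have : 0 ≤ 2 * ((β t * sb t) * √1) := by positivity
      linarith
    · rw [min_eq_right hc]
      have e : √(w2 lam a sb t) = matNorm (wGram lam a sb (t - 1))⁻¹ (xs a sb t) :=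
        Real.sqrt_sq hw
      rw [e]
      linarith [w2_nonneg lam a sb t]
  have hm0 : ∀ t, 0 ≤ min 1 (w2 lam a sb t) := fun t => le_min zero_le_one (w2_nonneg _ _ _ _)
  have hsumm : ∑ t ∈ Finset.Icc 1 T, min 1 (w2 lam a sb t) ≤ 2 * ι := by
    have h1 := potential hlam hsb (fun t ht => (hD t ht _ (ha t ht)).1) hT
    calc _ ≤ ∑ t ∈ Finset.Icc 1 T, 2 * Real.log (1 + w2 lam a sb t) :=
          Finset.sum_le_sum fun t _ => min_le_log (w2_nonneg _ _ _ _)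
      _ = 2 * ∑ t ∈ Finset.Icc 1 T, Real.log (1 + w2 lam a sb t) := by rw [Finset.mul_sum]
      _ ≤ 2 * ι := by linarith
  have hcs := Real.sum_mul_le_sqrt_mul_sqrt (Finset.Icc 1 T) (fun t => β t * sb t)
    (fun t => √(min 1 (w2 lam a sb t)))
  have e1 : ∑ t ∈ Finset.Icc 1 T, √(min 1 (w2 lam a sb t)) ^ 2 =
      ∑ t ∈ Finset.Icc 1 T, min 1 (w2 lam a sb t) :=
    Finset.sum_congr rfl fun t _ => Real.sq_sqrt (hm0 t)
  have e2 : ∑ t ∈ Finset.Icc 1 T, (β t * sb t) ^ 2 = ∑ t ∈ Finset.Icc 1 T, β t ^ 2 * sb t ^ 2 :=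
    Finset.sum_congr rfl fun t _ => mul_pow _ _ _
  rw [e1, e2] at hcs
  have h2 : ∑ t ∈ Finset.Icc 1 T, (β t * sb t) * √(min 1 (w2 lam a sb t)) ≤
      √(2 * ι) * √(∑ t ∈ Finset.Icc 1 T, β t ^ 2 * sb t ^ 2) := by
    refine hcs.trans ?_
    rw [mul_comm]
    exact mul_le_mul_of_nonneg_right (Real.sqrt_le_sqrt hsumm) (Real.sqrt_nonneg _)
  calc _ ≤ ∑ t ∈ Finset.Icc 1 T, (2 * min 1 (w2 lam a sb t) +
        2 * ((β t * sb t) * √(min 1 (w2 lam a sb t)))) := Finset.sum_le_sum hstep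
    _ = 2 * ∑ t ∈ Finset.Icc 1 T, min 1 (w2 lam a sb t) +
        2 * ∑ t ∈ Finset.Icc 1 T, (β t * sb t) * √(min 1 (w2 lam a sb t)) := by
        rw [Finset.sum_add_distrib, Finset.mul_sum, Finset.mul_sum]
    _ ≤ 4 * ι + 2 * (√(2 * ι) * √(∑ t ∈ Finset.Icc 1 T, β t ^ 2 * sb t ^ 2)) := by linarith
    _ = _ := by
        have e3 : 2 * ι = 2 * (d : ℝ) *
            Real.log (1 + (T : ℝ) * A ^ 2 / ((d : ℝ) * lam * (sbMin sb T) ^ 2)) := by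
          rw [hι]; ring
        rw [e3, hι]; ring

end process

section meas
variable {Ω : Type*} {m' : MeasurableSpace Ω} {d : ℕ}

lemma meas_inv {M : Ω → Matrix (Fin d) (Fin d) ℝ} (hM : ∀ j k, Measurable fun ω => M ω j k)
    (j k : Fin d) : Measurable fun ω => (M ω)⁻¹ j k := by
  have hdet : Measurable fun ω => (M ω).det := by
    simp only [Matrix.det_apply]
    refine Finset.measurable_fun_sum _ fun σ _ => ?_
    exact (Finset.measurable_fun_prod _ fun i _ => hM _ _).const_smul _
  have hadj : Measurable fun ω => (M ω).adjugate j k := by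
    simp only [Matrix.adjugate_apply, Matrix.det_apply]
    refine Finset.measurable_fun_sum _ fun σ _ => ?_
    refine (Finset.measurable_fun_prod _ fun i _ => ?_).const_smul _
    by_cases h : σ i = k
    · simp only [h, Matrix.updateRow_self]; exact measurable_const
    · simp only [Matrix.updateRow_ne h]; exact hM _ _
  simp only [Matrix.inv_def, Matrix.smul_apply, Ring.inverse_eq_inv', smul_eq_mul]
  exact hdet.inv.mul hadj

lemma meas_dot {x y : Ω → Fin d → ℝ} (hx : ∀ j, Measurable fun ω => x ω j)
    (hy : ∀ j, Measurable fun ω => y ω j) : Measurable fun ω => x ω ⬝ᵥ y ω := by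
  simp only [dotProduct]
  exact Finset.measurable_fun_sum _ fun i _ => (hx i).mul (hy i)

lemma meas_mulVec {M : Ω → Matrix (Fin d) (Fin d) ℝ} {y : Ω → Fin d → ℝ}
    (hM : ∀ j k, Measurable fun ω => M ω j k)
    (hy : ∀ j, Measurable fun ω => y ω j) (j : Fin d) : Measurable fun ω => (M ω *ᵥ y ω) j := by
  simp only [mulVec]
  exact meas_dot (fun k => hM j k) hy

lemma meas_matNorm {M : Ω → Matrix (Fin d) (Fin d) ℝ} {y : Ω → Fin d → ℝ}
    (hM : ∀ j k, Measurable fun ω => M ω j k)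
    (hy : ∀ j, Measurable fun ω => y ω j) : Measurable fun ω => matNorm (M ω) (y ω) := by
  simp only [matNorm]
  exact (meas_dot hy (meas_mulVec hM hy)).sqrt

lemma meas_xs {a : ℕ → Ω → Fin d → ℝ} {sb : ℕ → Ω → ℝ} {t : ℕ}
    (ha : Measurable (a t)) (hsb : Measurable (sb t)) (j : Fin d) :
    Measurable fun ω => xs (fun i => a i ω) (fun i => sb i ω) t j := by
  simp only [xs, Pi.smul_apply, smul_eq_mul]
  exact hsb.inv.mul ((measurable_pi_apply j).comp ha)

lemma meas_nS {a : ℕ → Ω → Fin d → ℝ} {sb ε : ℕ → Ω → ℝ} {t : ℕ}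
    (ha : ∀ i, 1 ≤ i → i ≤ t → Measurable (a i)) (hsb : ∀ i, 1 ≤ i → i ≤ t → Measurable (sb i))
    (hε : ∀ i, 1 ≤ i → i ≤ t → Measurable (ε i)) (j : Fin d) :
    Measurable fun ω => nS (fun i => a i ω) (fun i => sb i ω) (fun i => ε i ω) t j := by
  simp only [nS, Finset.sum_apply, Pi.smul_apply, smul_eq_mul]
  refine Finset.measurable_fun_sum _ fun i hi => ?_
  rw [Finset.mem_Icc] at hi
  exact ((hε i hi.1 hi.2).div (hsb i hi.1 hi.2)).mul
    (meas_xs (ha i hi.1 hi.2) (hsb i hi.1 hi.2) j)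

lemma meas_wGram (lam : ℝ) {a : ℕ → Ω → Fin d → ℝ} {sb : ℕ → Ω → ℝ} {t : ℕ}
    (ha : ∀ i, 1 ≤ i → i ≤ t → Measurable (a i)) (hsb : ∀ i, 1 ≤ i → i ≤ t → Measurable (sb i))
    (j k : Fin d) :
    Measurable fun ω => wGram lam (fun i => a i ω) (fun i => sb i ω) t j k := by
  simp only [wGram, Matrix.add_apply, Matrix.smul_apply, Matrix.sum_apply, vecMulVec_apply,
    smul_eq_mul]
  refine measurable_const.add (Finset.measurable_fun_sum _ fun i hi => ?_)
  rw [Finset.mem_Icc] at hi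
  have h := ha i hi.1 hi.2
  exact ((hsb i hi.1 hi.2).pow_const 2).inv.mul
    (((measurable_pi_apply j).comp h).mul ((measurable_pi_apply k).comp h))

lemma meas_sbMin {sb : ℕ → Ω → ℝ} {t : ℕ} (ht : 1 ≤ t)
    (hsb : ∀ i, 1 ≤ i → i ≤ t → Measurable (sb i)) :
    Measurable fun ω => sbMin (fun i => sb i ω) t := by
  induction t, ht using Nat.le_induction with
  | base => simp only [sbMin_one]; exact hsb 1 le_rfl le_rfl
  | succ t ht ih =>
    simp only [sbMin_succ _ ht]
    exact (ih fun i h1 h2 => hsb i h1 (by omega)).min (hsb _ (by omega) le_rfl)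

end meas

section final
variable {Ω : Type*} {m : MeasurableSpace Ω} {P : Measure Ω} [IsProbabilityMeasure P]
    {G : Filtration ℕ m} {d : ℕ}

lemma mkCore {lam R : ℝ} (hlam : 0 < lam) (hR : 0 ≤ R)
    {a : ℕ → Ω → Fin d → ℝ} {ε sb : ℕ → Ω → ℝ}
    (ha_meas : ∀ t, 1 ≤ t → Measurable[G t] (a t))
    (hsb_meas : ∀ t, 1 ≤ t → Measurable[G t] (sb t))
    (hsb_pos : ∀ t, 1 ≤ t → ∀ ω, 0 < sb t ω)
    (hε_meas : ∀ t, 1 ≤ t → Measurable[G (t + 1)] (ε t))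
    (hε_bdd : ∀ t, 1 ≤ t → ∀ᵐ ω ∂P, |ε t ω| ≤ R)
    (hε_mean : ∀ t, 1 ≤ t → P[ε t|G t] =ᵐ[P] 0)
    (hε_var : ∀ t, 1 ≤ t → ∀ᵐ ω ∂P, (P[(fun ω' => ε t ω' ^ 2)|G t]) ω ≤ (sb t ω) ^ 2) :
    CoreHyp P G R ε sb
      (fun t ω => w2 lam (fun i => a i ω) (fun i => sb i ω) t /
        (1 + w2 lam (fun i => a i ω) (fun i => sb i ω) t))
      (fun t ω => xs (fun i => a i ω) (fun i => sb i ω) t ⬝ᵥ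
        ((wGram lam (fun i => a i ω) (fun i => sb i ω) (t - 1))⁻¹ *ᵥ
          nS (fun i => a i ω) (fun i => sb i ω) (fun i => ε i ω) (t - 1)) /
        (1 + w2 lam (fun i => a i ω) (fun i => sb i ω) t))
      (fun t ω => matNorm (wGram lam (fun i => a i ω) (fun i => sb i ω) t)⁻¹
        (nS (fun i => a i ω) (fun i => sb i ω) (fun i => ε i ω) t))
      (fun t ω => R / sbMin (fun i => sb i ω) t) := by
  have hA : ∀ s t, t ≤ s → ∀ i, 1 ≤ i → i ≤ t → Measurable[G s] (a i) := fun s t hst i h1 h2 =>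
    (ha_meas i h1).mono (G.mono (h2.trans hst)) le_rfl
  have hS : ∀ s t, t ≤ s → ∀ i, 1 ≤ i → i ≤ t → Measurable[G s] (sb i) := fun s t hst i h1 h2 =>
    (hsb_meas i h1).mono (G.mono (h2.trans hst)) le_rfl
  have hE : ∀ s t, t + 1 ≤ s → ∀ i, 1 ≤ i → i ≤ t → Measurable[G s] (ε i) :=
    fun s t hst i h1 h2 => (hε_meas i h1).mono (G.mono (by omega)) le_rfl
  have hI : ∀ s t, t ≤ s → ∀ j k, Measurable[G s]
      fun ω => (wGram lam (fun i => a i ω) (fun i => sb i ω) t)⁻¹ j k := fun s t hst =>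
    meas_inv (m' := G s) (meas_wGram (m' := G s) lam (hA s t hst) (hS s t hst))
  have hN : ∀ s t, t + 1 ≤ s → ∀ j, Measurable[G s]
      fun ω => nS (fun i => a i ω) (fun i => sb i ω) (fun i => ε i ω) t j := fun s t hst =>
    meas_nS (m' := G s) (hA s t (by omega)) (hS s t (by omega)) (hE s t hst)
  have hX : ∀ t, 1 ≤ t → ∀ j, Measurable[G t]
      fun ω => xs (fun i => a i ω) (fun i => sb i ω) t j := fun t ht =>
    meas_xs (m' := G t) (ha_meas t ht) (hsb_meas t ht)
  have hW : ∀ t, 1 ≤ t → Measurable[G t]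
      fun ω => w2 lam (fun i => a i ω) (fun i => sb i ω) t := fun t ht => by
    unfold w2
    exact (meas_matNorm (m' := G t) (hI t (t - 1) (by omega)) (hX t ht)).pow_const 2
  have hmin : ∀ ω t, 1 ≤ t → 0 < sbMin (fun i => sb i ω) t := fun ω t ht =>
    sbMin_pos (fun t ht => hsb_pos t ht ω) ht
  refine
    { hε_meas := hε_meas
      hε_bdd := hε_bdd
      hε_mean := hε_mean
      hε_var := hε_var
      sb_meas := hsb_meas
      sb_pos := hsb_pos
      p_meas := fun t ht => (hW t ht).div (measurable_const.add (hW t ht))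
      p_nonneg := fun t ht ω => ?_
      p_le := fun t ht ω => ?_
      u_meas := fun t ht => ?_
      u_le := fun t ht ω => u_bound hlam _ _ _ t
      N_meas := fun t => ?_
      N_nonneg := fun t ω => matNorm_nonneg _ _
      N_zero := fun ω => ?_
      N_rec := fun t ht ω => nS_rec hlam _ _ _ ht
      ρ_meas := fun t ht => ?_
      ρ_mono := fun t ht ω => ?_
      ρ_ge := fun t ht ω => ?_ }
  · have := w2_nonneg lam (fun i => a i ω) (fun i => sb i ω) t
    positivity
  · have := w2_nonneg lam (fun i => a i ω) (fun i => sb i ω) t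
    rw [div_le_one (by linarith)]; linarith
  · exact (meas_dot (m' := G t) (hX t ht) (meas_mulVec (m' := G t) (hI t (t - 1) (by omega))
      (hN t (t - 1) (by omega)))).div (measurable_const.add (hW t ht))
  · exact meas_matNorm (m' := G (t + 1)) (hI _ _ (by omega)) (hN _ _ le_rfl)
  · simp [nS, matNorm]
  · exact measurable_const.div (meas_sbMin (m' := G t) ht (hS t t le_rfl))
  · have h1 : sbMin (fun i => sb i ω) (t + 1) ≤ sbMin (fun i => sb i ω) t := by
      rw [sbMin_succ _ ht]; exact min_le_left _ _
    exact div_le_div_of_nonneg_left hR (hmin ω _ (by omega)) h1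
  · have h1 := sbMin_le (fun i => sb i ω) ht (le_refl t)
    have h2 := hmin ω t ht
    rw [div_mul_eq_mul_div, le_div_iff₀ h2]
    exact mul_le_mul_of_nonneg_left h1 hR

lemma ell_ge {δ : ℝ} (hδ0 : 0 < δ) (hδ1 : δ < 1) {t : ℕ} (ht : 1 ≤ t) :
    1 ≤ Real.log (4 * (t : ℝ) ^ 2 / δ) := by
  have ht' : (1 : ℝ) ≤ t := by exact_mod_cast ht
  rw [Real.le_log_iff_exp_le (by positivity), le_div_iff₀ hδ0]
  have := Real.exp_one_lt_d9
  nlinarith [Real.exp_pos 1]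

lemma tail_num {δ : ℝ} (hδ0 : 0 < δ) (hδ1 : δ < 1) {t : ℕ} (ht : 1 ≤ t) :
    t * Real.exp (-(5 / 2) * Real.log (4 * (t : ℝ) ^ 2 / δ)) ≤ δ * (1 / t - 1 / (t + 1)) := by
  have ht' : (1 : ℝ) ≤ t := by exact_mod_cast ht
  have hl := ell_ge hδ0 hδ1 ht
  have h1 : Real.exp (-(5 / 2) * Real.log (4 * (t : ℝ) ^ 2 / δ)) ≤
      ((4 * (t : ℝ) ^ 2 / δ) ^ 2)⁻¹ := by
    have h2 : ((4 * (t : ℝ) ^ 2 / δ) ^ 2)⁻¹ =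
        Real.exp (-2 * Real.log (4 * (t : ℝ) ^ 2 / δ)) := by
      have h3 : (0 : ℝ) < 4 * (t : ℝ) ^ 2 / δ := by positivity
      rw [neg_mul, Real.exp_neg, two_mul, Real.exp_add, Real.exp_log h3, sq]
    rw [h2]
    apply Real.exp_le_exp.mpr
    linarith
  have e1 : δ * (1 / (t : ℝ) - 1 / (t + 1)) = δ / (t * (t + 1)) := by field_simp; ring
  have e2 : (t : ℝ) * ((4 * (t : ℝ) ^ 2 / δ) ^ 2)⁻¹ = δ ^ 2 / (16 * t ^ 3) := by field_simp; norm_num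
  rw [e1]
  refine (mul_le_mul_of_nonneg_left h1 (by positivity)).trans ?_
  rw [e2]
  have h5 : δ ^ 2 ≤ δ := by nlinarith
  apply div_le_div₀ hδ0.le h5 (by positivity)
  nlinarith [pow_le_pow_right₀ ht' (show 2 ≤ 3 by norm_num)]

lemma tele {δ : ℝ} (hδ0 : 0 < δ) (T : ℕ) :
    ∑ t ∈ Finset.Icc 1 T, δ * (1 / (t : ℝ) - 1 / (t + 1)) ≤ δ := by
  have h : ∑ t ∈ Finset.Icc 1 T, δ * (1 / (t : ℝ) - 1 / (t + 1)) = δ * (1 - 1 / (T + 1)) := by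
    induction T with
    | zero => simp
    | succ n ih =>
      rw [Finset.sum_Icc_succ_top (by omega), ih]; push_cast; ring
  rw [h]
  have : (0 : ℝ) ≤ 1 / (T + 1) := by positivity
  nlinarith

lemma bb_le {lam A R δ : ℝ} (hlam : 0 < lam) (hδ0 : 0 < δ) (hδ1 : δ < 1)
    {a : ℕ → Fin d → ℝ} {sb : ℕ → ℝ}
    (hsb : ∀ t, 1 ≤ t → 0 < sb t) (ha : ∀ t, 1 ≤ t → √(a t ⬝ᵥ a t) ≤ A) {t : ℕ} (ht : 1 ≤ t) :
    4 * (2 * √((∑ i ∈ Finset.Icc 1 t, w2 lam a sb i / (1 + w2 lam a sb i)) *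
        Real.log (4 * (t : ℝ) ^ 2 / δ)) + R / sbMin sb t * Real.log (4 * (t : ℝ) ^ 2 / δ)) ≤
      betaHat d A R lam δ sb t := by
  have hl := ell_ge hδ0 hδ1 ht
  have hp := potential hlam hsb ha ht
  have h1 : ∑ i ∈ Finset.Icc 1 t, w2 lam a sb i / (1 + w2 lam a sb i) ≤
      ∑ i ∈ Finset.Icc 1 t, Real.log (1 + w2 lam a sb i) :=
    Finset.sum_le_sum fun i _ => log_ge (w2_nonneg _ _ _ _)
  have h2 := Real.sqrt_le_sqrt
    (mul_le_mul_of_nonneg_right (h1.trans hp) (zero_le_one.trans hl))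
  rw [betaHat, if_neg (by omega)]
  linarith

end final

end WOFUL

/-- Regret bound for Weighted OFUL. -/
theorem statement4 {Ω : Type*} {m : MeasurableSpace Ω} (P : Measure Ω) [IsProbabilityMeasure P]
    (G : Filtration ℕ m) {d : ℕ}
    (lam δ B A R : ℝ) (μs : Fin d → ℝ)
    (hlam : 0 < lam) (hδ0 : 0 < δ) (hδ1 : δ < 1) (hμB : Real.sqrt (μs ⬝ᵥ μs) ≤ B)
    (D : ℕ → Ω → Set (Fin d → ℝ)) (a astar : ℕ → Ω → Fin d → ℝ) (ε sb : ℕ → Ω → ℝ)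
    (hD : ∀ t, 1 ≤ t → ∀ ω, ∀ v ∈ D t ω, Real.sqrt (v ⬝ᵥ v) ≤ A ∧ |v ⬝ᵥ μs| ≤ 1)
    (ha : ∀ t, 1 ≤ t → ∀ ω, a t ω ∈ D t ω)
    (hastar : ∀ t, 1 ≤ t → ∀ ω, astar t ω ∈ D t ω)
    (ha_meas : ∀ t, 1 ≤ t → Measurable[G t] (a t))
    (hsb_meas : ∀ t, 1 ≤ t → Measurable[G t] (sb t))
    (hsb_pos : ∀ t, 1 ≤ t → ∀ ω, 0 < sb t ω)
    (hε_meas : ∀ t, 1 ≤ t → Measurable[G (t + 1)] (ε t))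
    (hε_bdd : ∀ t, 1 ≤ t → ∀ᵐ ω ∂P, |ε t ω| ≤ R)
    (hε_mean : ∀ t, 1 ≤ t → P[ε t|G t] =ᵐ[P] 0)
    (hε_var : ∀ t, 1 ≤ t → ∀ᵐ ω ∂P, (P[(fun ω' => ε t ω' ^ 2)|G t]) ω ≤ (sb t ω) ^ 2)
    (hopt : ∀ t, 1 ≤ t → ∀ ω,
      ∃ μt ∈ confSet lam B (betaHat d A R lam δ (fun i => sb i ω) (t - 1))
          (wGram lam (fun i => a i ω) (fun i => sb i ω) (t - 1))
          (wEst lam (fun i => a i ω) (fun i => sb i ω)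
            (fun i => μs ⬝ᵥ a i ω + ε i ω) (t - 1)),
        ∀ v ∈ D t ω,
          ∀ μ ∈ confSet lam B (betaHat d A R lam δ (fun i => sb i ω) (t - 1))
              (wGram lam (fun i => a i ω) (fun i => sb i ω) (t - 1))
              (wEst lam (fun i => a i ω) (fun i => sb i ω)
                (fun i => μs ⬝ᵥ a i ω + ε i ω) (t - 1)),
            v ⬝ᵥ μ ≤ a t ω ⬝ᵥ μt)
    (T : ℕ) (hT : 1 ≤ T) :
    ENNReal.ofReal (1 - δ) ≤
      P {ω |
        ∑ t ∈ Finset.Icc 1 T, (astar t ω ⬝ᵥ μs - a t ω ⬝ᵥ μs) ≤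
          4 * (d : ℝ) *
              Real.log (1 + (T : ℝ) * A ^ 2 /
                ((d : ℝ) * lam * (sbMin (fun i => sb i ω) T) ^ 2)) +
            2 * Real.sqrt (2 * (d : ℝ) *
                Real.log (1 + (T : ℝ) * A ^ 2 /
                  ((d : ℝ) * lam * (sbMin (fun i => sb i ω) T) ^ 2))) *
              Real.sqrt (∑ t ∈ Finset.Icc 1 T,
                (betaHat d A R lam δ (fun i => sb i ω) (t - 1) + Real.sqrt lam * B) ^ 2 *
                  (sb t ω) ^ 2)} := by
  have hR : 0 ≤ R := by
    obtain ⟨ω, hω⟩ := (hε_bdd 1 le_rfl).exists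
    exact (abs_nonneg _).trans hω
  have H := WOFUL.mkCore (P := P) (G := G) (d := d) hlam hR ha_meas hsb_meas hsb_pos hε_meas
    hε_bdd hε_mean hε_var
  set N : ℕ → Ω → ℝ := fun t ω =>
    matNorm (wGram lam (fun i => a i ω) (fun i => sb i ω) t)⁻¹
      (WOFUL.nS (fun i => a i ω) (fun i => sb i ω) (fun i => ε i ω) t) with hNdef
  have hanorm : ∀ ω t, 1 ≤ t → Real.sqrt (a t ω ⬝ᵥ a t ω) ≤ A := fun ω t ht =>
    (hD t ht ω _ (ha t ht ω)).1
  -- the probability of each bad event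
  have hbad : ∀ t, 1 ≤ t →
      P {ω | betaHat d A R lam δ (fun i => sb i ω) t < N t ω} ≤
        ENNReal.ofReal (δ * (1 / (t : ℝ) - 1 / (t + 1))) := by
    intro t ht
    have hle := fun ω => WOFUL.bb_le (R := R) hlam hδ0 hδ1 (a := fun i => a i ω)
      (sb := fun i => sb i ω) (fun t ht => hsb_pos t ht ω) (hanorm ω) ht
    rcases hR.eq_or_lt with h0 | hpos
    · have hz := H.zero h0.symm t
      have : P {ω | betaHat d A R lam δ (fun i => sb i ω) t < N t ω} = 0 := by
        rw [← nonpos_iff_eq_zero, ← (ae_iff.mp hz)]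
        apply measure_mono
        intro ω hω hNz
        have h1 := hle ω
        have h2 : betaHat d A R lam δ (fun i => sb i ω) t < N t ω := hω
        have h3 : N t ω = 0 := hNz
        rw [h3] at h2
        rw [← h0, zero_div, zero_mul, add_zero] at h1
        have h4 := Real.sqrt_nonneg ((∑ i ∈ Finset.Icc 1 t,
          WOFUL.w2 lam (fun i => a i ω) (fun i => sb i ω) i /
            (1 + WOFUL.w2 lam (fun i => a i ω) (fun i => sb i ω) i)) *
              Real.log (4 * (t : ℝ) ^ 2 / δ))
        rw [← h0] at h2
        linarith
      rw [this]; exact zero_le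
    · refine le_trans ?_ ((H.tail hpos (WOFUL.ell_ge hδ0 hδ1 ht) t ht).trans
        (ENNReal.ofReal_le_ofReal (WOFUL.tail_num hδ0 hδ1 ht)))
      apply measure_mono
      intro ω hω
      exact lt_of_le_of_lt (hle ω) hω
  set good : Set Ω := {ω | ∀ t, 1 ≤ t → t ≤ T →
    N t ω ≤ betaHat d A R lam δ (fun i => sb i ω) t} with hgood
  have hgoodc : P goodᶜ ≤ ENNReal.ofReal δ := by
    have hsub : goodᶜ ⊆ ⋃ t ∈ Finset.Icc 1 T,
        {ω | betaHat d A R lam δ (fun i => sb i ω) t < N t ω} := by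
      intro ω hω
      simp only [hgood, Set.mem_compl_iff, Set.mem_setOf_eq, not_forall, not_le] at hω
      obtain ⟨t, h1, h2, h3⟩ := hω
      simp only [Set.mem_iUnion]
      exact ⟨t, Finset.mem_Icc.mpr ⟨h1, h2⟩, h3⟩
    refine (measure_mono hsub).trans ((measure_biUnion_finset_le _ _).trans ?_)
    refine (Finset.sum_le_sum fun t ht => hbad t (Finset.mem_Icc.mp ht).1).trans ?_
    rw [← ENNReal.ofReal_sum_of_nonneg]
    · exact ENNReal.ofReal_le_ofReal (WOFUL.tele hδ0 T)
    · intro t ht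
      have ht' : (1 : ℝ) ≤ t := by exact_mod_cast (Finset.mem_Icc.mp ht).1
      apply mul_nonneg hδ0.le
      have : 1 / ((t : ℝ) + 1) ≤ 1 / t :=
        one_div_le_one_div_of_le (by linarith) (by linarith)
      linarith
  have hgoodP : ENNReal.ofReal (1 - δ) ≤ P good := by
    rw [ENNReal.ofReal_sub _ hδ0.le, ENNReal.ofReal_one, tsub_le_iff_right]
    calc (1 : ENNReal) = P Set.univ := measure_univ.symm
      _ = P (good ∪ goodᶜ) := by rw [Set.union_compl_self]
      _ ≤ P good + P goodᶜ := measure_union_le _ _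
      _ ≤ P good + ENNReal.ofReal δ := add_le_add le_rfl hgoodc
  refine hgoodP.trans (measure_mono ?_)
  intro ω hω
  refine WOFUL.regret (D := fun t => D t ω) (a := fun i => a i ω) (astar := fun i => astar i ω)
    (sb := fun i => sb i ω) (ε := fun i => ε i ω) hlam (fun t ht => hsb_pos t ht ω)
    (fun t ht => hD t ht ω) (fun t ht => ha t ht ω) (fun t ht => hastar t ht ω)
    (fun t ht => hopt t ht ω) T hT ?_
  intro t ht htT
  have hc := WOFUL.conf hlam (fun i => a i ω) (fun i => sb i ω) (fun i => ε i ω) (t - 1) μs hμB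
  refine hc.trans (add_le_add ?_ le_rfl)
  rcases Nat.eq_zero_or_pos (t - 1) with h | h
  · rw [h]
    have h0 : N 0 ω = 0 := H.N_zero ω
    exact le_of_eq (h0.trans (by simp [betaHat]))
  · exact hω (t - 1) h (by omega)
end

section
/- Variance-aware regret bound (explicit form of the corollary): with σ̄_t = max{σ_t, R/√d} and λ = 1/B², for any 0 < δ < 1, with probability at least 1 − δ the pseudo-regret satisfies ∑_{t=1}^T (⟨a_t*, μ*⟩ − ⟨a_t, μ*⟩) ≤ 4d·ι₁ + 2·(8√(d·ι₁·ι₂) + 4√d·ι₂ + 1)·√(2d·ι₁)·√(TR²/d + ∑_{t=1}^T σ_t²), where ι₁ = log(1 + TA²B²/R²) and ι₂ = log(4T²/δ). -/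
open MeasureTheory Matrix Finset

lemma exp_le_quad {y : ℝ} (hy : y ≤ 7/5) : Real.exp y ≤ 1 + y + y ^ 2 := by
  rcases le_or_gt y (-1) with h | h
  · have : Real.exp y ≤ 1 := Real.exp_le_one_iff.2 (by linarith)
    nlinarith
  rcases le_or_gt y 1 with h1 | h1
  · have := Real.abs_exp_sub_one_sub_id_le (x := y) (abs_le.2 ⟨h.le, h1⟩)
    have := (abs_le.1 this).2
    linarith
  · have hz := Real.abs_exp_sub_one_sub_id_le (x := y - 1) (abs_le.2 ⟨by linarith, by linarith⟩)
    have hz := (abs_le.1 hz).2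
    have he : Real.exp y = Real.exp 1 * Real.exp (y - 1) := by
      rw [← Real.exp_add]; congr 1; ring
    have h2 := Real.exp_one_lt_d9
    rw [he]
    have h3 : Real.exp 1 * Real.exp (y-1) ≤ 2.7182818286 * (1 + (y-1) + (y-1)^2) := by
      apply mul_le_mul h2.le (by linarith) (Real.exp_pos _).le (by norm_num)
    nlinarith [mul_nonneg (sub_nonneg.2 h1.le) (sub_nonneg.2 hy)]

lemma sqrt_step {X D X' : ℝ} (hX : 0 < X) (h0 : 0 ≤ X') (h : X' ≤ X + D) :
    Real.sqrt X' ≤ Real.sqrt X + D / (2 * Real.sqrt X) := by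
  have hs : 0 < Real.sqrt X := Real.sqrt_pos.2 hX
  have hsq : Real.sqrt X ^ 2 = X := Real.sq_sqrt hX.le
  have e : Real.sqrt X + D / (2 * Real.sqrt X) = (2 * X + D) / (2 * Real.sqrt X) := by
    field_simp; nlinarith
  rw [e, le_div_iff₀ (by positivity)]
  have := Real.sq_sqrt h0
  nlinarith [sq_nonneg (Real.sqrt X' - Real.sqrt X)]

noncomputable def vv (h α : ℝ) : ℝ := h * α / (1 + h * α)
noncomputable def p0 (θ c h α ζ Q : ℝ) : ℝ := θ * h * ζ / ((1 + h * α) * Real.sqrt (Q + c ^ 2))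
noncomputable def q0 (θ c h α : ℝ) : ℝ := θ ^ 2 * h * vv h α + 3 * (θ * h * vv h α / (2 * c))

lemma vv_nonneg {h α : ℝ} (hh : 0 < h) (hα : 0 ≤ α) : 0 ≤ vv h α := by
  unfold vv; positivity

lemma vv_le_one {h α : ℝ} (hh : 0 < h) (hα : 0 ≤ α) : vv h α ≤ 1 := by
  have : 0 ≤ h * α := by positivity
  unfold vv; rw [div_le_one (by positivity)]; linarith

lemma p0_sq_le {θ c h α ζ Q : ℝ} (hc : 0 < c) (hh : 0 < h) (hα : 0 ≤ α) (hQ : 0 ≤ Q)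
    (hζ : ζ ^ 2 ≤ α * Q) :
    p0 θ c h α ζ Q ^ 2 ≤ θ ^ 2 * h * (h * α / (1 + h * α) ^ 2) := by
  have hx : 0 ≤ h * α := by positivity
  have hX : 0 < Q + c ^ 2 := by positivity
  unfold p0
  rw [div_pow, mul_pow (1 + h * α), Real.sq_sqrt hX.le, div_le_iff₀ (by positivity)]
  have : θ ^ 2 * h * (h * α / (1 + h * α) ^ 2) * ((1 + h * α) ^ 2 * (Q + c ^ 2))
     = (θ * h) ^ 2 * (α * (Q + c ^ 2)) := by
    field_simp
  rw [this, mul_pow]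
  apply mul_le_mul_of_nonneg_left _ (by positivity)
  nlinarith [sq_nonneg c, mul_nonneg hα (sq_nonneg c)]

lemma p0_abs {θ c h α ζ Q R : ℝ} (hc : 0 < c) (hh : 0 < h) (hα : 0 ≤ α) (hQ : 0 ≤ Q)
    (hζ : ζ ^ 2 ≤ α * Q) (hR : 0 < R) (h1 : θ ^ 2 * R ^ 2 * h ≤ (5/4) ^ 2) :
    |p0 θ c h α ζ Q| * R ≤ 5/8 := by
  have hx : 0 ≤ h * α := by positivity
  have hp := p0_sq_le (θ := θ) hc hh hα hQ hζ
  have h4 : h * α / (1 + h * α) ^ 2 ≤ 1/4 := by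
    rw [div_le_iff₀ (by positivity)]; nlinarith [sq_nonneg (h * α - 1)]
  apply abs_le_of_sq_le_sq' _ (by norm_num) |>.2
  rw [mul_pow, sq_abs]
  calc p0 θ c h α ζ Q ^ 2 * R ^ 2 ≤ θ ^ 2 * h * (1/4) * R ^ 2 := by
        apply mul_le_mul_of_nonneg_right _ (by positivity)
        exact hp.trans (mul_le_mul_of_nonneg_left h4 (by positivity))
    _ ≤ _ := by nlinarith

lemma q0_nonneg {θ c h α : ℝ} (hθ : 0 < θ) (hc : 0 < c) (hh : 0 < h) (hα : 0 ≤ α) :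
    0 ≤ q0 θ c h α := by
  have := vv_nonneg hh hα
  unfold q0; positivity

lemma q0_le {θ c h α R : ℝ} (hθ : 0 < θ) (hc : 0 < c) (hh : 0 < h) (hα : 0 ≤ α) (hR : 0 < R)
    (h1 : θ ^ 2 * R ^ 2 * h ≤ (5/4) ^ 2) (h2 : θ * R ^ 2 * h / (2 * c) ≤ 13/20) :
    q0 θ c h α * R ^ 2 ≤ 4 := by
  have h0 := vv_nonneg hh hα
  have h3 := vv_le_one hh hα
  unfold q0
  have e : (θ ^ 2 * h * vv h α + 3 * (θ * h * vv h α / (2 * c))) * R ^ 2 =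
    (θ ^ 2 * R ^ 2 * h + 3 * (θ * R ^ 2 * h / (2 * c))) * vv h α := by ring
  rw [e]
  have : 0 ≤ θ ^ 2 * R ^ 2 * h + 3 * (θ * R ^ 2 * h / (2 * c)) := by positivity
  nlinarith

lemma step_exp {θ c h α ζ Q Q' e R : ℝ} (hθ : 0 < θ) (hc : 0 < c) (hh : 0 < h) (hα : 0 ≤ α)
    (hQ : 0 ≤ Q) (hQ' : 0 ≤ Q') (hζ : ζ ^ 2 ≤ α * Q) (hR : 0 < R) (he : |e| ≤ R)
    (hrec : Q' ≤ Q + (2 * e * (h * ζ / (1 + h * α)) + e ^ 2 * (h * vv h α)))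
    (h1 : θ ^ 2 * R ^ 2 * h ≤ (5/4) ^ 2) (h2 : θ * R ^ 2 * h / (2 * c) ≤ 13/20) :
    Real.exp (θ * (Real.sqrt (Q' + c ^ 2) - Real.sqrt (Q + c ^ 2))) ≤
      1 + p0 θ c h α ζ Q * e + q0 θ c h α * e ^ 2 := by
  have hx : 0 ≤ h * α := by positivity
  have hX : 0 < Q + c ^ 2 := by positivity
  have hv0 := vv_nonneg hh hα
  have hv1 := vv_le_one hh hα
  have hp := p0_sq_le (θ := θ) hc hh hα hQ hζ
  have hpa := p0_abs (θ := θ) hc hh hα hQ hζ hR h1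
  set p := p0 θ c h α ζ Q with hpdef
  set v := vv h α with hv
  set b := θ * h * v / (2 * c) * e ^ 2 with hb
  have he2 : e ^ 2 ≤ R ^ 2 := by
    rw [← sq_abs]; exact pow_le_pow_left₀ (abs_nonneg _) he 2
  have hb0 : 0 ≤ b := by positivity
  have hb1 : b ≤ 13/20 := by
    refine le_trans ?_ h2
    have : b = θ * h / (2 * c) * (v * e ^ 2) := by rw [hb]; ring
    rw [this]
    have : θ * R ^ 2 * h / (2 * c) = θ * h / (2 * c) * (1 * R ^ 2) := by ring
    rw [this]
    apply mul_le_mul_of_nonneg_left _ (by positivity)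
    apply mul_le_mul hv1 he2 (by positivity) (by norm_num)
  have hpe : |p * e| ≤ 5/8 := by
    rw [abs_mul]; exact (mul_le_mul_of_nonneg_left he (abs_nonneg _)).trans hpa
  have hpe' := abs_le.1 hpe
  have hp2 : p ^ 2 ≤ θ ^ 2 * h * v := by
    refine hp.trans (mul_le_mul_of_nonneg_left ?_ (by positivity))
    rw [hv]; unfold vv
    apply div_le_div_of_nonneg_left hx (by positivity)
    nlinarith
  have hf : c ≤ Real.sqrt (Q + c ^ 2) := Real.le_sqrt_of_sq_le (by linarith)
  have hs := sqrt_step (X' := Q' + c ^ 2)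
    (D := 2 * e * (h * ζ / (1 + h * α)) + e ^ 2 * (h * v)) hX (by positivity) (by linarith)
  have hy : θ * (Real.sqrt (Q' + c ^ 2) - Real.sqrt (Q + c ^ 2)) ≤ p * e + b := by
    set f := Real.sqrt (Q + c ^ 2)
    have hf0 : 0 < f := lt_of_lt_of_le hc hf
    have e1 : (2 * e * (h * ζ / (1 + h * α)) + e ^ 2 * (h * v)) / (2 * f) * θ =
       p * e + θ * h * v * e ^ 2 / (2 * f) := by
      rw [hpdef]; unfold p0; 
      change _ = θ * h * ζ / ((1 + h * α) * f) * e + _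
      field_simp
    have e2 : θ * h * v * e ^ 2 / (2 * f) ≤ b := by
      have : b = θ * h * v * e ^ 2 / (2 * c) := by rw [hb]; ring
      rw [this]
      apply div_le_div_of_nonneg_left (by positivity) (by positivity) (by linarith)
    nlinarith
  calc _ ≤ Real.exp (p * e + b) := Real.exp_le_exp.2 hy
    _ ≤ 1 + (p * e + b) + (p * e + b) ^ 2 := exp_le_quad (by linarith)
    _ ≤ _ := by
      have : q0 θ c h α * e ^ 2 = θ ^ 2 * h * v * e ^ 2 + 3 * b := by
        unfold q0; rw [hb]; ring
      rw [this]
      have h5 : p ^ 2 * e ^ 2 ≤ θ ^ 2 * h * v * e ^ 2 :=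
        mul_le_mul_of_nonneg_right hp2 (by positivity)
      nlinarith


structure Good (R : ℝ) (h α ζ Q β L e : ℕ → ℝ) : Prop where
  hR : 0 < R
  Q0 : Q 0 = 0
  Qnn : ∀ i, 0 ≤ Q i
  αnn : ∀ i, 1 ≤ i → 0 ≤ α i
  hpos : ∀ i, 1 ≤ i → 0 < h i
  cs : ∀ i, 1 ≤ i → ζ i ^ 2 ≤ α i * Q (i - 1)
  recur : ∀ i, 1 ≤ i → Q i ≤ Q (i - 1) +
    (2 * e i * (h i * ζ i / (1 + h i * α i)) + e i ^ 2 * (h i * vv (h i) (α i)))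
  βpos : ∀ i, 1 ≤ i → 0 < β i
  βmono : ∀ i k, 1 ≤ i → i ≤ k → β i ≤ β k
  Lmono : ∀ i k, 1 ≤ i → i ≤ k → L i ≤ L k
  L1 : ∀ i, 1 ≤ i → 1.386 ≤ L i
  rng : ∀ i, 1 ≤ i → R ^ 2 * h i * L i ^ 2 ≤ β i ^ 2 / 16
  vol : ∀ t, 1 ≤ t → (∑ i ∈ Finset.Icc 1 t, vv (h i) (α i)) * L t ≤ β t ^ 2 / 64

def condP (Q β : ℕ → ℝ) (j : ℕ) (s : ℝ) (i : ℕ) : Prop :=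
  j ≤ i ∧ β i ≤ 10 / 7 * (s * β j) ∧ ∀ k ∈ Finset.Ico 1 i, Q k ≤ β k ^ 2

open Classical in
noncomputable def pF (h α ζ Q β L : ℕ → ℝ) (j : ℕ) (s : ℝ) (i : ℕ) : ℝ :=
  if condP Q β j s i then
    p0 (7 / 2 * L j / (s * β j)) (s * β j / 4) (h i) (α i) (ζ i) (Q (i - 1)) else 0

open Classical in
noncomputable def qF (h α Q β L : ℕ → ℝ) (j : ℕ) (s : ℝ) (i : ℕ) : ℝ :=
  if condP Q β j s i then
    q0 (7 / 2 * L j / (s * β j)) (s * β j / 4) (h i) (α i) else 0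

section
variable {R : ℝ} {h α ζ Q β L e : ℕ → ℝ}

lemma Good.b1 (g : Good R h α ζ Q β L e) {j i : ℕ} {s : ℝ} (hj : 1 ≤ j) (hs : 0 < s)
    (hc : condP Q β j s i) :
    (7 / 2 * L j / (s * β j)) ^ 2 * R ^ 2 * h i ≤ (5 / 4) ^ 2 := by
  obtain ⟨hji, hb, -⟩ := hc
  have hi : 1 ≤ i := hj.trans hji
  have hB : 0 < s * β j := mul_pos hs (g.βpos j hj)
  set B := s * β j
  have hL := g.Lmono j i hj hji
  have hL1 := g.L1 j hj
  have hr := g.rng i hi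
  have hh := g.hpos i hi
  have hR := g.hR
  have hβ := g.βpos i hi
  have e1 : (7 / 2 * L j / B) ^ 2 * R ^ 2 * h i = 49/4 * (R ^ 2 * h i * L j ^ 2) / B ^ 2 := by ring
  rw [e1, div_le_iff₀ (by positivity)]
  have h1 : R ^ 2 * h i * L j ^ 2 ≤ R ^ 2 * h i * L i ^ 2 := by
    gcongr
  have h2 : β i ^ 2 ≤ (10 / 7 * B) ^ 2 := pow_le_pow_left₀ hβ.le hb 2
  nlinarith

lemma Good.b2 (g : Good R h α ζ Q β L e) {j i : ℕ} {s : ℝ} (hj : 1 ≤ j) (hs : 0 < s)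
    (hc : condP Q β j s i) :
    (7 / 2 * L j / (s * β j)) * R ^ 2 * h i / (2 * (s * β j / 4)) ≤ 13 / 20 := by
  obtain ⟨hji, hb, -⟩ := hc
  have hi : 1 ≤ i := hj.trans hji
  have hB : 0 < s * β j := mul_pos hs (g.βpos j hj)
  set B := s * β j
  have hL := g.Lmono j i hj hji
  have hL1 := g.L1 j hj
  have hL1' := g.L1 i hi
  have hr := g.rng i hi
  have hh := g.hpos i hi
  have hR := g.hR
  have hβ := g.βpos i hi
  have e1 : (7 / 2 * L j / B) * R ^ 2 * h i / (2 * (B / 4)) = 7 * (R ^ 2 * h i * L j) / B ^ 2 := by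
    field_simp; ring
  rw [e1, div_le_iff₀ (by positivity)]
  have h1 : R ^ 2 * h i * L j ≤ R ^ 2 * h i * L i := by
    gcongr
  have h3 : (R ^ 2 * h i * L i) * 1.386 ≤ R ^ 2 * h i * L i ^ 2 := by
    have : R ^ 2 * h i * L i ^ 2 = (R ^ 2 * h i * L i) * L i := by ring
    rw [this]
    apply mul_le_mul_of_nonneg_left hL1'
    have : 0 < L i := by linarith
    positivity
  have h2 : β i ^ 2 ≤ (10 / 7 * B) ^ 2 := pow_le_pow_left₀ hβ.le hb 2
  nlinarith [sq_nonneg B]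

lemma Good.θpos (g : Good R h α ζ Q β L e) {j : ℕ} {s : ℝ} (hj : 1 ≤ j) (hs : 0 < s) :
    0 < 7 / 2 * L j / (s * β j) := by
  have := g.L1 j hj
  have := g.βpos j hj
  have : 0 < L j := by linarith
  positivity

lemma Good.cpos (g : Good R h α ζ Q β L e) {j : ℕ} {s : ℝ} (hj : 1 ≤ j) (hs : 0 < s) :
    0 < s * β j / 4 := by
  have := g.βpos j hj
  positivity

lemma Good.p_bd (g : Good R h α ζ Q β L e) {j i : ℕ} {s : ℝ} (hj : 1 ≤ j) (hs : 0 < s)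
    (hi : 1 ≤ i) : |pF h α ζ Q β L j s i| ≤ 1 / R := by
  unfold pF
  have hR := g.hR
  split_ifs with hc
  · have := p0_abs (g.cpos hj hs) (g.hpos i hi) (g.αnn i hi) (g.Qnn _) (g.cs i hi) g.hR (g.b1 hj hs hc)
    rw [le_div_iff₀ hR]; linarith
  · simp; positivity

lemma Good.q_nn (g : Good R h α ζ Q β L e) {j i : ℕ} {s : ℝ} (hj : 1 ≤ j) (hs : 0 < s)
    (hi : 1 ≤ i) : 0 ≤ qF h α Q β L j s i := by
  unfold qF
  split_ifs with hc
  · exact q0_nonneg (g.θpos hj hs) (g.cpos hj hs) (g.hpos i hi) (g.αnn i hi)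
  · rfl

lemma Good.q_bd (g : Good R h α ζ Q β L e) {j i : ℕ} {s : ℝ} (hj : 1 ≤ j) (hs : 0 < s)
    (hi : 1 ≤ i) : qF h α Q β L j s i ≤ 4 / R ^ 2 := by
  unfold qF
  have hR := g.hR
  split_ifs with hc
  · have := q0_le (g.θpos hj hs) (g.cpos hj hs) (g.hpos i hi) (g.αnn i hi) g.hR (g.b1 hj hs hc)
      (g.b2 hj hs hc)
    rw [le_div_iff₀ (by positivity)]; linarith
  · positivity

lemma Good.step (g : Good R h α ζ Q β L e) {j i : ℕ} {s : ℝ} (hj : 1 ≤ j) (hs : 0 < s)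
    (hi : 1 ≤ i) (he : |e i| ≤ R) (hc : condP Q β j s i) :
    Real.exp (7 / 2 * L j / (s * β j) * (Real.sqrt (Q i + (s * β j / 4) ^ 2) -
      Real.sqrt (Q (i - 1) + (s * β j / 4) ^ 2))) ≤
      1 + pF h α ζ Q β L j s i * e i + qF h α Q β L j s i * e i ^ 2 := by
  unfold pF qF
  rw [if_pos hc, if_pos hc]
  exact step_exp (g.θpos hj hs) (g.cpos hj hs) (g.hpos i hi) (g.αnn i hi) (g.Qnn _) (g.Qnn _)
    (g.cs i hi) g.hR he (g.recur i hi) (g.b1 hj hs hc) (g.b2 hj hs hc)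

lemma Good.factor_nn (g : Good R h α ζ Q β L e) {j i : ℕ} {s : ℝ} (hj : 1 ≤ j) (hs : 0 < s)
    (hi : 1 ≤ i) (he : |e i| ≤ R) :
    0 ≤ 1 + pF h α ζ Q β L j s i * e i + qF h α Q β L j s i * e i ^ 2 := by
  by_cases hc : condP Q β j s i
  · exact (Real.exp_pos _).le.trans (g.step hj hs hi he hc)
  · unfold pF qF
    rw [if_neg hc, if_neg hc]; norm_num

/-- the numerical inequality at the heart of the chaining argument -/
lemma num_bound {B b V Lj Lt q : ℝ} (hb : 0 < b) (hB1 : 7 / 10 * b ≤ B) (hB2 : B ≤ b)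
    (hL : 1.386 ≤ Lj) (hLL : Lj ≤ Lt) (hV0 : 0 ≤ V) (hV : V * Lt ≤ b ^ 2 / 64)
    (hq : q ≤ b ^ 2 / 4) :
    Real.sqrt (q + (B / 4) ^ 2) + Lj / (7 / 2 * Lj / B) +
      (7 / 2 * Lj / B + 3 / (2 * (B / 4))) * V ≤ b := by
  have hB : 0 < B := by linarith
  have hLj : 0 < Lj := by linarith
  have h1 : Real.sqrt (q + (B / 4) ^ 2) ≤ 14 / 25 * b := by
    apply Real.sqrt_le_iff.2 ⟨by positivity, ?_⟩
    have : B ^ 2 ≤ b ^ 2 := pow_le_pow_left₀ hB.le hB2 2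
    nlinarith
  have h2 : Lj / (7 / 2 * Lj / B) = 2 / 7 * B := by field_simp
  have h3 : (7 / 2 * Lj / B + 3 / (2 * (B / 4))) * V = (7 / 2 * (Lj * V) + 6 * V) / B := by
    field_simp; ring
  have h4 : Lj * V ≤ b ^ 2 / 64 := by nlinarith
  have h5 : 1.386 * V ≤ b ^ 2 / 64 := by nlinarith
  have h6 : (7 / 2 * (Lj * V) + 6 * V) / B ≤ (0.1225 * b ^ 2) / B := by
    apply div_le_div_of_nonneg_right _ hB.le
    nlinarith
  have h7 : (0.1225 * b ^ 2) / B ≤ 0.44 * b - 2 / 7 * B := by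
    rw [div_le_iff₀ hB]
    nlinarith [mul_nonneg (sub_nonneg.2 hB1) (sub_nonneg.2 hB2)]
  rw [h2, h3]
  linarith

lemma Good.fail (g : Good R h α ζ Q β L e) (he : ∀ i, 1 ≤ i → |e i| ≤ R) {T : ℕ}
    (hf : ∃ t ∈ Finset.Icc 1 T, β t ^ 2 < Q t) :
    ∃ j ∈ Finset.Icc 1 T, ∃ s ∈ ({1, 7 / 5} : Finset ℝ),
      Real.exp (L j) ≤ ∏ i ∈ Finset.Icc 1 T,
        ((1 + pF h α ζ Q β L j s i * e i + qF h α Q β L j s i * e i ^ 2) *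
          Real.exp (-(qF h α Q β L j s i * (h i)⁻¹))) := by
  classical
  have hex : ∃ t, 1 ≤ t ∧ t ≤ T ∧ β t ^ 2 < Q t := by
    obtain ⟨t, ht, h⟩ := hf
    rw [Finset.mem_Icc] at ht
    exact ⟨t, ht.1, ht.2, h⟩
  set t := Nat.find hex with htdef
  obtain ⟨ht1, htT, hbad⟩ := Nat.find_spec hex
  rw [← htdef] at ht1 htT hbad
  have hbefore : ∀ k, 1 ≤ k → k < t → Q k ≤ β k ^ 2 := by
    intro k hk hkt
    have := Nat.find_min hex hkt
    push Not at this
    exact this hk (by omega)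
  have hex2 : ∃ j, 1 ≤ j ∧ β t / 2 ≤ β j := ⟨t, ht1, by linarith [g.βpos t ht1]⟩
  set j := Nat.find hex2 with hjdef
  obtain ⟨hj1, hjb⟩ := Nat.find_spec hex2
  rw [← hjdef] at hj1 hjb
  have hjt : j ≤ t := Nat.find_min' hex2 ⟨ht1, by linarith [g.βpos t ht1]⟩
  have hβt := g.βpos t ht1
  have hβj := g.βpos j hj1
  have hβjt := g.βmono j t hj1 hjt
  have hQj : Q (j - 1) ≤ β t ^ 2 / 4 := by
    rcases Nat.eq_or_lt_of_le hj1 with h1 | h1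
    · rw [← h1]; simp [g.Q0]; positivity
    · have hm := Nat.find_min hex2 (m := j - 1) (by omega)
      push Not at hm
      have := hm (by omega)
      have h2 := hbefore (j-1) (by omega) (by omega)
      have := g.βpos (j-1) (by omega)
      nlinarith
  obtain ⟨s, hs, hs1, hs2⟩ : ∃ s ∈ ({1, 7 / 5} : Finset ℝ), 7 / 10 * β t ≤ s * β j ∧
      s * β j ≤ β t := by
    by_cases h : 7 / 10 * β t ≤ β j
    · exact ⟨1, by simp, by linarith, by linarith⟩
    · exact ⟨7/5, by simp, by linarith, by linarith⟩
  have hs0 : 0 < s := by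
    simp only [Finset.mem_insert, Finset.mem_singleton] at hs
    rcases hs with rfl | rfl <;> norm_num
  refine ⟨j, Finset.mem_Icc.2 ⟨hj1, hjt.trans htT⟩, s, hs, ?_⟩
  have hcond : ∀ i, j ≤ i → i ≤ t → condP Q β j s i := by
    intro i hji hit
    refine ⟨hji, ?_, ?_⟩
    · have := g.βmono i t (hj1.trans hji) hit
      linarith
    · intro k hk
      rw [Finset.mem_Ico] at hk
      exact hbefore k hk.1 (by omega)
  have hncond : ∀ i, ¬ (j ≤ i ∧ i ≤ t) → ¬ condP Q β j s i := by
    rintro i hi ⟨h1, -, h3⟩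
    have hit : t < i := by
      by_contra hh; exact hi ⟨h1, by omega⟩
    have := h3 t (Finset.mem_Ico.2 ⟨ht1, hit⟩)
    linarith
  set θ := 7 / 2 * L j / (s * β j) with hθ
  set c := s * β j / 4 with hc
  have hθ0 : 0 < θ := g.θpos hj1 hs0
  have hc0 : 0 < c := g.cpos hj1 hs0
  have hsub : Finset.Icc j t ⊆ Finset.Icc 1 T := by
    intro i hi
    rw [Finset.mem_Icc] at *; omega
  rw [← Finset.prod_subset hsub]
  swap
  · intro i _ hi
    rw [Finset.mem_Icc] at hi
    have hn := hncond i hi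
    unfold pF qF
    rw [if_neg hn, if_neg hn]; simp
  have hlow : Real.exp (∑ i ∈ Finset.Icc j t, (θ * (Real.sqrt (Q i + c ^ 2) - Real.sqrt (Q (i-1) + c ^ 2))
      - (θ ^ 2 + 3 * θ / (2 * c)) * vv (h i) (α i))) ≤ ∏ i ∈ Finset.Icc j t,
        ((1 + pF h α ζ Q β L j s i * e i + qF h α Q β L j s i * e i ^ 2) *
          Real.exp (-(qF h α Q β L j s i * (h i)⁻¹))) := by
    rw [Real.exp_sum]
    apply Finset.prod_le_prod
    · intro i _; positivity
    · intro i hi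
      rw [Finset.mem_Icc] at hi
      have hi1 : 1 ≤ i := hj1.trans hi.1
      have hc' := hcond i hi.1 hi.2
      rw [sub_eq_add_neg, Real.exp_add]
      apply mul_le_mul (g.step hj1 hs0 hi1 (he i hi1) hc') _ (Real.exp_pos _).le
        (g.factor_nn hj1 hs0 hi1 (he i hi1))
      apply le_of_eq
      congr 2
      unfold qF
      rw [if_pos hc']
      unfold q0
      have := g.hpos i hi1
      rw [← hθ, ← hc]
      field_simp
  refine le_trans (Real.exp_le_exp.2 ?_) hlow
  rw [Finset.sum_sub_distrib, ← Finset.mul_sum, ← Finset.mul_sum]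
  have htel : ∑ i ∈ Finset.Icc j t, (Real.sqrt (Q i + c ^ 2) - Real.sqrt (Q (i-1) + c ^ 2)) =
     Real.sqrt (Q t + c ^ 2) - Real.sqrt (Q (j-1) + c ^ 2) := by
    have gen : ∀ n, j ≤ n + 1 → ∑ i ∈ Finset.Icc j n, (Real.sqrt (Q i + c ^ 2) - Real.sqrt (Q (i-1) + c ^ 2)) =
       Real.sqrt (Q n + c ^ 2) - Real.sqrt (Q (j-1) + c ^ 2) := by
      intro n
      induction n with
      | zero => 
        intro hn
        have : j = 1 := by omega
        rw [this]; simp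
      | succ n ih =>
        intro hn
        rcases Nat.lt_or_ge (n+1) j with hlt | hge
        · have : j = n + 2 := by omega
          rw [this]; simp
        · rw [Finset.sum_Icc_succ_top hge, ih hge]; simp
    exact gen t (by omega)
  rw [htel]
  set V := ∑ i ∈ Finset.Icc j t, vv (h i) (α i) with hV
  have hVnn : 0 ≤ V := Finset.sum_nonneg (fun i hi => by
    rw [Finset.mem_Icc] at hi
    exact vv_nonneg (g.hpos i (hj1.trans hi.1)) (g.αnn i (hj1.trans hi.1)))
  have hVle : V ≤ ∑ i ∈ Finset.Icc 1 t, vv (h i) (α i) := by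
    apply Finset.sum_le_sum_of_subset_of_nonneg
    · intro i hi
      rw [Finset.mem_Icc] at *; omega
    · intro i hi _
      rw [Finset.mem_Icc] at hi
      exact vv_nonneg (g.hpos i hi.1) (g.αnn i hi.1)
  have hLt := g.L1 t ht1
  have hnum := num_bound (B := s * β j) (b := β t) (V := V) (Lj := L j) (Lt := L t) (q := Q (j-1))
    hβt hs1 hs2 (g.L1 j hj1) (g.Lmono j t hj1 hjt) hVnn
    ((mul_le_mul_of_nonneg_right hVle (by linarith)).trans (g.vol t ht1)) hQj
  rw [← hθ, ← hc] at hnum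
  have hbt : β t < Real.sqrt (Q t + c ^ 2) := by
    apply Real.lt_sqrt_of_sq_lt
    nlinarith [sq_nonneg c]
  have h8 := mul_le_mul_of_nonneg_left (hnum.trans hbt.le) hθ0.le
  have e9 : θ * (Real.sqrt (Q (j - 1) + c ^ 2) + L j / θ + (θ + 3 / (2 * c)) * V) =
    θ * Real.sqrt (Q (j - 1) + c ^ 2) + L j + (θ ^ 2 + 3 * θ / (2 * c)) * V := by
    field_simp
  rw [e9] at h8
  linarith
end


lemma int_pull {Ω : Type*} {m m0 : MeasurableSpace Ω} {P : Measure Ω} [IsProbabilityMeasure P]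
    (hm : m ≤ m0) {f g : Ω → ℝ} (hf : Measurable[m] f) (hg : Integrable g P) (c : ℝ)
    (hb : ∀ᵐ ω ∂P, |f ω| ≤ c) :
    ∫ ω, f ω * g ω ∂P = ∫ ω, f ω * (P[g|m]) ω ∂P := by
  have h1 := condExp_stronglyMeasurable_mul_of_bound hm hf.stronglyMeasurable hg c hb
  have h2 : ∫ ω, (P[f * g|m]) ω ∂P = ∫ ω, (f * g) ω ∂P := integral_condExp hm
  have h3 := integral_congr_ae h1
  simp only [Pi.mul_apply] at h2 h3
  rw [← h2, h3]

section
variable {Ω : Type*} {m : MeasurableSpace Ω} (P : Measure Ω) [IsProbabilityMeasure P]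
    (G : Filtration ℕ m) (R C : ℝ) (ε p q τ : ℕ → Ω → ℝ)

noncomputable def WW (ε p q τ : ℕ → Ω → ℝ) (n : ℕ) (ω : Ω) : ℝ :=
  ∏ i ∈ Finset.Icc 1 n, ((1 + p i ω * ε i ω + q i ω * ε i ω ^ 2) *
          Real.exp (-(q i ω * τ i ω)))

theorem expo (hR : 0 < R) (hC : 0 ≤ C)
    (hε_meas : ∀ t, 1 ≤ t → Measurable[G (t + 1)] (ε t))
    (hε_bdd : ∀ t, 1 ≤ t → ∀ᵐ ω ∂P, |ε t ω| ≤ R)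
    (hε_mean : ∀ t, 1 ≤ t → P[ε t|G t] =ᵐ[P] 0)
    (hε_var : ∀ t, 1 ≤ t → ∀ᵐ ω ∂P, (P[(fun ω' => ε t ω' ^ 2)|G t]) ω ≤ τ t ω)
    (hp : ∀ t, 1 ≤ t → Measurable[G t] (p t))
    (hq : ∀ t, 1 ≤ t → Measurable[G t] (q t))
    (hτ : ∀ t, 1 ≤ t → Measurable[G t] (τ t))
    (hτ0 : ∀ t, 1 ≤ t → ∀ ω, 0 ≤ τ t ω)
    (hpb : ∀ t, 1 ≤ t → ∀ ω, |p t ω| ≤ C)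
    (hq0 : ∀ t, 1 ≤ t → ∀ ω, 0 ≤ q t ω)
    (hqb : ∀ t, 1 ≤ t → ∀ ω, q t ω ≤ C)
    (hnn : ∀ t, 1 ≤ t → ∀ᵐ ω ∂P, 0 ≤ 1 + p t ω * ε t ω + q t ω * ε t ω ^ 2) (n : ℕ) :
    Measurable[G (n+1)] (WW ε p q τ n) ∧
    (∀ᵐ ω ∂P, 0 ≤ WW ε p q τ n ω ∧ WW ε p q τ n ω ≤ (1 + C * R + C * R ^ 2) ^ n) ∧
    ∫ ω, WW ε p q τ n ω ∂P ≤ 1 := by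
  have hK : 0 ≤ 1 + C * R + C * R ^ 2 := by positivity
  induction n with
  | zero =>
    refine ⟨?_, ?_, ?_⟩
    · have : WW ε p q τ 0 = fun _ => 1 := by funext ω; simp [WW]
      rw [this]; exact measurable_const
    · simp [WW]
    · simp [WW]
  | succ n ih =>
    obtain ⟨hm, hb, hi⟩ := ih
    have h1 : 1 ≤ n + 1 := by omega
    have hGle : G (n+1) ≤ m := G.le _
    have hmono : G (n+1) ≤ G (n+1+1) := G.mono (by omega)
    have hrec : ∀ ω, WW ε p q τ (n+1) ω = WW ε p q τ n ω *
        ((1 + p (n+1) ω * ε (n+1) ω + q (n+1) ω * ε (n+1) ω ^ 2) *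
          Real.exp (-(q (n+1) ω * τ (n+1) ω))) := by
      intro ω; unfold WW; rw [Finset.prod_Icc_succ_top h1]
    have hexp : ∀ ω, Real.exp (-(q (n+1) ω * τ (n+1) ω)) ≤ 1 := fun ω => by
      apply Real.exp_le_one_iff.2
      have := mul_nonneg (hq0 _ h1 ω) (hτ0 _ h1 ω)
      linarith
    have hEm : Measurable[G (n+1)] (fun ω => Real.exp (-(q (n+1) ω * τ (n+1) ω))) :=
      Real.measurable_exp.comp ((hq _ h1).mul (hτ _ h1)).neg
    set H : Ω → ℝ := fun ω => WW ε p q τ n ω * Real.exp (-(q (n+1) ω * τ (n+1) ω)) with hH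
    have hHm : Measurable[G (n+1)] H := hm.mul hEm
    have hHb : ∀ᵐ ω ∂P, 0 ≤ H ω ∧ H ω ≤ (1 + C * R + C * R ^ 2) ^ n := by
      filter_upwards [hb] with ω hω
      refine ⟨mul_nonneg hω.1 (Real.exp_pos _).le, ?_⟩
      calc H ω ≤ (1 + C * R + C * R ^ 2) ^ n * 1 :=
            mul_le_mul hω.2 (hexp ω) (Real.exp_pos _).le (by positivity)
        _ = _ := mul_one _
    have hrec2 : ∀ ω, WW ε p q τ (n+1) ω = H ω * (1 + p (n+1) ω * ε (n+1) ω + q (n+1) ω * ε (n+1) ω ^ 2) := by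
      intro ω; rw [hrec]; simp only [hH]; ring
    have hεm : Measurable (ε (n+1)) := (hε_meas _ h1).mono (G.le _) le_rfl
    have hεi : Integrable (ε (n+1)) P :=
      Integrable.of_bound hεm.aestronglyMeasurable R (hε_bdd _ h1)
    have hε2i : Integrable (fun ω => ε (n+1) ω ^ 2) P := by
      refine Integrable.of_bound (hεm.pow_const 2).aestronglyMeasurable (R^2) ?_
      filter_upwards [hε_bdd _ h1] with ω hω
      rw [Real.norm_eq_abs, abs_pow]
      exact pow_le_pow_left₀ (abs_nonneg _) hω 2
    set K := (1 + C * R + C * R ^ 2) ^ n with hKdef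
    have hKn : 0 ≤ K := by positivity
    have hfm : Measurable[G (n+1)] (fun ω => H ω * p (n+1) ω) := hHm.mul (hp _ h1)
    have hgm : Measurable[G (n+1)] (fun ω => H ω * q (n+1) ω) := hHm.mul (hq _ h1)
    have hfb : ∀ᵐ ω ∂P, |H ω * p (n+1) ω| ≤ K * C := by
      filter_upwards [hHb] with ω hω
      rw [abs_mul, abs_of_nonneg hω.1]
      exact mul_le_mul hω.2 (hpb _ h1 ω) (abs_nonneg _) hKn
    have hgb : ∀ᵐ ω ∂P, |H ω * q (n+1) ω| ≤ K * C := by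
      filter_upwards [hHb] with ω hω
      rw [abs_mul, abs_of_nonneg hω.1, abs_of_nonneg (hq0 _ h1 ω)]
      exact mul_le_mul hω.2 (hqb _ h1 ω) (hq0 _ h1 ω) hKn
    have hHi : Integrable H P := by
      refine Integrable.of_bound (hHm.mono hGle le_rfl).aestronglyMeasurable K ?_
      filter_upwards [hHb] with ω hω
      rw [Real.norm_eq_abs, abs_of_nonneg hω.1]; exact hω.2
    have hfi : Integrable (fun ω => H ω * p (n+1) ω * ε (n+1) ω) P :=
      hεi.bdd_mul (hfm.mono hGle le_rfl).aestronglyMeasurable hfb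
    have hgi : Integrable (fun ω => H ω * q (n+1) ω * ε (n+1) ω ^ 2) P :=
      hε2i.bdd_mul (hgm.mono hGle le_rfl).aestronglyMeasurable hgb
    have hWi : Integrable (WW ε p q τ n) P := by
      refine Integrable.of_bound (hm.mono hGle le_rfl).aestronglyMeasurable K ?_
      filter_upwards [hb] with ω hω
      rw [Real.norm_eq_abs, abs_of_nonneg hω.1]; exact hω.2
    have hgi' : Integrable (fun ω => H ω * q (n+1) ω * (P[(fun ω' => ε (n+1) ω' ^ 2)|G (n+1)]) ω) P :=
      integrable_condExp.bdd_mul (hgm.mono hGle le_rfl).aestronglyMeasurable hgb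
    refine ⟨?_, ?_, ?_⟩
    · have e : WW ε p q τ (n+1) = fun ω => H ω * (1 + p (n+1) ω * ε (n+1) ω + q (n+1) ω * ε (n+1) ω ^ 2) :=
        funext hrec2
      rw [e]
      have hε' := hε_meas _ h1
      have hp' := (hp _ h1).mono hmono le_rfl
      have hq' := (hq _ h1).mono hmono le_rfl
      exact (hHm.mono hmono le_rfl).mul (((measurable_const.add (hp'.mul hε'))).add (hq'.mul (hε'.pow_const 2)))
    · filter_upwards [hHb, hnn _ h1, hε_bdd _ h1] with ω hω hn he
      rw [hrec2]
      refine ⟨mul_nonneg hω.1 hn, ?_⟩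
      rw [pow_succ]
      apply mul_le_mul hω.2 _ hn hKn
      have h3 : p (n+1) ω * ε (n+1) ω ≤ C * R := by
        refine (le_abs_self _).trans ?_
        rw [abs_mul]
        exact mul_le_mul (hpb _ h1 ω) he (abs_nonneg _) hC
      have h4 : ε (n+1) ω ^ 2 ≤ R ^ 2 := by
        rw [← sq_abs]; exact pow_le_pow_left₀ (abs_nonneg _) he 2
      have h5 : q (n+1) ω * ε (n+1) ω ^ 2 ≤ C * R ^ 2 :=
        mul_le_mul (hqb _ h1 ω) h4 (sq_nonneg _) hC
      linarith
    · have e : ∀ ω, WW ε p q τ (n+1) ω = H ω + (H ω * p (n+1) ω * ε (n+1) ω) +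
          (H ω * q (n+1) ω * ε (n+1) ω ^ 2) := fun ω => by rw [hrec2]; ring
      simp_rw [e]
      have i1 := int_pull hGle hfm hεi _ hfb
      have i2 := int_pull hGle hgm hε2i _ hgb
      have i3 : ∫ ω, H ω * p (n+1) ω * (P[ε (n+1)|G (n+1)]) ω ∂P = 0 := by
        rw [integral_congr_ae (g := fun _ => (0:ℝ))]
        · simp
        · filter_upwards [hε_mean _ h1] with ω hω
          rw [hω]; simp
      rw [integral_add (f := fun ω => H ω + H ω * p (n+1) ω * ε (n+1) ω) (hHi.add hfi) hgi,
        integral_add hHi hfi, i1, i2, i3, add_zero,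
        ← integral_add hHi hgi']
      refine le_trans (integral_mono_ae (hHi.add hgi') hWi ?_) hi
      filter_upwards [hb, hε_var _ h1] with ω hω hv
      have hx : 0 ≤ q (n+1) ω * τ (n+1) ω := mul_nonneg (hq0 _ h1 ω) (hτ0 _ h1 ω)
      have h2 : Real.exp (-(q (n+1) ω * τ (n+1) ω)) * (1 + q (n+1) ω * τ (n+1) ω) ≤ 1 := by
        rw [Real.exp_neg, inv_mul_le_iff₀ (Real.exp_pos _), mul_one, add_comm]
        exact Real.add_one_le_exp _
      have h3 : q (n+1) ω * (P[(fun ω' => ε (n+1) ω' ^ 2)|G (n+1)]) ω ≤ q (n+1) ω * τ (n+1) ω :=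
        mul_le_mul_of_nonneg_left hv (hq0 _ h1 ω)
      have h4 : 0 ≤ WW ε p q τ n ω * Real.exp (-(q (n+1) ω * τ (n+1) ω)) :=
        mul_nonneg hω.1 (Real.exp_pos _).le
      calc _ = WW ε p q τ n ω * Real.exp (-(q (n+1) ω * τ (n+1) ω)) *
            (1 + q (n+1) ω * (P[(fun ω' => ε (n+1) ω' ^ 2)|G (n+1)]) ω) := by
            simp only [hH]; ring
        _ ≤ WW ε p q τ n ω * Real.exp (-(q (n+1) ω * τ (n+1) ω)) *
            (1 + q (n+1) ω * τ (n+1) ω) := mul_le_mul_of_nonneg_left (by linarith) h4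
        _ = WW ε p q τ n ω * (Real.exp (-(q (n+1) ω * τ (n+1) ω)) *
            (1 + q (n+1) ω * τ (n+1) ω)) := by ring
        _ ≤ WW ε p q τ n ω * 1 := mul_le_mul_of_nonneg_left h2 hω.1
        _ = _ := mul_one _

theorem expo_markov (hR : 0 < R) (hC : 0 ≤ C)
    (hε_meas : ∀ t, 1 ≤ t → Measurable[G (t + 1)] (ε t))
    (hε_bdd : ∀ t, 1 ≤ t → ∀ᵐ ω ∂P, |ε t ω| ≤ R)
    (hε_mean : ∀ t, 1 ≤ t → P[ε t|G t] =ᵐ[P] 0)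
    (hε_var : ∀ t, 1 ≤ t → ∀ᵐ ω ∂P, (P[(fun ω' => ε t ω' ^ 2)|G t]) ω ≤ τ t ω)
    (hp : ∀ t, 1 ≤ t → Measurable[G t] (p t))
    (hq : ∀ t, 1 ≤ t → Measurable[G t] (q t))
    (hτ : ∀ t, 1 ≤ t → Measurable[G t] (τ t))
    (hτ0 : ∀ t, 1 ≤ t → ∀ ω, 0 ≤ τ t ω)
    (hpb : ∀ t, 1 ≤ t → ∀ ω, |p t ω| ≤ C)
    (hq0 : ∀ t, 1 ≤ t → ∀ ω, 0 ≤ q t ω)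
    (hqb : ∀ t, 1 ≤ t → ∀ ω, q t ω ≤ C)
    (hnn : ∀ t, 1 ≤ t → ∀ᵐ ω ∂P, 0 ≤ 1 + p t ω * ε t ω + q t ω * ε t ω ^ 2) (n : ℕ) (l : ℝ) :
    P {ω | Real.exp l ≤ WW ε p q τ n ω} ≤ ENNReal.ofReal (Real.exp (-l)) := by
  obtain ⟨hm, hb, hi⟩ := expo P G R C ε p q τ hR hC hε_meas hε_bdd hε_mean hε_var hp hq hτ hτ0
    hpb hq0 hqb hnn n
  have hWi : Integrable (WW ε p q τ n) P := by
    refine Integrable.of_bound (hm.mono (G.le _) le_rfl).aestronglyMeasurable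
      ((1 + C * R + C * R ^ 2) ^ n) ?_
    filter_upwards [hb] with ω hω
    rw [Real.norm_eq_abs, abs_of_nonneg hω.1]; exact hω.2
  have := mul_meas_ge_le_integral_of_nonneg (μ := P) (f := WW ε p q τ n)
    (by filter_upwards [hb] with ω hω using hω.1) hWi (Real.exp l)
  rw [← ofReal_measureReal]
  apply ENNReal.ofReal_le_ofReal
  rw [Real.exp_neg, ← one_div, le_div_iff₀ (Real.exp_pos _)]
  linarith
end


section
variable {d : ℕ}

lemma psd_cs {K : Matrix (Fin d) (Fin d) ℝ} (hK : K.PosSemidef) (x y : Fin d → ℝ) :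
    (x ⬝ᵥ (K *ᵥ y)) ^ 2 ≤ (x ⬝ᵥ (K *ᵥ x)) * (y ⬝ᵥ (K *ᵥ y)) := by
  have hsym : y ⬝ᵥ (K *ᵥ x) = x ⬝ᵥ (K *ᵥ y) := by
    have := hK.isHermitian
    rw [Matrix.IsHermitian, conjTranspose_eq_transpose_of_trivial] at this
    rw [dotProduct_mulVec, ← mulVec_transpose, this, dotProduct_comm]
  have key : ∀ r : ℝ, 0 ≤ (y ⬝ᵥ (K *ᵥ y)) * (r * r) + (2 * (x ⬝ᵥ (K *ᵥ y))) * r + x ⬝ᵥ (K *ᵥ x) := by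
    intro r
    have h := hK.dotProduct_mulVec_nonneg (x + r • y)
    simp only [star_trivial, mulVec_add, mulVec_smul, add_dotProduct, dotProduct_add, smul_dotProduct,
      dotProduct_smul, smul_eq_mul, hsym] at h
    linarith
  have := discrim_le_zero key
  rw [discrim] at this
  nlinarith

lemma psd_tri {K : Matrix (Fin d) (Fin d) ℝ} (hK : K.PosSemidef) (x y : Fin d → ℝ) :
    matNorm K (x - y) ≤ matNorm K x + matNorm K y := by
  have hsym : y ⬝ᵥ (K *ᵥ x) = x ⬝ᵥ (K *ᵥ y) := by
    have := hK.isHermitian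
    rw [Matrix.IsHermitian, conjTranspose_eq_transpose_of_trivial] at this
    rw [dotProduct_mulVec, ← mulVec_transpose, this, dotProduct_comm]
  have hx := hK.dotProduct_mulVec_nonneg x
  have hy := hK.dotProduct_mulVec_nonneg y
  simp only [star_trivial] at hx hy
  unfold matNorm
  apply Real.sqrt_le_iff.2 ⟨by positivity, ?_⟩
  have hcs := psd_cs hK x y
  have h1 : -(x ⬝ᵥ (K *ᵥ y)) ≤ Real.sqrt (x ⬝ᵥ (K *ᵥ x)) * Real.sqrt (y ⬝ᵥ (K *ᵥ y)) := by
    rw [← Real.sqrt_mul hx]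
    apply Real.le_sqrt_of_sq_le; rw [neg_sq]; exact hcs
  rw [add_sq, Real.sq_sqrt hx, Real.sq_sqrt hy]
  simp only [mulVec_sub, sub_dotProduct, dotProduct_sub, hsym]
  linarith

/-- the Sherman and Morrison formula -/
lemma sherman {M : Matrix (Fin d) (Fin d) ℝ} (hM : M.PosDef) {h : ℝ} (hh : 0 < h) (x : Fin d → ℝ) :
    (M + h • vecMulVec x x)⁻¹ = M⁻¹ - (h / (1 + h * (x ⬝ᵥ (M⁻¹ *ᵥ x)))) •
      vecMulVec (M⁻¹ *ᵥ x) (M⁻¹ *ᵥ x) := by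
  have hu : IsUnit M.det := (hM.det_pos.ne').isUnit
  have hα : 0 ≤ x ⬝ᵥ (M⁻¹ *ᵥ x) := by
    simpa using hM.inv.posSemidef.dotProduct_mulVec_nonneg x
  have hsym : M⁻¹ᵀ = M⁻¹ := by
    have := hM.inv.isHermitian
    rwa [Matrix.IsHermitian, conjTranspose_eq_transpose_of_trivial] at this
  have hvM : x ᵥ* M⁻¹ = M⁻¹ *ᵥ x := by rw [← mulVec_transpose, hsym]
  apply inv_eq_right_inv
  set α := x ⬝ᵥ (M⁻¹ *ᵥ x) with hαd
  have hne : 1 + h * α ≠ 0 := by positivity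
  rw [mul_sub, add_mul, add_mul, Matrix.mul_nonsing_inv _ hu, smul_mul, vecMulVec_mul, hvM,
    mul_smul_comm, mul_smul_comm, mul_vecMulVec, mulVec_mulVec, Matrix.mul_nonsing_inv _ hu,
    one_mulVec, smul_mul, vecMulVec_mul_vecMulVec, ← hαd]
  ext i j
  simp only [Matrix.add_apply, Matrix.sub_apply, Matrix.smul_apply, smul_eq_mul, vecMulVec_apply, Pi.smul_apply]
  field_simp
  ring

lemma det_rank_one {M : Matrix (Fin d) (Fin d) ℝ} (hM : M.PosDef) (h : ℝ) (x : Fin d → ℝ) :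
    (M + h • vecMulVec x x).det = M.det * (1 + h * (x ⬝ᵥ (M⁻¹ *ᵥ x))) := by
  have hu : IsUnit M.det := (hM.det_pos.ne').isUnit
  have := Matrix.det_add_replicateCol_mul_replicateRow (ι := Unit) hu (h • x) x
  rw [← vecMulVec_eq, smul_vecMulVec] at this
  rw [this]
  congr 1
  rw [det_unique, Matrix.add_apply, Matrix.one_apply_eq, ← replicateRow_vecMul,
    replicateRow_mul_replicateCol_apply, dotProduct_smul, smul_eq_mul, dotProduct_mulVec]

lemma det_le_trace {M : Matrix (Fin d) (Fin d) ℝ} (hd : 1 ≤ d) (hM : M.PosDef) :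
    M.det ≤ (M.trace / d) ^ d := by
  have hH := hM.isHermitian
  have hdd : (0:ℝ) < d := by exact_mod_cast hd
  have hdet := hH.det_eq_prod_eigenvalues
  have htr := hH.trace_eq_sum_eigenvalues
  simp only [RCLike.ofReal_real_eq_id, id] at hdet htr
  rw [hdet, htr]
  have hpos : ∀ i, 0 ≤ hH.eigenvalues i := fun i => (hM.eigenvalues_pos i).le
  have h := Real.geom_mean_le_arith_mean_weighted (Finset.univ) (fun _ : Fin d => (1:ℝ)/d) hH.eigenvalues
    (fun i _ => by positivity) (by simp; field_simp) (fun i _ => hpos i)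
  rw [Real.finsetProd_rpow _ _ (fun i _ => hpos i), ← Finset.mul_sum] at h
  have h0 : 0 ≤ ∏ i, hH.eigenvalues i := Finset.prod_nonneg (fun i _ => hpos i)
  calc ∏ i, hH.eigenvalues i = ((∏ i, hH.eigenvalues i) ^ ((1:ℝ)/d)) ^ d := by
        rw [← Real.rpow_natCast, ← Real.rpow_mul h0]; field_simp; simp
    _ ≤ _ := by
        apply pow_le_pow_left₀ (by positivity)
        calc _ ≤ _ := h
          _ = _ := by ring
end


noncomputable def hS (sb : ℕ → ℝ) (i : ℕ) : ℝ := ((sb i) ^ 2)⁻¹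
noncomputable def LS (δ : ℝ) (j : ℕ) : ℝ := Real.log (4 * (j : ℝ) ^ 2 / δ)

section
variable {d : ℕ}
noncomputable def dv (a : ℕ → Fin d → ℝ) (sb e : ℕ → ℝ) (t : ℕ) : Fin d → ℝ :=
  ∑ i ∈ Finset.Icc 1 t, (((sb i) ^ 2)⁻¹ * e i) • a i
noncomputable def aS (lam : ℝ) (a : ℕ → Fin d → ℝ) (sb : ℕ → ℝ) (i : ℕ) : ℝ :=
  a i ⬝ᵥ ((wGram lam a sb (i - 1))⁻¹ *ᵥ a i)
noncomputable def zS (lam : ℝ) (a : ℕ → Fin d → ℝ) (sb e : ℕ → ℝ) (i : ℕ) : ℝ :=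
  a i ⬝ᵥ ((wGram lam a sb (i - 1))⁻¹ *ᵥ dv a sb e (i - 1))
noncomputable def QS (lam : ℝ) (a : ℕ → Fin d → ℝ) (sb e : ℕ → ℝ) (t : ℕ) : ℝ :=
  dv a sb e t ⬝ᵥ ((wGram lam a sb t)⁻¹ *ᵥ dv a sb e t)

lemma wGram_succ (lam : ℝ) (a : ℕ → Fin d → ℝ) (sb : ℕ → ℝ) (t : ℕ) :
    wGram lam a sb (t + 1) = wGram lam a sb t + hS sb (t + 1) • vecMulVec (a (t + 1)) (a (t + 1)) := by
  unfold wGram hS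
  rw [Finset.sum_Icc_succ_top (by omega), add_assoc]

lemma wGram_zero (lam : ℝ) (a : ℕ → Fin d → ℝ) (sb : ℕ → ℝ) :
    wGram lam a sb 0 = lam • (1 : Matrix (Fin d) (Fin d) ℝ) := by
  simp [wGram]

lemma hS_pos {sb : ℕ → ℝ} (hsb : ∀ i, 0 < sb i) (i : ℕ) : 0 < hS sb i := by
  have := hsb i
  unfold hS; positivity

lemma wGram_posDef {lam : ℝ} (hl : 0 < lam) (a : ℕ → Fin d → ℝ) {sb : ℕ → ℝ} (hsb : ∀ i, 0 < sb i)
    (t : ℕ) : (wGram lam a sb t).PosDef := by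
  induction t with
  | zero => rw [wGram_zero]; exact Matrix.PosDef.one.smul hl
  | succ t ih =>
    rw [wGram_succ]
    apply ih.add_posSemidef
    have := posSemidef_vecMulVec_self_star (a (t+1))
    rw [star_trivial] at this
    exact this.smul (hS_pos hsb _).le

lemma aS_nonneg {lam : ℝ} (hl : 0 < lam) (a : ℕ → Fin d → ℝ) {sb : ℕ → ℝ} (hsb : ∀ i, 0 < sb i)
    (t : ℕ) : 0 ≤ aS lam a sb t := by
  have h := (wGram_posDef hl a hsb (t-1)).inv.posSemidef.dotProduct_mulVec_nonneg (a t)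
  simp only [star_trivial] at h
  exact h

lemma QS_nonneg {lam : ℝ} (hl : 0 < lam) (a : ℕ → Fin d → ℝ) {sb : ℕ → ℝ} (hsb : ∀ i, 0 < sb i)
    (e : ℕ → ℝ) (t : ℕ) : 0 ≤ QS lam a sb e t := by
  have h := (wGram_posDef hl a hsb t).inv.posSemidef.dotProduct_mulVec_nonneg (dv a sb e t)
  simp only [star_trivial] at h
  exact h

lemma QS_rec {lam : ℝ} (hl : 0 < lam) (a : ℕ → Fin d → ℝ) {sb : ℕ → ℝ} (hsb : ∀ i, 0 < sb i)
    (e : ℕ → ℝ) (i : ℕ) (hi : 1 ≤ i) :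
    QS lam a sb e i ≤ QS lam a sb e (i - 1) +
    (2 * e i * (hS sb i * zS lam a sb e i / (1 + hS sb i * aS lam a sb i)) +
      e i ^ 2 * (hS sb i * vv (hS sb i) (aS lam a sb i))) := by
  obtain ⟨t, rfl⟩ : ∃ t, i = t + 1 := ⟨i - 1, by omega⟩
  have hpd := wGram_posDef hl a hsb t
  have hh := hS_pos hsb (t+1)
  have hα := aS_nonneg hl a hsb (t+1)
  have hdv : dv a sb e (t+1) = dv a sb e t + (hS sb (t+1) * e (t+1)) • a (t+1) := by
    unfold dv hS; rw [Finset.sum_Icc_succ_top (by omega)]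
  have hsym : ∀ x y : Fin d → ℝ, y ⬝ᵥ ((wGram lam a sb t)⁻¹ *ᵥ x) = x ⬝ᵥ ((wGram lam a sb t)⁻¹ *ᵥ y) := by
    intro x y
    have := hpd.inv.isHermitian
    rw [Matrix.IsHermitian, conjTranspose_eq_transpose_of_trivial] at this
    rw [dotProduct_mulVec, ← mulVec_transpose, this, dotProduct_comm]
  unfold QS
  rw [wGram_succ, sherman hpd hh, hdv]
  unfold aS at hα
  simp only [Nat.add_sub_cancel] at hα ⊢
  unfold vv zS aS
  simp only [Nat.add_sub_cancel]
  set K := (wGram lam a sb t)⁻¹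
  set x := a (t+1)
  set D := dv a sb e t
  set h := hS sb (t+1)
  set c := e (t+1)
  simp only [sub_mulVec, smul_mulVec, vecMulVec_mulVec, mulVec_add, mulVec_smul, add_dotProduct,
    dotProduct_add, dotProduct_sub, smul_dotProduct, dotProduct_smul, smul_eq_mul, op_smul_eq_smul]
  have e1 : (K *ᵥ x) ⬝ᵥ x = x ⬝ᵥ (K *ᵥ x) := dotProduct_comm _ _
  have e2 : (K *ᵥ x) ⬝ᵥ D = x ⬝ᵥ (K *ᵥ D) := by rw [dotProduct_comm, hsym]
  rw [e1, e2, hsym x D]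
  set α := x ⬝ᵥ (K *ᵥ x)
  set z := x ⬝ᵥ (K *ᵥ D)
  set q := D ⬝ᵥ (K *ᵥ D)
  have hne : 0 < 1 + h * α := by positivity
  rw [← sub_nonneg]
  have hn : 0 ≤ h * z ^ 2 / (1 + h * α) := by positivity
  convert hn using 1
  field_simp
  ring

lemma pot {lam : ℝ} (hd : 1 ≤ d) (hl : 0 < lam) (a : ℕ → Fin d → ℝ) {sb : ℕ → ℝ} (hsb : ∀ i, 0 < sb i)
    {A mm : ℝ} (hm : 0 < mm) (t : ℕ) (hms : ∀ i, 1 ≤ i → i ≤ t → mm ≤ sb i)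
    (ha : ∀ i, 1 ≤ i → a i ⬝ᵥ a i ≤ A ^ 2) :
    ∑ i ∈ Finset.Icc 1 t, Real.log (1 + hS sb i * aS lam a sb i) ≤
      d * Real.log (1 + t * A ^ 2 / (d * lam * mm ^ 2)) := by
  have hdd : (0:ℝ) < d := by exact_mod_cast hd
  have hdet : ∀ n, ∑ i ∈ Finset.Icc 1 n, Real.log (1 + hS sb i * aS lam a sb i) =
      Real.log (wGram lam a sb n).det - d * Real.log lam := by
    intro n
    induction n with
    | zero => rw [wGram_zero]; simp
    | succ n ih =>
      rw [Finset.sum_Icc_succ_top (by omega), ih, wGram_succ, det_rank_one (wGram_posDef hl a hsb n)]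
      have h1 := (wGram_posDef hl a hsb n).det_pos
      have h2 := mul_nonneg (hS_pos hsb (n+1)).le (aS_nonneg hl a hsb (n+1))
      have e : a (n+1) ⬝ᵥ ((wGram lam a sb n)⁻¹ *ᵥ a (n+1)) = aS lam a sb (n+1) := rfl
      rw [e, Real.log_mul h1.ne' (by positivity)]
      ring
  have htr : ∀ n, n ≤ t → (wGram lam a sb n).trace ≤ d * lam + n * (A ^ 2 / mm ^ 2) := by
    intro n
    induction n with
    | zero => intro _; rw [wGram_zero]; simp [mul_comm]
    | succ n ih =>
      intro hn
      rw [wGram_succ, trace_add, trace_smul, trace_vecMulVec, smul_eq_mul]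
      have h1 := ih (by omega)
      have h2 : hS sb (n+1) * (a (n+1) ⬝ᵥ a (n+1)) ≤ A ^ 2 / mm ^ 2 := by
        unfold hS
        rw [div_eq_inv_mul]
        have := hms (n+1) (by omega) hn
        apply mul_le_mul _ (ha _ (by omega)) _ (by positivity)
        · apply inv_anti₀ (by positivity)
          exact pow_le_pow_left₀ hm.le this 2
        · exact Finset.sum_nonneg (fun i _ => mul_self_nonneg _)
      push_cast
      linarith
  rw [hdet]
  have hp := wGram_posDef hl a hsb t
  have h1 := det_le_trace hd hp
  have h2 := htr t le_rfl
  have h3 : 0 ≤ (wGram lam a sb t).trace := hp.posSemidef.trace_nonneg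
  have h4 : (wGram lam a sb t).det ≤ (lam * (1 + t * A ^ 2 / (d * lam * mm ^ 2))) ^ d := by
    refine h1.trans (pow_le_pow_left₀ (by positivity) ?_ d)
    rw [div_le_iff₀ hdd]
    refine h2.trans (le_of_eq ?_)
    field_simp
  have h5 := Real.log_le_log hp.det_pos h4
  have h6 : 0 < 1 + t * A ^ 2 / (d * lam * mm ^ 2) := by positivity
  rw [Real.log_pow, Real.log_mul hl.ne' h6.ne'] at h5
  linarith
end

lemma sbMin_one (sb : ℕ → ℝ) : sbMin sb 1 = sb 1 := by simp [sbMin]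

lemma sbMin_succ (sb : ℕ → ℝ) (t : ℕ) (ht : 1 ≤ t) :
    sbMin sb (t + 1) = min (sb (t + 1)) (sbMin sb t) := by
  unfold sbMin
  have : Set.Icc 1 (t+1) = insert (t+1) (Set.Icc 1 t) := by
    ext x; simp only [Set.mem_Icc, Set.mem_insert_iff]; omega
  rw [this, Set.image_insert_eq, csInf_insert]
  · exact ((Set.finite_Icc 1 t).image sb).bddBelow
  · exact ⟨sb 1, 1, by simp [ht], rfl⟩

lemma sbMin_le (sb : ℕ → ℝ) {i t : ℕ} (hi : 1 ≤ i) (hit : i ≤ t) : sbMin sb t ≤ sb i :=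
  csInf_le ((Set.finite_Icc 1 t).image sb).bddBelow ⟨i, ⟨hi, hit⟩, rfl⟩

lemma le_sbMin (sb : ℕ → ℝ) {t : ℕ} {c : ℝ} (ht : 1 ≤ t) (h : ∀ i, c ≤ sb i) : c ≤ sbMin sb t :=
  le_csInf ⟨sb 1, 1, by simp [ht], rfl⟩ (by rintro _ ⟨i, _, rfl⟩; exact h i)

lemma sbMin_pos {sb : ℕ → ℝ} (h : ∀ i, 0 < sb i) {t : ℕ} (ht : 1 ≤ t) : 0 < sbMin sb t := by
  induction t, ht using Nat.le_induction with
  | base => rw [sbMin_one]; exact h 1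
  | succ n hn ih => rw [sbMin_succ _ _ hn]; exact lt_min (h _) ih

lemma sbMin_anti (sb : ℕ → ℝ) {i t : ℕ} (hi : 1 ≤ i) (hit : i ≤ t) : sbMin sb t ≤ sbMin sb i := by
  induction t, hit using Nat.le_induction with
  | base => rfl
  | succ n hn ih => rw [sbMin_succ _ _ (hi.trans hn)]; exact (min_le_right _ _).trans ih

lemma LS_mono {δ : ℝ} (hδ : 0 < δ) {i k : ℕ} (hi : 1 ≤ i) (hik : i ≤ k) : LS δ i ≤ LS δ k := by
  unfold LS
  have h1 : (0:ℝ) < i := by exact_mod_cast hi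
  have h2 : (i:ℝ) ≤ k := by exact_mod_cast hik
  apply Real.log_le_log (by positivity)
  gcongr

lemma LS_ge {δ : ℝ} (hδ : 0 < δ) (hδ1 : δ < 1) {i : ℕ} (hi : 1 ≤ i) : 1.386 ≤ LS δ i := by
  unfold LS
  have h2 : (1:ℝ) ≤ i := by exact_mod_cast hi
  have h3 : (2:ℝ) ^ 2 ≤ 4 * (i:ℝ) ^ 2 / δ := by
    rw [le_div_iff₀ hδ]; nlinarith
  have := Real.log_le_log (by norm_num) h3
  rw [Real.log_pow] at this
  have := Real.log_two_gt_d9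
  push_cast at *
  linarith

lemma betaHat_eq (d : ℕ) (A R lam δ : ℝ) (sb : ℕ → ℝ) {t : ℕ} (ht : 1 ≤ t) :
    betaHat d A R lam δ sb t = 8 * Real.sqrt ((d : ℝ) *
        Real.log (1 + (t : ℝ) * A ^ 2 / ((d : ℝ) * lam * (sbMin sb t) ^ 2)) * LS δ t) +
      4 * (R / sbMin sb t) * LS δ t := by
  unfold betaHat LS
  rw [if_neg (by omega)]

lemma betaHat_le {d : ℕ} (hd : 1 ≤ d) {A R lam δ : ℝ} (hR : 0 < R) (hl : 0 < lam) (hδ : 0 < δ) (hδ1 : δ < 1)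
    {sb : ℕ → ℝ} {mm : ℝ} (hm : 0 < mm) {i t : ℕ} (hi : 1 ≤ i) (hit : i ≤ t) (hmm : mm ≤ sbMin sb i) :
    betaHat d A R lam δ sb i ≤ 8 * Real.sqrt ((d : ℝ) *
        Real.log (1 + (t : ℝ) * A ^ 2 / ((d : ℝ) * lam * mm ^ 2)) * LS δ t) +
      4 * (R / mm) * LS δ t := by
  rw [betaHat_eq _ _ _ _ _ _ hi]
  have hdd : (0:ℝ) < d := by exact_mod_cast hd
  have h2 : (i:ℝ) ≤ t := by exact_mod_cast hit
  have hL := LS_mono hδ hi hit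
  have hL0 : 0 ≤ LS δ i := by linarith [LS_ge hδ hδ1 hi]
  have hs : 0 < sbMin sb i := lt_of_lt_of_le hm hmm
  have hlog : Real.log (1 + (i : ℝ) * A ^ 2 / ((d : ℝ) * lam * (sbMin sb i) ^ 2)) ≤
      Real.log (1 + (t : ℝ) * A ^ 2 / ((d : ℝ) * lam * mm ^ 2)) := by
    apply Real.log_le_log (by positivity)
    gcongr
  have hlog0 : 0 ≤ Real.log (1 + (i : ℝ) * A ^ 2 / ((d : ℝ) * lam * (sbMin sb i) ^ 2)) := by
    apply Real.log_nonneg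
    have : 0 ≤ (i : ℝ) * A ^ 2 / ((d : ℝ) * lam * (sbMin sb i) ^ 2) := by positivity
    linarith
  have hlog0' := hlog0.trans hlog
  gcongr

section
variable {d : ℕ}
lemma good_path (hd : 1 ≤ d) {lam A R δ : ℝ} (hl : 0 < lam) (hR : 0 < R) (hδ : 0 < δ) (hδ1 : δ < 1)
    (a : ℕ → Fin d → ℝ) {sb : ℕ → ℝ} (hsb : ∀ i, 0 < sb i) (e : ℕ → ℝ)
    (ha : ∀ i, 1 ≤ i → a i ⬝ᵥ a i ≤ A ^ 2) :
    Good R (hS sb) (aS lam a sb) (zS lam a sb e) (QS lam a sb e) (betaHat d A R lam δ sb) (LS δ) e := by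
  have hdd : (0:ℝ) < d := by exact_mod_cast hd
  have hlog0 : ∀ t : ℕ, 1 ≤ t → 0 ≤ Real.log (1 + (t : ℝ) * A ^ 2 / ((d : ℝ) * lam * (sbMin sb t) ^ 2)) := by
    intro t ht
    have hs := sbMin_pos hsb ht
    apply Real.log_nonneg
    have : 0 ≤ (t : ℝ) * A ^ 2 / ((d : ℝ) * lam * (sbMin sb t) ^ 2) := by positivity
    linarith
  refine ⟨hR, ?_, QS_nonneg hl a hsb e, fun i _ => aS_nonneg hl a hsb i, fun i _ => hS_pos hsb i,
    ?_, QS_rec hl a hsb e, ?_, ?_, fun i k hi hik => LS_mono hδ hi hik, fun i hi => LS_ge hδ hδ1 hi, ?_, ?_⟩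
  · simp [QS, dv]
  · intro i _
    exact psd_cs (wGram_posDef hl a hsb (i-1)).inv.posSemidef _ _
  · intro i hi
    rw [betaHat_eq _ _ _ _ _ _ hi]
    have hs := sbMin_pos hsb hi
    have hL : 0 < LS δ i := by linarith [LS_ge hδ hδ1 hi]
    positivity
  · intro i k hi hik
    rw [betaHat_eq _ _ _ _ _ _ (hi.trans hik)]
    exact betaHat_le hd hR hl hδ hδ1 (sbMin_pos hsb (hi.trans hik)) hi hik (sbMin_anti sb hi hik)
  · intro i hi
    rw [betaHat_eq _ _ _ _ _ _ hi]
    have hs := sbMin_pos hsb hi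
    have hL : 0 < LS δ i := by linarith [LS_ge hδ hδ1 hi]
    have h1 : R ^ 2 * hS sb i ≤ (R / sbMin sb i) ^ 2 := by
      unfold hS
      rw [div_pow, div_eq_mul_inv]
      gcongr
      exact sbMin_le sb hi le_rfl
    set x := 8 * Real.sqrt ((d : ℝ) *
        Real.log (1 + (i : ℝ) * A ^ 2 / ((d : ℝ) * lam * (sbMin sb i) ^ 2)) * LS δ i)
    have hx : 0 ≤ x := by positivity
    have hM : 0 < R / sbMin sb i := by positivity
    calc R ^ 2 * hS sb i * LS δ i ^ 2 ≤ (R / sbMin sb i) ^ 2 * LS δ i ^ 2 := by gcongr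
      _ = (4 * (R / sbMin sb i) * LS δ i) ^ 2 / 16 := by ring
      _ ≤ _ := by
        gcongr
        linarith
  · intro t ht
    have hs := sbMin_pos hsb ht
    have hL : 0 < LS δ t := by linarith [LS_ge hδ hδ1 ht]
    have h1 : ∑ i ∈ Finset.Icc 1 t, vv (hS sb i) (aS lam a sb i) ≤
      d * Real.log (1 + t * A ^ 2 / (d * lam * sbMin sb t ^ 2)) := by
      refine le_trans (Finset.sum_le_sum ?_) (pot hd hl a hsb hs t (fun i hi hit => sbMin_le sb hi hit) ha)
      intro i _
      have h2 := mul_nonneg (hS_pos hsb i).le (aS_nonneg hl a hsb i)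
      have h3 := Real.one_sub_inv_le_log_of_pos (x := 1 + hS sb i * aS lam a sb i) (by positivity)
      refine le_trans (le_of_eq ?_) h3
      unfold vv; field_simp; ring
    rw [betaHat_eq _ _ _ _ _ _ ht]
    set X := (d : ℝ) * Real.log (1 + (t : ℝ) * A ^ 2 / ((d : ℝ) * lam * (sbMin sb t) ^ 2)) * LS δ t with hX
    have hX0 : 0 ≤ X := mul_nonneg (mul_nonneg hdd.le (hlog0 t ht)) hL.le
    calc _ ≤ X := by rw [hX]; gcongr
      _ = (8 * Real.sqrt X) ^ 2 / 64 := by rw [mul_pow, Real.sq_sqrt hX0]; ring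
      _ ≤ _ := by
        gcongr
        have : 0 ≤ 4 * (R / sbMin sb t) * LS δ t := by positivity
        linarith

/-- if the noise term is small then `μs` lies in the confidence set -/
lemma mem_conf {lam : ℝ} (hl : 0 < lam) (a : ℕ → Fin d → ℝ) {sb : ℕ → ℝ} (hsb : ∀ i, 0 < sb i) (e : ℕ → ℝ)
    (μs : Fin d → ℝ) {B b : ℝ} (hμ : Real.sqrt (μs ⬝ᵥ μs) ≤ B) (t : ℕ) (hb : 0 ≤ b)
    (hQ : QS lam a sb e t ≤ b ^ 2) :
    μs ∈ confSet lam B b (wGram lam a sb t) (wEst lam a sb (fun i => μs ⬝ᵥ a i + e i) t) := by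
  have hp := wGram_posDef hl a hsb t
  have hu : IsUnit (wGram lam a sb t).det := (hp.det_pos.ne').isUnit
  set Z := wGram lam a sb t with hZ
  have hsum : ∑ i ∈ Finset.Icc 1 t, (((sb i) ^ 2)⁻¹ * (μs ⬝ᵥ a i + e i)) • a i =
      Z *ᵥ μs - lam • μs + dv a sb e t := by
    rw [hZ]; unfold wGram dv
    rw [add_mulVec, smul_mulVec, one_mulVec, sum_mulVec, add_sub_cancel_left, ← Finset.sum_add_distrib]
    apply Finset.sum_congr rfl
    intro i _
    rw [smul_mulVec, vecMulVec_mulVec, mul_add, add_smul, dotProduct_comm, mul_smul, op_smul_eq_smul]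
  have hest : μs - wEst lam a sb (fun i => μs ⬝ᵥ a i + e i) t = Z⁻¹ *ᵥ (lam • μs - dv a sb e t) := by
    unfold wEst
    rw [hsum, ← hZ, mulVec_add, mulVec_sub, mulVec_sub, mulVec_mulVec, Matrix.nonsing_inv_mul _ hu,
      one_mulVec]
    abel
  have hnorm : matNorm Z (Z⁻¹ *ᵥ (lam • μs - dv a sb e t)) = matNorm Z⁻¹ (lam • μs - dv a sb e t) := by
    unfold matNorm
    rw [mulVec_mulVec, Matrix.mul_nonsing_inv _ hu, one_mulVec, dotProduct_comm]
  change matNorm Z (μs - wEst lam a sb (fun i => μs ⬝ᵥ a i + e i) t) ≤ b + Real.sqrt lam * B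
  rw [hest, hnorm]
  refine (psd_tri hp.inv.posSemidef _ _).trans ?_
  have h1 : matNorm Z⁻¹ (dv a sb e t) ≤ b := Real.sqrt_le_iff.2 ⟨hb, hQ⟩
  have h2 : matNorm Z⁻¹ (lam • μs) ≤ Real.sqrt lam * B := by
    refine le_trans ?_ (mul_le_mul_of_nonneg_left hμ (Real.sqrt_nonneg _))
    unfold matNorm
    rw [← Real.sqrt_mul hl.le]
    apply Real.sqrt_le_sqrt
    rw [mulVec_smul, dotProduct_smul, smul_dotProduct, smul_eq_mul, smul_eq_mul]
    set z := Z⁻¹ *ᵥ μs with hz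
    have hZz : Z *ᵥ z = μs := by rw [hz, mulVec_mulVec, Matrix.mul_nonsing_inv _ hu, one_mulVec]
    have h3 : lam * (z ⬝ᵥ z) ≤ μs ⬝ᵥ z := by
      have : μs ⬝ᵥ z = lam * (z ⬝ᵥ z) + ∑ i ∈ Finset.Icc 1 t, ((sb i) ^ 2)⁻¹ * (a i ⬝ᵥ z) ^ 2 := by
        conv_lhs => rw [← hZz]
        rw [hZ]; unfold wGram
        rw [add_mulVec, smul_mulVec, one_mulVec, sum_mulVec, add_dotProduct, smul_dotProduct, smul_eq_mul,
          sum_dotProduct]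
        congr 1
        apply Finset.sum_congr rfl
        intro i _
        rw [smul_mulVec, vecMulVec_mulVec, smul_dotProduct, op_smul_eq_smul, smul_dotProduct]
        simp only [smul_eq_mul]; ring
      rw [this]
      have : 0 ≤ ∑ i ∈ Finset.Icc 1 t, ((sb i) ^ 2)⁻¹ * (a i ⬝ᵥ z) ^ 2 :=
        Finset.sum_nonneg (fun i _ => by positivity)
      linarith
    have h4 : (μs ⬝ᵥ z) ^ 2 ≤ (μs ⬝ᵥ μs) * (z ⬝ᵥ z) := by
      have := psd_cs (Matrix.PosSemidef.one (R := ℝ)) μs z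
      simpa using this
    have h5 : 0 ≤ z ⬝ᵥ z := Finset.sum_nonneg (fun i _ => mul_self_nonneg _)
    have h6 : 0 ≤ μs ⬝ᵥ μs := Finset.sum_nonneg (fun i _ => mul_self_nonneg _)
    have h7 : lam * (μs ⬝ᵥ z) ≤ μs ⬝ᵥ μs := by
      by_contra hcon
      push Not at hcon
      have h8 : 0 < μs ⬝ᵥ z := by
        by_contra h9
        push Not at h9
        nlinarith
      nlinarith [mul_le_mul_of_nonneg_left h3 h6]
    exact mul_le_mul_of_nonneg_left h7 hl.le
  linarith

lemma dot_le {Z : Matrix (Fin d) (Fin d) ℝ} (hp : Z.PosDef) (x y : Fin d → ℝ) :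
    |x ⬝ᵥ y| ≤ Real.sqrt (x ⬝ᵥ (Z⁻¹ *ᵥ x)) * matNorm Z y := by
  have hu : IsUnit Z.det := (hp.det_pos.ne').isUnit
  have h := psd_cs hp.inv.posSemidef x (Z *ᵥ y)
  rw [mulVec_mulVec, Matrix.nonsing_inv_mul _ hu, one_mulVec] at h
  have h0 : 0 ≤ x ⬝ᵥ (Z⁻¹ *ᵥ x) := by simpa using hp.inv.posSemidef.dotProduct_mulVec_nonneg x
  unfold matNorm
  rw [← Real.sqrt_mul h0, dotProduct_comm y]
  exact Real.abs_le_sqrt h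
end

lemma regret_sum {T : ℕ} {w2 sb inst : ℕ → ℝ} {b S D : ℝ} (hb : 0 ≤ b)
    (hw : ∀ t, 0 ≤ w2 t) (hsb : ∀ t, 0 ≤ sb t)
    (h1 : ∀ t ∈ Finset.Icc 1 T, inst t ≤ 2)
    (h2 : ∀ t ∈ Finset.Icc 1 T, inst t ≤ 2 * b * (sb t * Real.sqrt (w2 t)))
    (hS : ∑ t ∈ Finset.Icc 1 T, Real.log (1 + w2 t) ≤ S)
    (hD : ∑ t ∈ Finset.Icc 1 T, sb t ^ 2 ≤ D) :
    ∑ t ∈ Finset.Icc 1 T, inst t ≤ 4 * S + 2 * b * Real.sqrt (2 * S) * Real.sqrt D := by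
  have hl2 := Real.log_two_gt_d9
  have hlog : ∀ t, 0 ≤ Real.log (1 + w2 t) := fun t => Real.log_nonneg (by linarith [hw t])
  have hbig : ∀ t, 1 < w2 t → 1/2 ≤ Real.log (1 + w2 t) := fun t ht => by
    have := Real.log_le_log (by norm_num) (show (2:ℝ) ≤ 1 + w2 t by linarith)
    linarith
  have hmin : ∀ t, min 1 (w2 t) ≤ 2 * Real.log (1 + w2 t) := by
    intro t
    rcases le_or_gt (w2 t) 1 with h | h
    · rw [min_eq_right h]
      have h3 := Real.one_sub_inv_le_log_of_pos (x := 1 + w2 t) (by linarith [hw t])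
      have : w2 t / 2 ≤ 1 - (1 + w2 t)⁻¹ := by
        have h4 : 0 < 1 + w2 t := by linarith [hw t]
        have : 1 - (1 + w2 t)⁻¹ = w2 t / (1 + w2 t) := by field_simp; ring
        rw [this]
        apply div_le_div_of_nonneg_left (hw t) h4 (by linarith)
      linarith
    · rw [min_eq_left h.le]; linarith [hbig t h]
  have hinst : ∀ t ∈ Finset.Icc 1 T, inst t ≤ 4 * Real.log (1 + w2 t) +
      2 * b * (sb t * Real.sqrt (min 1 (w2 t))) := by
    intro t ht
    rcases le_or_gt (w2 t) 1 with h | h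
    · rw [min_eq_right h]
      linarith [h2 t ht, hlog t]
    · have := h1 t ht
      have h3 := hbig t h
      have : 0 ≤ 2 * b * (sb t * Real.sqrt (min 1 (w2 t))) := by
        have := hsb t
        positivity
      linarith
  refine (Finset.sum_le_sum hinst).trans ?_
  rw [Finset.sum_add_distrib, ← Finset.mul_sum, ← Finset.mul_sum]
  have hcs : ∑ t ∈ Finset.Icc 1 T, sb t * Real.sqrt (min 1 (w2 t)) ≤ Real.sqrt D * Real.sqrt (2 * S) := by
    refine (Real.sum_mul_le_sqrt_mul_sqrt _ _ _).trans ?_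
    apply mul_le_mul (Real.sqrt_le_sqrt hD) _ (Real.sqrt_nonneg _) (Real.sqrt_nonneg _)
    apply Real.sqrt_le_sqrt
    calc _ = ∑ t ∈ Finset.Icc 1 T, min 1 (w2 t) := by
          apply Finset.sum_congr rfl
          intro t _
          exact Real.sq_sqrt (le_min zero_le_one (hw t))
      _ ≤ ∑ t ∈ Finset.Icc 1 T, 2 * Real.log (1 + w2 t) := Finset.sum_le_sum (fun t _ => hmin t)
      _ ≤ _ := by rw [← Finset.mul_sum]; linarith
  have := mul_le_mul_of_nonneg_left hcs (show 0 ≤ 2 * b by positivity)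
  nlinarith


section
variable {Ω : Type*} {m0 : MeasurableSpace Ω} {d : ℕ}

lemma meas_det {M : Ω → Matrix (Fin d) (Fin d) ℝ} (h : ∀ x y, Measurable (fun ω => M ω x y)) :
    Measurable (fun ω => (M ω).det) := by
  simp only [Matrix.det_apply']
  refine Finset.measurable_sum _ (fun s _ => ?_)
  exact measurable_const.mul (Finset.measurable_prod _ (fun i _ => h _ _))

lemma meas_inv {M : Ω → Matrix (Fin d) (Fin d) ℝ} (h : ∀ x y, Measurable (fun ω => M ω x y)) (x y : Fin d) :
    Measurable (fun ω => (M ω)⁻¹ x y) := by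
  simp only [Matrix.inv_def, Ring.inverse_eq_inv', Matrix.smul_apply, smul_eq_mul, Matrix.adjugate_apply]
  refine (meas_det h).inv.mul (meas_det ?_)
  intro u v
  simp only [Matrix.updateRow_apply]
  split_ifs
  · exact measurable_const
  · exact h _ _

lemma meas_dot {u v : Ω → Fin d → ℝ} (hu : Measurable u) (hv : Measurable v) :
    Measurable (fun ω => u ω ⬝ᵥ v ω) := by
  unfold dotProduct
  exact Finset.measurable_sum _ (fun i _ =>
    ((measurable_pi_apply i).comp hu).mul ((measurable_pi_apply i).comp hv))

lemma meas_mulVec {M : Ω → Matrix (Fin d) (Fin d) ℝ} (h : ∀ x y, Measurable (fun ω => M ω x y))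
    {v : Ω → Fin d → ℝ} (hv : Measurable v) : Measurable (fun ω => M ω *ᵥ v ω) := by
  rw [measurable_pi_iff]
  intro i
  unfold Matrix.mulVec dotProduct
  exact Finset.measurable_sum _ (fun j _ => (h i j).mul ((measurable_pi_apply j).comp hv))

lemma meas_hS {sb : ℕ → Ω → ℝ} {i : ℕ} (h : Measurable (sb i)) :
    Measurable (fun ω => hS (fun k => sb k ω) i) := by
  unfold hS
  exact (h.pow_const 2).inv

variable {a : ℕ → Ω → Fin d → ℝ} {sb e : ℕ → Ω → ℝ} (lam : ℝ)

lemma meas_wGram {t : ℕ} (ha : ∀ k, 1 ≤ k → k ≤ t → Measurable (a k))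
    (hs : ∀ k, 1 ≤ k → k ≤ t → Measurable (sb k)) (x y : Fin d) :
    Measurable (fun ω => wGram lam (fun k => a k ω) (fun k => sb k ω) t x y) := by
  unfold wGram
  simp only [Matrix.add_apply, Matrix.sum_apply, Matrix.smul_apply, vecMulVec_apply, smul_eq_mul]
  refine measurable_const.add (Finset.measurable_sum _ (fun k hk => ?_))
  obtain ⟨h1, h2⟩ := Finset.mem_Icc.1 hk
  have := ha k h1 h2
  exact ((hs k h1 h2).pow_const 2).inv.mul
    (((measurable_pi_apply x).comp this).mul ((measurable_pi_apply y).comp this))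

lemma meas_dv {t : ℕ} (ha : ∀ k, 1 ≤ k → k ≤ t → Measurable (a k))
    (hs : ∀ k, 1 ≤ k → k ≤ t → Measurable (sb k)) (he : ∀ k, 1 ≤ k → k ≤ t → Measurable (e k)) :
    Measurable (fun ω => dv (fun k => a k ω) (fun k => sb k ω) (fun k => e k ω) t) := by
  unfold dv
  refine Finset.measurable_sum _ (fun k hk => ?_)
  obtain ⟨h1, h2⟩ := Finset.mem_Icc.1 hk
  exact (((hs k h1 h2).pow_const 2).inv.mul (he k h1 h2)).smul (ha k h1 h2)

lemma meas_QS {t : ℕ} (ha : ∀ k, 1 ≤ k → k ≤ t → Measurable (a k))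
    (hs : ∀ k, 1 ≤ k → k ≤ t → Measurable (sb k)) (he : ∀ k, 1 ≤ k → k ≤ t → Measurable (e k)) :
    Measurable (fun ω => QS lam (fun k => a k ω) (fun k => sb k ω) (fun k => e k ω) t) := by
  unfold QS
  exact meas_dot (meas_dv ha hs he) (meas_mulVec (meas_inv (meas_wGram lam ha hs)) (meas_dv ha hs he))

lemma meas_aS {t : ℕ} (ht : 1 ≤ t) (ha : ∀ k, 1 ≤ k → k ≤ t → Measurable (a k))
    (hs : ∀ k, 1 ≤ k → k ≤ t → Measurable (sb k)) :
    Measurable (fun ω => aS lam (fun k => a k ω) (fun k => sb k ω) t) := by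
  unfold aS
  exact meas_dot (ha t ht le_rfl) (meas_mulVec (meas_inv (meas_wGram lam
    (fun k h1 h2 => ha k h1 (by omega)) (fun k h1 h2 => hs k h1 (by omega)))) (ha t ht le_rfl))

lemma meas_zS {t : ℕ} (ht : 1 ≤ t) (ha : ∀ k, 1 ≤ k → k ≤ t → Measurable (a k))
    (hs : ∀ k, 1 ≤ k → k ≤ t → Measurable (sb k)) (he : ∀ k, 1 ≤ k → k ≤ t - 1 → Measurable (e k)) :
    Measurable (fun ω => zS lam (fun k => a k ω) (fun k => sb k ω) (fun k => e k ω) t) := by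
  unfold zS
  have ha' : ∀ k, 1 ≤ k → k ≤ t - 1 → Measurable (a k) := fun k h1 h2 => ha k h1 (by omega)
  have hs' : ∀ k, 1 ≤ k → k ≤ t - 1 → Measurable (sb k) := fun k h1 h2 => hs k h1 (by omega)
  exact meas_dot (ha t ht le_rfl) (meas_mulVec (meas_inv (meas_wGram lam ha' hs')) (meas_dv ha' hs' he))

lemma meas_sbMin {t : ℕ} (ht : 1 ≤ t) (hs : ∀ k, 1 ≤ k → k ≤ t → Measurable (sb k)) :
    Measurable (fun ω => sbMin (fun k => sb k ω) t) := by
  induction t, ht using Nat.le_induction with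
  | base => simp only [sbMin_one]; exact hs 1 le_rfl le_rfl
  | succ n hn ih =>
    simp only [sbMin_succ _ _ hn]
    exact (hs _ (by omega) le_rfl).min (ih (fun k h1 h2 => hs k h1 (by omega)))

lemma meas_betaHat (A R δ : ℝ) {t : ℕ} (ht : 1 ≤ t) (hs : ∀ k, 1 ≤ k → k ≤ t → Measurable (sb k)) :
    Measurable (fun ω => betaHat d A R lam δ (fun k => sb k ω) t) := by
  simp only [betaHat_eq _ _ _ _ _ _ ht]
  have := meas_sbMin ht hs
  fun_prop

lemma meas_condP {Q β : ℕ → Ω → ℝ} {j i : ℕ} (s : ℝ)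
    (hQ : ∀ k, 1 ≤ k → k < i → Measurable (Q k)) (hβ : ∀ k, 1 ≤ k → k ≤ i → Measurable (β k)) (hj : 1 ≤ j) :
    MeasurableSet {ω | condP (fun k => Q k ω) (fun k => β k ω) j s i} := by
  by_cases hji : j ≤ i
  · have e : {ω | condP (fun k => Q k ω) (fun k => β k ω) j s i} =
        {ω | β i ω ≤ 10 / 7 * (s * β j ω)} ∩ ⋂ k ∈ Finset.Ico 1 i, {ω | Q k ω ≤ β k ω ^ 2} := by
      ext ω
      simp only [condP, hji, true_and, Set.mem_ofPred_eq, Set.mem_inter_iff, Set.mem_iInter]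
    rw [e]
    refine (measurableSet_le (hβ i (hj.trans hji) le_rfl)
      (((hβ j hj hji).const_mul s).const_mul _)).inter ?_
    refine Finset.measurableSet_biInter _ (fun k hk => ?_)
    obtain ⟨h1, h2⟩ := Finset.mem_Ico.1 hk
    exact measurableSet_le (hQ k h1 h2) ((hβ k h1 h2.le).pow_const 2)
  · have e : {ω | condP (fun k => Q k ω) (fun k => β k ω) j s i} = ∅ := by
      ext ω; simp [condP, hji]
    rw [e]; exact MeasurableSet.empty

lemma meas_pF {h α ζ Q β : ℕ → Ω → ℝ} (L : ℕ → ℝ) {j i : ℕ} (s : ℝ) (hj : 1 ≤ j)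
    (hh : Measurable (h i)) (hα : Measurable (α i)) (hζ : Measurable (ζ i)) (hQ0 : Measurable (Q (i-1)))
    (hQ : ∀ k, 1 ≤ k → k < i → Measurable (Q k)) (hβ : ∀ k, 1 ≤ k → k ≤ i → Measurable (β k)) :
    Measurable (fun ω => pF (fun k => h k ω) (fun k => α k ω) (fun k => ζ k ω) (fun k => Q k ω)
      (fun k => β k ω) L j s i) := by
  classical
  by_cases hji : j ≤ i
  · unfold pF
    refine Measurable.ite (meas_condP s hQ hβ hj) ?_ measurable_const
    have := hβ j hj hji
    unfold p0
    fun_prop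
  · have e : (fun ω => pF (fun k => h k ω) (fun k => α k ω) (fun k => ζ k ω) (fun k => Q k ω)
      (fun k => β k ω) L j s i) = fun _ => 0 := by
      funext ω
      unfold pF
      rw [if_neg (fun hc => hji hc.1)]
    rw [e]; exact measurable_const

lemma meas_qF {h α Q β : ℕ → Ω → ℝ} (L : ℕ → ℝ) {j i : ℕ} (s : ℝ) (hj : 1 ≤ j)
    (hh : Measurable (h i)) (hα : Measurable (α i))
    (hQ : ∀ k, 1 ≤ k → k < i → Measurable (Q k)) (hβ : ∀ k, 1 ≤ k → k ≤ i → Measurable (β k)) :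
    Measurable (fun ω => qF (fun k => h k ω) (fun k => α k ω) (fun k => Q k ω)
      (fun k => β k ω) L j s i) := by
  classical
  by_cases hji : j ≤ i
  · unfold qF
    refine Measurable.ite (meas_condP s hQ hβ hj) ?_ measurable_const
    have := hβ j hj hji
    unfold q0 vv
    fun_prop
  · have e : (fun ω => qF (fun k => h k ω) (fun k => α k ω) (fun k => Q k ω)
      (fun k => β k ω) L j s i) = fun _ => 0 := by
      funext ω
      unfold qF
      rw [if_neg (fun hc => hji hc.1)]
    rw [e]; exact measurable_const
end

lemma exp_neg_LS {δ : ℝ} (hδ : 0 < δ) {j : ℕ} (hj : 1 ≤ j) :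
    Real.exp (-(LS δ j)) = δ / (4 * (j:ℝ) ^ 2) := by
  have h2 : (0:ℝ) < j := by exact_mod_cast hj
  unfold LS
  rw [Real.exp_neg, Real.exp_log (by positivity), inv_div]

lemma sum_inv_sq {n : ℕ} (hn : 1 ≤ n) : ∑ j ∈ Finset.Icc 1 n, 1 / (j:ℝ) ^ 2 ≤ 2 - 1 / (n:ℝ) := by
  induction n, hn using Nat.le_induction with
  | base => norm_num
  | succ n hn ih =>
    rw [Finset.sum_Icc_succ_top (by omega)]
    have h2 : (0:ℝ) < n := by exact_mod_cast hn
    have : 1 / ((n+1:ℕ):ℝ) ^ 2 ≤ 1 / n - 1 / ((n+1:ℕ):ℝ) := by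
      push_cast
      rw [div_sub_div _ _ h2.ne' (by positivity), div_le_div_iff₀ (by positivity) (by positivity)]
      nlinarith
    linarith

section
variable {Ω : Type*} {m : MeasurableSpace Ω}

/-- confidence bound: outside an event of probability `δ`, all noise terms are small -/
theorem conf_event (P : Measure Ω) [IsProbabilityMeasure P]
    (G : Filtration ℕ m) {d : ℕ} (hd : 1 ≤ d)
    (δ lam A R : ℝ) (hl : 0 < lam) (hR : 0 < R) (hδ0 : 0 < δ) (hδ1 : δ < 1)
    (a : ℕ → Ω → Fin d → ℝ) (ε sb : ℕ → Ω → ℝ)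
    (ha : ∀ t, 1 ≤ t → ∀ ω, a t ω ⬝ᵥ a t ω ≤ A ^ 2)
    (ha_meas : ∀ t, 1 ≤ t → Measurable[G t] (a t))
    (hs_meas : ∀ t, 1 ≤ t → Measurable[G t] (sb t))
    (hs_pos : ∀ ω t, 0 < sb t ω)
    (hε_meas : ∀ t, 1 ≤ t → Measurable[G (t + 1)] (ε t))
    (hε_bdd : ∀ t, 1 ≤ t → ∀ᵐ ω ∂P, |ε t ω| ≤ R)
    (hε_mean : ∀ t, 1 ≤ t → P[ε t|G t] =ᵐ[P] 0)
    (hε_var : ∀ t, 1 ≤ t → ∀ᵐ ω ∂P, (P[(fun ω' => ε t ω' ^ 2)|G t]) ω ≤ (sb t ω) ^ 2)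
    (T : ℕ) (hT : 1 ≤ T) :
    P {ω | ∃ t ∈ Finset.Icc 1 T, betaHat d A R lam δ (fun k => sb k ω) t ^ 2 <
      QS lam (fun k => a k ω) (fun k => sb k ω) (fun k => ε k ω) t} ≤ ENNReal.ofReal δ := by
  have hgood : ∀ ω, Good R (hS fun k => sb k ω) (aS lam (fun k => a k ω) fun k => sb k ω)
      (zS lam (fun k => a k ω) (fun k => sb k ω) fun k => ε k ω)
      (QS lam (fun k => a k ω) (fun k => sb k ω) fun k => ε k ω)
      (betaHat d A R lam δ fun k => sb k ω) (LS δ) (fun k => ε k ω) := fun ω =>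
    good_path hd hl hR hδ0 hδ1 (fun k => a k ω) (hs_pos ω) (fun k => ε k ω) (fun i hi => ha i hi ω)
  set pp : ℕ → ℝ → ℕ → Ω → ℝ := fun j s i ω => pF (hS fun k => sb k ω) (aS lam (fun k => a k ω) fun k => sb k ω)
      (zS lam (fun k => a k ω) (fun k => sb k ω) fun k => ε k ω)
      (QS lam (fun k => a k ω) (fun k => sb k ω) fun k => ε k ω)
      (betaHat d A R lam δ fun k => sb k ω) (LS δ) j s i with hpp
  set qq : ℕ → ℝ → ℕ → Ω → ℝ := fun j s i ω => qF (hS fun k => sb k ω) (aS lam (fun k => a k ω) fun k => sb k ω)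
      (QS lam (fun k => a k ω) (fun k => sb k ω) fun k => ε k ω)
      (betaHat d A R lam δ fun k => sb k ω) (LS δ) j s i with hqq
  set tt : ℕ → Ω → ℝ := fun i ω => (hS (fun k => sb k ω) i)⁻¹ with htt
  have hma : ∀ t k, 1 ≤ k → k ≤ t → Measurable[G t] (a k) := fun t k h1 h2 =>
    (ha_meas k h1).mono (G.mono h2) le_rfl
  have hms : ∀ t k, 1 ≤ k → k ≤ t → Measurable[G t] (sb k) := fun t k h1 h2 =>
    (hs_meas k h1).mono (G.mono h2) le_rfl
  have hme : ∀ t k, 1 ≤ k → k < t → Measurable[G t] (ε k) := fun t k h1 h2 =>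
    (hε_meas k h1).mono (G.mono h2) le_rfl
  have hmQ : ∀ t k, k < t → Measurable[G t]
      (fun ω => QS lam (fun k => a k ω) (fun k => sb k ω) (fun k => ε k ω) k) := fun t k hk =>
    meas_QS lam (fun l h1 h2 => hma t l h1 (by omega)) (fun l h1 h2 => hms t l h1 (by omega))
      (fun l h1 h2 => hme t l h1 (by omega))
  have hmβ : ∀ t k, 1 ≤ k → k ≤ t → Measurable[G t]
      (fun ω => betaHat d A R lam δ (fun k => sb k ω) k) := fun t k h1 h2 =>
    meas_betaHat lam A R δ h1 (fun l h3 h4 => hms t l h3 (by omega))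
  have hbound : ∀ j, 1 ≤ j → ∀ s : ℝ, 0 < s →
      P {ω | Real.exp (LS δ j) ≤ WW ε (pp j s) (qq j s) tt T ω} ≤ ENNReal.ofReal (Real.exp (-(LS δ j))) := by
    intro j hj s hs
    apply expo_markov P G R (1 / R + 4 / R ^ 2) ε (pp j s) (qq j s) tt hR (by positivity) hε_meas hε_bdd hε_mean
    · intro t ht
      filter_upwards [hε_var t ht] with ω hω
      simp only [htt, hS, inv_inv]
      exact hω
    · intro t ht
      exact meas_pF (m0 := G t) (h := fun i ω => hS (fun k => sb k ω) i)
        (α := fun i ω => aS lam (fun k => a k ω) (fun k => sb k ω) i)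
        (ζ := fun i ω => zS lam (fun k => a k ω) (fun k => sb k ω) (fun k => ε k ω) i)
        (Q := fun i ω => QS lam (fun k => a k ω) (fun k => sb k ω) (fun k => ε k ω) i)
        (β := fun i ω => betaHat d A R lam δ (fun k => sb k ω) i) (LS δ) s hj
        (meas_hS (hs_meas t ht)) (meas_aS lam ht (hma t) (hms t))
        (meas_zS lam ht (hma t) (hms t) (fun k h1 h2 => hme t k h1 (by omega)))
        (hmQ t _ (by omega)) (fun k _ h2 => hmQ t k h2) (hmβ t)
    · intro t ht
      exact meas_qF (m0 := G t) (h := fun i ω => hS (fun k => sb k ω) i)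
        (α := fun i ω => aS lam (fun k => a k ω) (fun k => sb k ω) i)
        (Q := fun i ω => QS lam (fun k => a k ω) (fun k => sb k ω) (fun k => ε k ω) i)
        (β := fun i ω => betaHat d A R lam δ (fun k => sb k ω) i) (LS δ) s hj
        (meas_hS (hs_meas t ht)) (meas_aS lam ht (hma t) (hms t))
        (fun k _ h2 => hmQ t k h2) (hmβ t)
    · intro t ht
      exact (meas_hS (m0 := G t) (hs_meas t ht)).inv
    · intro t ht ω
      exact inv_nonneg.2 (hS_pos (hs_pos ω) t).le
    · intro t ht ω
      have := (hgood ω).p_bd hj hs ht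
      have h2 : 0 ≤ 4 / R ^ 2 := by positivity
      simp only [hpp]
      linarith
    · intro t ht ω
      exact (hgood ω).q_nn hj hs ht
    · intro t ht ω
      have := (hgood ω).q_bd hj hs ht
      have h2 : 0 ≤ 1 / R := by positivity
      simp only [hqq]
      linarith
    · intro t ht
      filter_upwards [hε_bdd t ht] with ω hω
      exact (hgood ω).factor_nn hj hs ht hω
  have hae : ∀ᵐ ω ∂P, ∀ i, 1 ≤ i → |ε i ω| ≤ R := by
    rw [ae_all_iff]
    intro i
    by_cases hi : 1 ≤ i
    · filter_upwards [hε_bdd i hi] with ω hω _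
      exact hω
    · filter_upwards with ω h
      exact absurd h hi
  calc _ ≤ P (⋃ j ∈ Finset.Icc 1 T, ⋃ s ∈ ({1, 7/5} : Finset ℝ),
        {ω | Real.exp (LS δ j) ≤ WW ε (pp j s) (qq j s) tt T ω}) := by
        apply measure_mono_ae
        filter_upwards [hae] with ω he hω
        obtain ⟨j, hj, s, hs, h⟩ := (hgood ω).fail he hω
        change ω ∈ (⋃ j ∈ Finset.Icc 1 T, ⋃ s ∈ ({1, 7/5} : Finset ℝ),
          {ω | Real.exp (LS δ j) ≤ WW ε (pp j s) (qq j s) tt T ω})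
        simp only [Set.mem_iUnion]
        exact ⟨j, hj, s, hs, h⟩
    _ ≤ ∑ j ∈ Finset.Icc 1 T, P (⋃ s ∈ ({1, 7/5} : Finset ℝ),
        {ω | Real.exp (LS δ j) ≤ WW ε (pp j s) (qq j s) tt T ω}) := measure_biUnion_finset_le _ _
    _ ≤ ∑ j ∈ Finset.Icc 1 T, ENNReal.ofReal (δ / 2 * (1 / (j:ℝ) ^ 2)) := by
        apply Finset.sum_le_sum
        intro j hj
        have hj1 := (Finset.mem_Icc.1 hj).1
        refine (measure_biUnion_finset_le _ _).trans ?_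
        rw [Finset.sum_pair (by norm_num)]
        refine (add_le_add (hbound j hj1 1 (by norm_num)) (hbound j hj1 (7/5) (by norm_num))).trans ?_
        rw [← ENNReal.ofReal_add (Real.exp_pos _).le (Real.exp_pos _).le, exp_neg_LS hδ0 hj1]
        apply ENNReal.ofReal_le_ofReal
        have : (0:ℝ) < j := by exact_mod_cast hj1
        apply le_of_eq
        field_simp
        ring
    _ = ENNReal.ofReal (∑ j ∈ Finset.Icc 1 T, δ / 2 * (1 / (j:ℝ) ^ 2)) := by
        rw [ENNReal.ofReal_sum_of_nonneg]
        intro j _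
        positivity
    _ ≤ ENNReal.ofReal δ := by
        apply ENNReal.ofReal_le_ofReal
        rw [← Finset.mul_sum]
        have := sum_inv_sq hT
        have h2 : (0:ℝ) ≤ 1 / T := by positivity
        nlinarith
end

/-- Variance-aware regret bound for Weighted OFUL with weights `σ̄_t = max{σ_t, R/√d}`
and regularization `λ = 1/B²`. -/
theorem statement6 {Ω : Type*} {m : MeasurableSpace Ω} (P : Measure Ω) [IsProbabilityMeasure P]
    (G : Filtration ℕ m) {d : ℕ} (hd : 1 ≤ d)
    (δ B A R : ℝ) (μs : Fin d → ℝ)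
    (hB : 0 < B) (hR : 0 < R) (hδ0 : 0 < δ) (hδ1 : δ < 1)
    (hμB : Real.sqrt (μs ⬝ᵥ μs) ≤ B)
    (D : ℕ → Ω → Set (Fin d → ℝ)) (a astar : ℕ → Ω → Fin d → ℝ) (ε σv : ℕ → Ω → ℝ)
    (hD : ∀ t, 1 ≤ t → ∀ ω, ∀ v ∈ D t ω, Real.sqrt (v ⬝ᵥ v) ≤ A ∧ |v ⬝ᵥ μs| ≤ 1)
    (ha : ∀ t, 1 ≤ t → ∀ ω, a t ω ∈ D t ω)
    (hastar : ∀ t, 1 ≤ t → ∀ ω, astar t ω ∈ D t ω)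
    (ha_meas : ∀ t, 1 ≤ t → Measurable[G t] (a t))
    (hσ_meas : ∀ t, 1 ≤ t → Measurable[G t] (σv t))
    (hσ_nonneg : ∀ t, 1 ≤ t → ∀ ω, 0 ≤ σv t ω)
    (hε_meas : ∀ t, 1 ≤ t → Measurable[G (t + 1)] (ε t))
    (hε_bdd : ∀ t, 1 ≤ t → ∀ᵐ ω ∂P, |ε t ω| ≤ R)
    (hε_mean : ∀ t, 1 ≤ t → P[ε t|G t] =ᵐ[P] 0)
    (hε_var : ∀ t, 1 ≤ t → ∀ᵐ ω ∂P, (P[(fun ω' => ε t ω' ^ 2)|G t]) ω ≤ (σv t ω) ^ 2)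
    (hopt : ∀ t, 1 ≤ t → ∀ ω,
      ∃ μt ∈ confSet (1 / B ^ 2) B
          (betaHat d A R (1 / B ^ 2) δ
            (fun i => max (σv i ω) (R / Real.sqrt d)) (t - 1))
          (wGram (1 / B ^ 2) (fun i => a i ω)
            (fun i => max (σv i ω) (R / Real.sqrt d)) (t - 1))
          (wEst (1 / B ^ 2) (fun i => a i ω)
            (fun i => max (σv i ω) (R / Real.sqrt d))
            (fun i => μs ⬝ᵥ a i ω + ε i ω) (t - 1)),
        ∀ v ∈ D t ω,
          ∀ μ ∈ confSet (1 / B ^ 2) B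
              (betaHat d A R (1 / B ^ 2) δ
                (fun i => max (σv i ω) (R / Real.sqrt d)) (t - 1))
              (wGram (1 / B ^ 2) (fun i => a i ω)
                (fun i => max (σv i ω) (R / Real.sqrt d)) (t - 1))
              (wEst (1 / B ^ 2) (fun i => a i ω)
                (fun i => max (σv i ω) (R / Real.sqrt d))
                (fun i => μs ⬝ᵥ a i ω + ε i ω) (t - 1)),
            v ⬝ᵥ μ ≤ a t ω ⬝ᵥ μt)
    (T : ℕ) (hT : 1 ≤ T) :
    ENNReal.ofReal (1 - δ) ≤
      P {ω |
        ∑ t ∈ Finset.Icc 1 T, (astar t ω ⬝ᵥ μs - a t ω ⬝ᵥ μs) ≤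
          4 * (d : ℝ) * Real.log (1 + (T : ℝ) * A ^ 2 * B ^ 2 / R ^ 2) +
            2 * (8 * Real.sqrt ((d : ℝ) * Real.log (1 + (T : ℝ) * A ^ 2 * B ^ 2 / R ^ 2) *
                    Real.log (4 * (T : ℝ) ^ 2 / δ)) +
                  4 * Real.sqrt (d : ℝ) * Real.log (4 * (T : ℝ) ^ 2 / δ) + 1) *
              Real.sqrt (2 * (d : ℝ) * Real.log (1 + (T : ℝ) * A ^ 2 * B ^ 2 / R ^ 2)) *
              Real.sqrt ((T : ℝ) * R ^ 2 / (d : ℝ) +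
                ∑ t ∈ Finset.Icc 1 T, (σv t ω) ^ 2)} := by
  have hdd : (0:ℝ) < d := by exact_mod_cast hd
  have hsd : 0 < Real.sqrt d := Real.sqrt_pos.2 hdd
  have hm : 0 < R / Real.sqrt d := by positivity
  have hl : 0 < 1 / B ^ 2 := by positivity
  have hsbpos : ∀ ω t, 0 < max (σv t ω) (R / Real.sqrt d) := fun ω t => lt_max_of_lt_right hm
  have haa : ∀ t, 1 ≤ t → ∀ ω, a t ω ⬝ᵥ a t ω ≤ A ^ 2 := by
    intro t ht ω
    have h := (hD t ht ω _ (ha t ht ω)).1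
    have h0 : 0 ≤ a t ω ⬝ᵥ a t ω := Finset.sum_nonneg (fun i _ => mul_self_nonneg _)
    rw [← Real.sq_sqrt h0]
    exact pow_le_pow_left₀ (Real.sqrt_nonneg _) h 2
  have hev := conf_event P G hd δ (1 / B ^ 2) A R hl hR hδ0 hδ1 a ε
    (fun t ω => max (σv t ω) (R / Real.sqrt d)) haa ha_meas
    (fun t ht => (hσ_meas t ht).max measurable_const) hsbpos hε_meas hε_bdd hε_mean
    (fun t ht => by
      filter_upwards [hε_var t ht] with ω hω
      exact hω.trans (pow_le_pow_left₀ (hσ_nonneg t ht ω) (le_max_left _ _) 2)) T hT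
  have hlog_eq : ∀ n : ℕ, 1 + (n : ℝ) * A ^ 2 / ((d : ℝ) * (1 / B ^ 2) * (R / Real.sqrt d) ^ 2) =
      1 + (n : ℝ) * A ^ 2 * B ^ 2 / R ^ 2 := by
    intro n
    rw [div_pow, Real.sq_sqrt hdd.le]
    field_simp
  have hRd : R / (R / Real.sqrt d) = Real.sqrt d := by field_simp
  set F := {ω | ∃ t ∈ Finset.Icc 1 T, betaHat d A R (1 / B ^ 2) δ (fun k => max (σv k ω) (R / Real.sqrt d)) t ^ 2 <
      QS (1 / B ^ 2) (fun k => a k ω) (fun k => max (σv k ω) (R / Real.sqrt d)) (fun k => ε k ω) t} with hF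
  set ι₁ := Real.log (1 + (T : ℝ) * A ^ 2 * B ^ 2 / R ^ 2) with hι₁
  set E := {ω |
        ∑ t ∈ Finset.Icc 1 T, (astar t ω ⬝ᵥ μs - a t ω ⬝ᵥ μs) ≤
          4 * (d : ℝ) * ι₁ +
            2 * (8 * Real.sqrt ((d : ℝ) * ι₁ *
                    Real.log (4 * (T : ℝ) ^ 2 / δ)) +
                  4 * Real.sqrt (d : ℝ) * Real.log (4 * (T : ℝ) ^ 2 / δ) + 1) *
              Real.sqrt (2 * (d : ℝ) * ι₁) *
              Real.sqrt ((T : ℝ) * R ^ 2 / (d : ℝ) +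
                ∑ t ∈ Finset.Icc 1 T, (σv t ω) ^ 2)} with hE
  have hcov : (Set.univ : Set Ω) ⊆ E ∪ F := by
    intro ω _
    by_cases hωF : ω ∈ F
    · exact Or.inr hωF
    left
    have hQ : ∀ t ∈ Finset.Icc 1 T,
        QS (1 / B ^ 2) (fun k => a k ω) (fun k => max (σv k ω) (R / Real.sqrt d)) (fun k => ε k ω) t ≤
        betaHat d A R (1 / B ^ 2) δ (fun k => max (σv k ω) (R / Real.sqrt d)) t ^ 2 := by
      intro t ht
      by_contra hcon
      push Not at hcon
      exact hωF ⟨t, ht, hcon⟩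
    have hgood := good_path hd hl hR hδ0 hδ1 (fun k => a k ω) (hsbpos ω) (fun k => ε k ω)
      (fun i hi => haa i hi ω)
    set sb : ℕ → ℝ := fun k => max (σv k ω) (R / Real.sqrt d) with hsb
    have hL0 : 0 < LS δ T := by linarith [LS_ge hδ0 hδ1 hT]
    have hι0 : 0 ≤ ι₁ := Real.log_nonneg (by
      have : 0 ≤ (T : ℝ) * A ^ 2 * B ^ 2 / R ^ 2 := by positivity
      linarith)
    have hβ : ∀ t ∈ Finset.Icc 1 T, betaHat d A R (1 / B ^ 2) δ sb (t - 1) ≤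
        8 * Real.sqrt ((d : ℝ) * ι₁ * LS δ T) + 4 * Real.sqrt (d : ℝ) * LS δ T := by
      intro t ht
      obtain ⟨h1, h2⟩ := Finset.mem_Icc.1 ht
      by_cases h0 : t - 1 = 0
      · rw [h0]
        simp only [betaHat, if_true]
        positivity
      · have := betaHat_le hd (A := A) hR hl hδ0 hδ1 (sb := sb) hm (i := t - 1) (t := T) (by omega) (by omega)
          (le_sbMin sb (by omega) (fun i => le_max_right _ _))
        rw [hlog_eq, hRd] at this
        exact this
    have hβ0 : ∀ t, 0 ≤ betaHat d A R (1 / B ^ 2) δ sb t := by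
      intro t
      by_cases h0 : t = 0
      · simp [betaHat, h0]
      · exact (hgood.βpos t (by omega)).le
    have hmem : ∀ t ∈ Finset.Icc 1 T, μs ∈ confSet (1 / B ^ 2) B (betaHat d A R (1 / B ^ 2) δ sb (t - 1))
        (wGram (1 / B ^ 2) (fun i => a i ω) sb (t - 1))
        (wEst (1 / B ^ 2) (fun i => a i ω) sb (fun i => μs ⬝ᵥ a i ω + ε i ω) (t - 1)) := by
      intro t ht
      obtain ⟨h1, h2⟩ := Finset.mem_Icc.1 ht
      refine mem_conf hl (fun i => a i ω) (hsbpos ω) (fun i => ε i ω) μs hμB (t - 1) (hβ0 _) ?_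
      by_cases h0 : t - 1 = 0
      · rw [h0, hgood.Q0]; positivity
      · exact hQ (t - 1) (Finset.mem_Icc.2 ⟨by omega, by omega⟩)
    have hlB : Real.sqrt (1 / B ^ 2) * B = 1 := by
      rw [Real.sqrt_div zero_le_one, Real.sqrt_one, Real.sqrt_sq hB.le]
      field_simp
    change ∑ t ∈ Finset.Icc 1 T, (astar t ω ⬝ᵥ μs - a t ω ⬝ᵥ μs) ≤ _
    have key := regret_sum (T := T) (w2 := fun t => hS sb t * aS (1 / B ^ 2) (fun k => a k ω) sb t)
      (sb := sb) (inst := fun t => astar t ω ⬝ᵥ μs - a t ω ⬝ᵥ μs)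
      (b := 8 * Real.sqrt ((d : ℝ) * ι₁ * LS δ T) + 4 * Real.sqrt (d : ℝ) * LS δ T + 1)
      (S := d * ι₁) (D := (T : ℝ) * R ^ 2 / (d : ℝ) + ∑ t ∈ Finset.Icc 1 T, (σv t ω) ^ 2)
      (by positivity)
      (fun t => mul_nonneg (hS_pos (hsbpos ω) t).le (aS_nonneg hl _ (hsbpos ω) t))
      (fun t => (hsbpos ω t).le) ?_ ?_ ?_ ?_
    · unfold LS at key
      calc _ ≤ _ := key
        _ = _ := by rw [← mul_assoc, ← mul_assoc]
    · intro t ht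
      obtain ⟨h1, h2⟩ := Finset.mem_Icc.1 ht
      have e1 := abs_le.1 (hD t h1 ω _ (ha t h1 ω)).2
      have e2 := abs_le.1 (hD t h1 ω _ (hastar t h1 ω)).2
      linarith
    · intro t ht
      obtain ⟨h1, h2⟩ := Finset.mem_Icc.1 ht
      obtain ⟨μt, hμt, hmax⟩ := hopt t h1 ω
      have e1 := hmax _ (hastar t h1 ω) μs (hmem t ht)
      have hp := wGram_posDef hl (fun i => a i ω) (hsbpos ω) (t - 1)
      have e2 := hmem t ht
      set μh := wEst (1 / B ^ 2) (fun i => a i ω) sb (fun i => μs ⬝ᵥ a i ω + ε i ω) (t - 1) with hμh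
      set Z := wGram (1 / B ^ 2) (fun i => a i ω) sb (t - 1) with hZ
      have e3 : matNorm Z (μt - μh) ≤ betaHat d A R (1 / B ^ 2) δ sb (t - 1) + 1 := by
        have := hμt.out
        rw [hlB] at this; exact this
      have e4 : matNorm Z (μs - μh) ≤ betaHat d A R (1 / B ^ 2) δ sb (t - 1) + 1 := by
        have := e2.out
        rw [hlB] at this; exact this
      have e5 := dot_le hp (a t ω) (μt - μh)
      have e6 := dot_le hp (a t ω) (μs - μh)
      have e7 : a t ω ⬝ᵥ ((Z)⁻¹ *ᵥ a t ω) = aS (1 / B ^ 2) (fun k => a k ω) sb t := rfl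
      rw [e7] at e5 e6
      have e8 : Real.sqrt (aS (1 / B ^ 2) (fun k => a k ω) sb t) =
          sb t * Real.sqrt (hS sb t * aS (1 / B ^ 2) (fun k => a k ω) sb t) := by
        have hp := hsbpos ω t
        change 0 < sb t at hp
        rw [Real.sqrt_mul (hS_pos (hsbpos ω) t).le]
        unfold hS
        rw [Real.sqrt_inv, Real.sqrt_sq hp.le, ← mul_assoc, mul_inv_cancel₀ hp.ne', one_mul]
      rw [← e8]
      have e9 := hβ t ht
      have hs0 := Real.sqrt_nonneg (aS (1 / B ^ 2) (fun k => a k ω) sb t)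
      have e10 := e5.trans (mul_le_mul_of_nonneg_left (e3.trans (add_le_add e9 le_rfl)) hs0)
      have e11 := e6.trans (mul_le_mul_of_nonneg_left (e4.trans (add_le_add e9 le_rfl)) hs0)
      have e12 := (abs_le.1 e10).2
      have e13 := (abs_le.1 e11).1
      rw [dotProduct_sub] at e12 e13
      linarith
    · have := pot hd hl (fun k => a k ω) (hsbpos ω) hm T (fun i _ _ => le_max_right _ _)
        (fun i hi => haa i hi ω)
      rw [hlog_eq] at this
      exact this
    · have : ∀ t ∈ Finset.Icc 1 T, sb t ^ 2 ≤ R ^ 2 / d + (σv t ω) ^ 2 := by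
        intro t ht
        have e1 : (R / Real.sqrt d) ^ 2 = R ^ 2 / d := by rw [div_pow, Real.sq_sqrt hdd.le]
        have e2 : 0 ≤ R ^ 2 / d := by positivity
        rcases max_choice (σv t ω) (R / Real.sqrt d) with h | h
        · simp only [hsb, h]; linarith
        · simp only [hsb, h, e1]; nlinarith [sq_nonneg (σv t ω)]
      refine (Finset.sum_le_sum this).trans (le_of_eq ?_)
      rw [Finset.sum_add_distrib, Finset.sum_const, Nat.card_Icc, nsmul_eq_mul]
      simp only [Nat.add_sub_cancel]
      ring
  have h1 : 1 ≤ P E + ENNReal.ofReal δ := by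
    calc (1 : ENNReal) = P Set.univ := measure_univ.symm
      _ ≤ P (E ∪ F) := measure_mono hcov
      _ ≤ P E + P F := measure_union_le _ _
      _ ≤ _ := by gcongr
  rw [ENNReal.ofReal_sub _ hδ0.le, ENNReal.ofReal_one]
  exact tsub_le_iff_right.2 h1
end
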